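/- arXiv:2506.09019 — 4 statements merged into one kernel-verified Lean document; each statement's English description precedes it below -/
import Mathlib

section
/- Let k be a field of characteristic 2, let m ≥ 1, set d = 2m, and let e ≥ 0. Then (2^{m+1} − 1) · dim_k ( k[x_0,…,x_d] / (x_0^{2^e},…,x_d^{2^e}, x_0x_1 + x_2x_3 + ⋯ + x_{d−2}x_{d−1} + x_d³) ) = (2^{m+1} + 1) · 2^{d·e} − 2 · 2^{e·(m−1)}. In particular the Hilbert–Kunz function of the even-dimensional A_2 singularity in characteristic 2 is HK_e(S_{2,d}) = ((2^{m+1}+1)/(2^{m+1}−1))·2^{de} − (2/(2^{m+1}−1))·2^{e(m−1)}. -/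
open MvPolynomial

/-- The Hilbert–Kunz function of the hypersurface defined by `f` in `n` variables,
in characteristic `p`, at level `e`. -/
noncomputable def HKfun (k : Type*) [Field k] (n p e : ℕ)
    (f : MvPolynomial (Fin n) k) : ℕ :=
  Module.finrank k
    (MvPolynomial (Fin n) k ⧸
      Ideal.span
        (Set.range (fun i : Fin n => (X i : MvPolynomial (Fin n) k) ^ p ^ e) ∪ {f}))

/-!
When `s ^ Q ∈ J` with `Q = 2 ^ r`, the ring `B ⧸ J` is a module over `k[T] ⧸ (T ^ Q)`, with `T`
acting as `s`. The dimension `φ n` of its quotient by `T ^ n` is the sum of `min b n` over the sizes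
`b` of the Jordan blocks of `T`, so that the alternating sum of the differences of `φ` is the number
of odd blocks. In characteristic 2, tensoring with a block of size `a` keeps the number of odd
blocks if `a` is odd and leaves no odd block if `a` is even. Since `xy` acts on
`k[x, y] ⧸ (x ^ Q, y ^ Q)` with one block of size `Q` and two of each smaller size, adding `xy` to
`s` multiplies the number of odd blocks by `Q`, and the number `2 φ 1 - φ 2` of blocks of size 1
becomes twice the old number of odd blocks.

For `z ^ 3` on `k[z] ⧸ (z ^ Q)` there are two odd blocks, hence `2 φ_Q 1 - φ_Q 2 = 4 Q ^ (m - 1)`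
for the `A₂` equation of dimension `2m`. As the Frobenius gives `φ_{2Q} 2 = 2 ^ (2m + 1) φ_Q 1`,
this is a recurrence for the Hilbert–Kunz function `φ_Q 1`.
-/

open scoped Polynomial

section Ideals

variable {A : Type*} [CommRing A]

theorem sup_span_singleton_congr {I : Ideal A} {x y : A} (h : x - y ∈ I) :
    I ⊔ Ideal.span {x} = I ⊔ Ideal.span {y} := by
  have le_of_sub_mem : ∀ {u v : A}, u - v ∈ I → I ⊔ Ideal.span {u} ≤ I ⊔ Ideal.span {v} := by
    intro u v huv
    refine sup_le le_sup_left ((Ideal.span_singleton_le_iff_mem _).2 ?_)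
    rw [← sub_add_cancel u v]
    exact add_mem (Ideal.mem_sup_left huv) (Ideal.mem_sup_right (Ideal.mem_span_singleton_self v))
  exact le_antisymm (le_of_sub_mem h) (le_of_sub_mem (neg_sub x y ▸ neg_mem h))

theorem colon_sup_span_mul (I : Ideal A) (x y : A) :
    (I ⊔ Ideal.span {x * y}).colon {x} = I.colon {x} ⊔ Ideal.span {y} := by
  ext p
  simp only [sup_comm I, sup_comm (I.colon {x}), Submodule.mem_colon_singleton,
    Ideal.mem_span_singleton_sup, smul_eq_mul]
  constructor
  · rintro ⟨c, b, hb, hcb⟩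
    exact ⟨c, p - c * y, by rwa [show (p - c * y) * x = b by linear_combination -hcb],
      add_sub_cancel ..⟩
  · rintro ⟨c, b, hb, rfl⟩
    exact ⟨c, b * x, hb, by ring⟩

theorem colon_colon_comm (I : Ideal A) (x y : A) :
    (I.colon {x}).colon {y} = (I.colon {y}).colon {x} := by
  ext p
  simp only [Submodule.mem_colon_singleton, smul_eq_mul, mul_right_comm]

theorem map_colon_equiv {C : Type*} [CommRing C] (e : A ≃+* C) (I : Ideal A) (S : Set A) :
    (I.colon S).map (e : A →+* C) = (I.map (e : A →+* C)).colon (e '' S) := by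
  ext c
  simp only [Ideal.map_comap_of_equiv, Ideal.mem_comap, Submodule.mem_colon,
    Set.forall_mem_image, smul_eq_mul, map_mul, RingEquiv.symm_apply_apply]

end Ideals

section Colength

variable (k : Type*) [Field k] {A C : Type*} [CommRing A] [Algebra k A] [CommRing C] [Algebra k C]

/-- The colength `dim_k A / I` of an ideal, as an integer because it enters alternating sums.
It is `0` when the quotient is infinite-dimensional. -/
noncomputable def colength (I : Ideal A) : ℤ := Module.finrank k (A ⧸ I)

variable {k}

theorem finite_quotient_of_le {I J : Ideal A} [Module.Finite k (A ⧸ I)] (h : I ≤ J) :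
    Module.Finite k (A ⧸ J) :=
  Module.Finite.of_surjective (Ideal.Quotient.factorₐ k h).toLinearMap
    (Ideal.Quotient.factor_surjective h)

instance finite_quotient_sup (I J : Ideal A) [Module.Finite k (A ⧸ I)] :
    Module.Finite k (A ⧸ I ⊔ J) :=
  finite_quotient_of_le (I := I) le_sup_left

instance finite_quotient_colon (I : Ideal A) (s : Set A) [Module.Finite k (A ⧸ I)] :
    Module.Finite k (A ⧸ I.colon s) :=
  finite_quotient_of_le (I := I) Ideal.le_colon

@[simp]
theorem colength_top : colength k (⊤ : Ideal A) = 0 := by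
  have := Ideal.Quotient.subsingleton_iff.2 (rfl : (⊤ : Ideal A) = ⊤)
  simp [colength, Module.finrank_zero_of_subsingleton]

theorem colength_map_equiv (e : A ≃ₐ[k] C) (I : Ideal A) :
    colength k (I.map (e : A →+* C)) = colength k I := by
  rw [colength, ← (Ideal.quotientEquivAlg I _ e rfl).toLinearEquiv.finrank_eq, colength]

theorem colength_eq_add_colength_colon (I : Ideal A) [Module.Finite k (A ⧸ I)] (x : A) :
    colength k I = colength k (I ⊔ Ideal.span {x}) + colength k (I.colon {x}) := by
  set mulX : A →ₗ[A] A ⧸ I := LinearMap.toSpanSingleton A (A ⧸ I) (Submodule.Quotient.mk x)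
  have hker : LinearMap.ker mulX = I.colon {x} := by
    ext a
    rw [Submodule.mem_colon_singleton, ← Submodule.Quotient.mk_eq_zero I]
    rfl
  have hrange : LinearMap.range mulX = Submodule.map I.mkQ (Ideal.span {x}) := by
    rw [← Ideal.submodule_span_eq, Submodule.map_span, Set.image_singleton,
      LinearMap.range_toSpanSingleton]
    rfl
  have hsub := (mulX.quotKerEquivRange.restrictScalars k).finrank_eq
  have hquot := ((Submodule.quotientQuotientEquivQuotientSup I (Ideal.span {x})).restrictScalars
    k).finrank_eq
  rw [hker] at hsub
  rw [← hrange] at hquot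
  rw [colength, colength, colength, hsub, ← hquot]
  exact_mod_cast (Submodule.finrank_quotient_add_finrank
    ((LinearMap.range mulX).restrictScalars k)).symm

theorem colength_sup_span_mul (I : Ideal A) [Module.Finite k (A ⧸ I)] (x y : A) :
    colength k (I ⊔ Ideal.span {x * y}) =
      colength k (I ⊔ Ideal.span {x}) + colength k (I.colon {x} ⊔ Ideal.span {y}) := by
  have hle : Ideal.span {x * y} ≤ Ideal.span {x} :=
    Ideal.span_singleton_le_span_singleton.2 (dvd_mul_right x y)
  rw [colength_eq_add_colength_colon (I ⊔ Ideal.span {x * y}) x, colon_sup_span_mul, sup_assoc,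
    sup_eq_right.2 hle]

theorem colength_colon_sub_colength_sup_comm (I : Ideal A) [Module.Finite k (A ⧸ I)] (x y : A) :
    colength k (I.colon {x}) - colength k (I.colon {x} ⊔ Ideal.span {y}) =
      colength k (I.colon {y}) - colength k (I.colon {y} ⊔ Ideal.span {x}) := by
  have hx := colength_eq_add_colength_colon (k := k) (I.colon {x}) y
  have hy := colength_eq_add_colength_colon (k := k) (I.colon {y}) x
  rw [colon_colon_comm] at hx
  linarith

/-- The maps `proj c` and `incl c` exhibit `C ⧸ K` as the direct sum of the quotients `A ⧸ I c`. -/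
structure SplitsQuotient {ι : Type*} [DecidableEq ι] (K : Ideal C) (I : ι → Ideal A)
    (proj : ι → C →ₗ[k] A) (incl : ι → A →ₗ[k] C) : Prop where
  proj_mem : ∀ c, ∀ x ∈ K, proj c x ∈ I c
  incl_mem : ∀ c, ∀ a ∈ I c, incl c a ∈ K
  proj_incl : ∀ c c' a, proj c' (incl c a) = if c' = c then a else 0
  sup_iSup_range : K.restrictScalars k ⊔ ⨆ c, LinearMap.range (incl c) = ⊤

namespace SplitsQuotient

variable {ι : Type*} [DecidableEq ι] {K : Ideal C} {I : ι → Ideal A}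
  {proj : ι → C →ₗ[k] A} {incl : ι → A →ₗ[k] C}

theorem sub_sum_incl_proj_mem [Fintype ι] (h : SplitsQuotient K I proj incl) (x : C) :
    x - ∑ c, incl c (proj c x) ∈ K := by
  let remainder : C →ₗ[k] C := LinearMap.id - ∑ c, incl c ∘ₗ proj c
  have hremainder (y : C) : remainder y = y - ∑ c, incl c (proj c y) := by simp [remainder]
  suffices ⊤ ≤ (K.restrictScalars k).comap remainder by
    simpa [hremainder] using this (Submodule.mem_top (x := x))
  rw [← h.sup_iSup_range, sup_le_iff, iSup_le_iff]
  refine ⟨fun y hy => ?_, fun c => ?_⟩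
  · rw [Submodule.mem_comap, hremainder]
    exact sub_mem hy (sum_mem fun c _ => h.incl_mem c _ (h.proj_mem c y hy))
  · rintro _ ⟨a, rfl⟩
    simp [hremainder, h.proj_incl, apply_ite]

theorem nonempty_quotient_equiv [Finite ι] (h : SplitsQuotient K I proj incl) :
    Nonempty ((C ⧸ K) ≃ₗ[k] Π c, A ⧸ I c) := by
  have := Fintype.ofFinite ι
  let toPi : C →ₗ[k] Π c, A ⧸ I c :=
    LinearMap.pi fun c => (Ideal.Quotient.mkₐ k (I c)).toLinearMap ∘ₗ proj c
  have htoPi (x : C) (c : ι) : toPi x c = Ideal.Quotient.mk (I c) (proj c x) := rfl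
  have hker : LinearMap.ker toPi = K.restrictScalars k := by
    ext x
    simp only [LinearMap.mem_ker, funext_iff, htoPi, Pi.zero_apply, Ideal.Quotient.eq_zero_iff_mem]
    refine ⟨fun hx => ?_, fun hx c => h.proj_mem c x hx⟩
    rw [← sub_add_cancel x (∑ c, incl c (proj c x))]
    exact add_mem (h.sub_sum_incl_proj_mem x) (sum_mem fun c _ => h.incl_mem c _ (hx c))
  have hsurj : Function.Surjective toPi := by
    intro v
    choose a ha using fun c => Ideal.Quotient.mk_surjective (v c)
    refine ⟨∑ c, incl c (a c), funext fun c => ?_⟩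
    simp [htoPi, h.proj_incl, ha]
  exact ⟨(Submodule.Quotient.restrictScalarsEquiv k K).symm ≪≫ₗ
    Submodule.quotEquivOfEq _ _ hker.symm ≪≫ₗ toPi.quotKerEquivOfSurjective hsurj⟩

theorem finite_quotient [Finite ι] [∀ c, Module.Finite k (A ⧸ I c)]
    (h : SplitsQuotient K I proj incl) : Module.Finite k (C ⧸ K) :=
  h.nonempty_quotient_equiv.elim fun e => Module.Finite.equiv e.symm

theorem colength_eq_sum [Fintype ι] [∀ c, Module.Finite k (A ⧸ I c)]
    (h : SplitsQuotient K I proj incl) : colength k K = ∑ c, colength k (I c) := by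
  obtain ⟨e⟩ := h.nonempty_quotient_equiv
  simp only [colength, e.finrank_eq, Module.finrank_pi_fintype, Nat.cast_sum]

end SplitsQuotient

end Colength

section Truncation

variable {k : Type*} [Field k] {B : Type*} [CommRing B] [Algebra k B]

/-- The ideal `(J, X ^ a)` of `B[X]`; its quotient is the truncated polynomial ring of length `a`
over `B ⧸ J`. -/
noncomputable def truncIdeal (J : Ideal B) (a : ℕ) : Ideal B[X] :=
  J.map Polynomial.C ⊔ Ideal.span {Polynomial.X ^ a}

theorem mem_truncIdeal {J : Ideal B} {a : ℕ} {p : B[X]} :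
    p ∈ truncIdeal J a ↔ ∀ i < a, p.coeff i ∈ J := by
  rw [truncIdeal, Submodule.mem_sup]
  constructor
  · rintro ⟨u, hu, v, hv, rfl⟩ i hi
    rw [Polynomial.coeff_add,
      Polynomial.X_pow_dvd_iff.1 (Ideal.mem_span_singleton.1 hv) i hi, add_zero]
    exact Ideal.mem_map_C_iff.1 hu i
  · intro hp
    set t : B[X] := ∑ i ∈ Finset.range a, Polynomial.monomial i (p.coeff i) with ht
    have htJ : t ∈ J.map Polynomial.C := sum_mem fun i hi => by
      rw [← Polynomial.C_mul_X_pow_eq_monomial]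
      exact Ideal.mul_mem_right _ _ (Ideal.mem_map_of_mem _ (hp i (Finset.mem_range.1 hi)))
    refine ⟨t, htJ, p - t, ?_, add_sub_cancel t p⟩
    rw [Ideal.mem_span_singleton, Polynomial.X_pow_dvd_iff]
    intro i hi
    simp [ht, Polynomial.coeff_monomial, hi]

theorem truncIdeal_zero (J : Ideal B) : truncIdeal J 0 = ⊤ := by
  simp [truncIdeal]

theorem X_pow_mul_mem_truncIdeal (J : Ideal B) (a : ℕ) (p : B[X]) :
    Polynomial.X ^ a * p ∈ truncIdeal J a :=
  Ideal.mem_sup_right (Ideal.mul_mem_right p _ (Ideal.mem_span_singleton_self _))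

theorem truncIdeal_sup_span_C (J : Ideal B) (a : ℕ) (s : B) :
    truncIdeal J a ⊔ Ideal.span {Polynomial.C s} = truncIdeal (J ⊔ Ideal.span {s}) a := by
  rw [truncIdeal, truncIdeal, Ideal.map_sup, Ideal.map_span, Set.image_singleton, sup_right_comm]

theorem truncIdeal_sup_span_X_pow (J : Ideal B) (a b : ℕ) :
    truncIdeal J a ⊔ Ideal.span {Polynomial.X ^ b} = truncIdeal J (min a b) := by
  have hle {m n : ℕ} (h : m ≤ n) : Ideal.span {(Polynomial.X : B[X]) ^ n} ≤
      Ideal.span {Polynomial.X ^ m} :=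
    Ideal.span_singleton_le_span_singleton.2 (pow_dvd_pow _ h)
  rw [truncIdeal, sup_assoc, truncIdeal]
  obtain h | h := le_total a b
  · rw [sup_eq_left.2 (hle h), min_eq_left h]
  · rw [sup_eq_right.2 (hle h), min_eq_right h]

theorem map_mapRingHom_truncIdeal {C : Type*} [CommRing C] (f : B →+* C) (J : Ideal B) (a : ℕ) :
    (truncIdeal J a).map (Polynomial.mapRingHom f) = truncIdeal (J.map f) a := by
  rw [truncIdeal, Ideal.map_sup, Ideal.map_map, Polynomial.mapRingHom_comp_C, Ideal.map_span,
    truncIdeal, Ideal.map_map]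
  simp

theorem truncIdeal_colon_C (J : Ideal B) (a : ℕ) (s : B) :
    (truncIdeal J a).colon {Polynomial.C s} = truncIdeal (J.colon {s}) a := by
  ext p
  simp [mem_truncIdeal, Submodule.mem_colon_singleton]

theorem truncIdeal_colon_X_pow (J : Ideal B) (a b : ℕ) :
    (truncIdeal J (a + b)).colon {Polynomial.X ^ b} = truncIdeal J a := by
  ext p
  simp only [Submodule.mem_colon_singleton, smul_eq_mul, mem_truncIdeal]
  refine ⟨fun h i hi => ?_, fun h i hi => ?_⟩
  · simpa using h (i + b) (by omega)
  · rw [Polynomial.coeff_mul_X_pow']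
    split_ifs
    exacts [h _ (by omega), J.zero_mem]

theorem splitsQuotient_truncIdeal (J : Ideal B) (a : ℕ) :
    SplitsQuotient (truncIdeal J a) (fun _ : Fin a => J)
      (fun i => (Polynomial.lcoeff B i).restrictScalars k)
      (fun i => (Polynomial.monomial (i : ℕ)).restrictScalars k) where
  proj_mem i p hp := mem_truncIdeal.1 hp i i.2
  incl_mem i b hb := mem_truncIdeal.2 fun j _ => by
    rw [LinearMap.restrictScalars_apply, Polynomial.coeff_monomial]
    split_ifs
    exacts [hb, J.zero_mem]
  proj_incl i j b := by
    simp [Polynomial.coeff_monomial, Fin.ext_iff, eq_comm]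
  sup_iSup_range := by
    refine eq_top_iff.2 fun p _ => ?_
    induction p using Polynomial.induction_on' with
    | add p q hp hq => exact add_mem (hp trivial) (hq trivial)
    | monomial n b =>
      by_cases hn : n < a
      · exact Submodule.mem_sup_right (Submodule.mem_iSup_of_mem ⟨n, hn⟩ ⟨b, rfl⟩)
      · refine Submodule.mem_sup_left (mem_truncIdeal.2 fun i hi => ?_)
        rw [Polynomial.coeff_monomial_of_ne _ (by omega)]
        exact J.zero_mem

instance finite_quotient_truncIdeal (J : Ideal B) [Module.Finite k (B ⧸ J)] (a : ℕ) :
    Module.Finite k (B[X] ⧸ truncIdeal J a) :=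
  (splitsQuotient_truncIdeal J a).finite_quotient

theorem colength_truncIdeal (J : Ideal B) [Module.Finite k (B ⧸ J)] (a : ℕ) :
    colength k (truncIdeal J a) = a * colength k J := by
  simp [(splitsQuotient_truncIdeal (k := k) J a).colength_eq_sum]

/-- The involution `X ↦ -(X + s)` of `B[X]`; it exchanges `X` and `X + s` up to sign. -/
noncomputable def reflect (s : B) : B[X] ≃ₐ[B] B[X] :=
  Polynomial.algEquivOfCompEqX (-(Polynomial.X + Polynomial.C s))
    (-(Polynomial.X + Polynomial.C s)) (by simp) (by simp)

theorem reflect_X (s : B) : reflect s Polynomial.X = -(Polynomial.X + Polynomial.C s) := by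
  simp [reflect]

theorem reflect_X_add_C (s : B) : reflect s (Polynomial.X + Polynomial.C s) = -Polynomial.X := by
  simp [reflect]

theorem map_reflect_map_C (J : Ideal B) (s : B) :
    (J.map Polynomial.C).map (reflect s : B[X] →+* B[X]) = J.map Polynomial.C := by
  rw [Ideal.map_map]
  congr 1
  ext1 b
  exact (reflect s).commutes b

theorem map_reflect_span_X_pow (s : B) (a : ℕ) :
    (Ideal.span {Polynomial.X ^ a}).map (reflect s : B[X] →+* B[X]) =
      Ideal.span {(Polynomial.X + Polynomial.C s) ^ a} := by
  rw [← Ideal.span_singleton_pow, Ideal.map_pow, Ideal.map_span, Set.image_singleton,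
    RingHom.coe_coe, reflect_X, Ideal.span_singleton_neg, Ideal.span_singleton_pow]

theorem map_reflect_span_X_add_C_pow (s : B) (a : ℕ) :
    (Ideal.span {(Polynomial.X + Polynomial.C s) ^ a}).map (reflect s : B[X] →+* B[X]) =
      Ideal.span {Polynomial.X ^ a} := by
  rw [← Ideal.span_singleton_pow, Ideal.map_pow, Ideal.map_span, Set.image_singleton,
    RingHom.coe_coe, reflect_X_add_C, Ideal.span_singleton_neg, Ideal.span_singleton_pow]

theorem map_reflect_truncIdeal (J : Ideal B) (s : B) (a : ℕ) :
    (truncIdeal J a).map (reflect s : B[X] →+* B[X]) =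
      J.map Polynomial.C ⊔ Ideal.span {(Polynomial.X + Polynomial.C s) ^ a} := by
  rw [truncIdeal, Ideal.map_sup, map_reflect_map_C, map_reflect_span_X_pow]

theorem colength_map_reflect (s : B) (I : Ideal B[X]) :
    colength k (I.map (reflect s : B[X] →+* B[X])) = colength k I :=
  colength_map_equiv ((reflect s).restrictScalars k) I

end Truncation

section PowColength

variable (k : Type*) [Field k] {A B : Type*} [CommRing A] [Algebra k A] [CommRing B] [Algebra k B]

/-- The colength of `(J, s ^ n)`: when `B ⧸ J` is regarded as a `k[T]`-module on which `T` acts as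
`s`, this is the dimension of its quotient by `T ^ n`. -/
noncomputable def powColength (J : Ideal B) (s : B) (n : ℕ) : ℤ :=
  colength k (J ⊔ Ideal.span {s ^ n})

/-- The colength of `(J, X ^ a, (X + s) ^ n)` in `B[X]`. When `T` acts as `s` on `M = B ⧸ J`, the
ring `B[X] ⧸ (J, X ^ a)` with `T` acting as `X + s` is the tensor product of the `k[T]`-modules `M`
and `k[T] ⧸ (T ^ a)`, and this is the dimension of its quotient by `T ^ n`. -/
noncomputable def tensorColength (J : Ideal B) (s : B) (a n : ℕ) : ℤ :=
  powColength k (truncIdeal J a) (Polynomial.X + Polynomial.C s) n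

variable {k}

theorem powColength_zero (J : Ideal B) (s : B) : powColength k J s 0 = 0 := by
  simp [powColength]

theorem powColength_map_equiv (e : A ≃ₐ[k] B) (J : Ideal A) (s : A) (n : ℕ) :
    powColength k (J.map (e : A →+* B)) (e s) n = powColength k J s n := by
  rw [powColength, powColength, ← colength_map_equiv e, Ideal.map_sup, Ideal.map_span]
  simp

theorem powColength_add (J : Ideal B) [Module.Finite k (B ⧸ J)] (s : B) (m n : ℕ) :
    powColength k J s (m + n) = powColength k J s m + powColength k (J.colon {s ^ m}) s n := by
  simp only [powColength, pow_add, colength_sup_span_mul]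

theorem powColength_sup_span_pow (J : Ideal B) (s : B) {m n : ℕ} (h : n ≤ m) :
    powColength k (J ⊔ Ideal.span {s ^ m}) s n = powColength k J s n := by
  rw [powColength, sup_assoc,
    sup_eq_right.2 (Ideal.span_singleton_le_span_singleton.2 (pow_dvd_pow s h)), powColength]

theorem tensorColength_zero_left (J : Ideal B) (s : B) (n : ℕ) : tensorColength k J s 0 n = 0 := by
  simp [tensorColength, powColength, truncIdeal_zero]

theorem tensorColength_zero_right (J : Ideal B) (s : B) (a : ℕ) : tensorColength k J s a 0 = 0 :=
  powColength_zero _ _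

theorem tensorColength_comm (J : Ideal B) (s : B) (a n : ℕ) :
    tensorColength k J s a n = tensorColength k J s n a := by
  rw [tensorColength, powColength, ← colength_map_reflect s, Ideal.map_sup, map_reflect_truncIdeal,
    map_reflect_span_X_add_C_pow, sup_right_comm]
  rfl

theorem tensorColength_add_of_sub_mem (J : Ideal B) [Module.Finite k (B ⧸ J)] (s : B) {a m : ℕ}
    (h : (Polynomial.X + Polynomial.C s) ^ m - Polynomial.C (s ^ m) ∈ truncIdeal J a) (n : ℕ) :
    tensorColength k J s a (m + n) =
      a * powColength k J s m + tensorColength k (J.colon {s ^ m}) s a n := by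
  have hcongr : (Polynomial.X + Polynomial.C s) ^ (m + n) -
      Polynomial.C (s ^ m) * (Polynomial.X + Polynomial.C s) ^ n ∈ truncIdeal J a := by
    rw [pow_add, ← sub_mul]
    exact Ideal.mul_mem_right _ _ h
  rw [tensorColength, powColength, sup_span_singleton_congr hcongr, colength_sup_span_mul,
    truncIdeal_sup_span_C, truncIdeal_colon_C, colength_truncIdeal]
  rfl

theorem tensorColength_one_left (J : Ideal B) [Module.Finite k (B ⧸ J)] (s : B) (n : ℕ) :
    tensorColength k J s 1 n = powColength k J s n := by
  have hmem : (Polynomial.X + Polynomial.C s) ^ n - Polynomial.C (s ^ n) ∈ truncIdeal J 1 := by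
    obtain ⟨q, hq⟩ := sub_dvd_pow_sub_pow (Polynomial.X + Polynomial.C s) (Polynomial.C s) n
    rw [map_pow, hq, add_sub_cancel_right]
    simpa using X_pow_mul_mem_truncIdeal J 1 q
  simpa [tensorColength_zero_right] using tensorColength_add_of_sub_mem (k := k) J s hmem 0

section ExpChar

variable (p : ℕ) [ExpChar B p]

theorem X_add_C_pow_sub_C_mem_truncIdeal (J : Ideal B) (s : B) {r a : ℕ} (ha : a ≤ p ^ r) (t : ℕ) :
    (Polynomial.X + Polynomial.C s) ^ (p ^ r * t) - Polynomial.C (s ^ (p ^ r * t)) ∈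
      truncIdeal J a := by
  have hdvd : Polynomial.X ^ p ^ r ∣
      (Polynomial.X + Polynomial.C s) ^ (p ^ r * t) - Polynomial.C (s ^ (p ^ r * t)) := by
    rw [pow_mul, pow_mul, add_pow_expChar_pow, map_pow, map_pow]
    have := sub_dvd_pow_sub_pow (Polynomial.X ^ p ^ r + Polynomial.C s ^ p ^ r)
      (Polynomial.C s ^ p ^ r) t
    rwa [add_sub_cancel_right] at this
  obtain ⟨q, hq⟩ := (pow_dvd_pow Polynomial.X ha).trans hdvd
  exact hq ▸ X_pow_mul_mem_truncIdeal J a q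

theorem tensorColength_mul (J : Ideal B) [Module.Finite k (B ⧸ J)] (s : B) {r a : ℕ}
    (ha : a ≤ p ^ r) (t : ℕ) :
    tensorColength k J s a (p ^ r * t) = a * powColength k J s (p ^ r * t) := by
  simpa [tensorColength_zero_right] using tensorColength_add_of_sub_mem (k := k) J s
    (X_add_C_pow_sub_C_mem_truncIdeal p J s ha t) 0

theorem tensorColength_pow_add (J : Ideal B) [Module.Finite k (B ⧸ J)] (s : B) {r a : ℕ}
    (ha : a ≤ p ^ r) (n : ℕ) :
    tensorColength k J s a (p ^ r + n) =
      a * powColength k J s (p ^ r) + tensorColength k (J.colon {s ^ p ^ r}) s a n := by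
  simpa using tensorColength_add_of_sub_mem (k := k) J s
    (by simpa only [mul_one] using X_add_C_pow_sub_C_mem_truncIdeal p J s ha 1) n

theorem tensorColength_sup_span_pow (J : Ideal B) (s : B) {r a n : ℕ} (ha : a ≤ p ^ r)
    (hn : n ≤ p ^ r) :
    tensorColength k (J ⊔ Ideal.span {s ^ p ^ r}) s a n = tensorColength k J s a n := by
  have hcongr := X_add_C_pow_sub_C_mem_truncIdeal p J s ha 1
  simp only [mul_one] at hcongr
  rw [tensorColength, ← truncIdeal_sup_span_C, ← sup_span_singleton_congr hcongr,
    powColength_sup_span_pow _ _ hn, tensorColength]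

theorem truncIdeal_pow_eq {J : Ideal B} {s : B} {r : ℕ} (hs : s ^ p ^ r ∈ J) :
    truncIdeal J (p ^ r) =
      J.map Polynomial.C ⊔ Ideal.span {(Polynomial.X + Polynomial.C s) ^ p ^ r} := by
  refine (sup_span_singleton_congr ?_).symm
  rw [add_pow_expChar_pow, add_sub_cancel_left, ← map_pow]
  exact Ideal.mem_map_of_mem _ hs

theorem truncIdeal_pow_colon {J : Ideal B} {s : B} {r : ℕ} (hs : s ^ p ^ r ∈ J) {n : ℕ}
    (hn : n ≤ p ^ r) :
    (truncIdeal J (p ^ r)).colon {(Polynomial.X + Polynomial.C s) ^ (p ^ r - n)} =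
      (truncIdeal J n).map (reflect s : B[X] →+* B[X]) := by
  have hK : truncIdeal J (p ^ r) = (truncIdeal J (p ^ r)).map (reflect s : B[X] →+* B[X]) :=
    (truncIdeal_pow_eq p hs).trans (map_reflect_truncIdeal J s _).symm
  rw [← Ideal.colon_span, ← map_reflect_span_X_pow, Ideal.map_span, Ideal.colon_span, hK]
  refine (map_colon_equiv (reflect s).toRingEquiv _ _).symm.trans ?_
  rw [← truncIdeal_colon_X_pow J n (p ^ r - n), Nat.add_sub_cancel' hn]
  rfl

theorem tensorColength_dual {J : Ideal B} [Module.Finite k (B ⧸ J)] {s : B} {r : ℕ}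
    (hs : s ^ p ^ r ∈ J) {a n : ℕ} (ha : a ≤ p ^ r) (hn : n ≤ p ^ r) :
    tensorColength k J s (p ^ r - a) (p ^ r - n) =
      (p ^ r - a - n) * colength k J + tensorColength k J s a n := by
  have hX : (truncIdeal J (p ^ r)).colon {Polynomial.X ^ a} = truncIdeal J (p ^ r - a) := by
    rw [← truncIdeal_colon_X_pow J (p ^ r - a) a, Nat.sub_add_cancel ha]
  have hsup : (truncIdeal J n).map (reflect s : B[X] →+* B[X]) ⊔ Ideal.span {Polynomial.X ^ a} =
      truncIdeal J a ⊔ Ideal.span {(Polynomial.X + Polynomial.C s) ^ n} := by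
    rw [map_reflect_truncIdeal, sup_right_comm]
    rfl
  have hcomm := colength_colon_sub_colength_sup_comm (k := k) (truncIdeal J (p ^ r))
    (Polynomial.X ^ a) ((Polynomial.X + Polynomial.C s) ^ (p ^ r - n))
  rw [truncIdeal_pow_colon p hs hn, hsup, hX, colength_map_reflect, colength_truncIdeal,
    colength_truncIdeal, Nat.cast_sub ha, Nat.cast_pow] at hcomm
  simp only [tensorColength, powColength]
  linear_combination -hcomm

end ExpChar

end PowColength

section AltDiffSum

/-- The alternating sum `∑_{i < Q} (-1) ^ i (F (i + 1) - F i)`. If `F n = ∑ⱼ min aⱼ n` with all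
`aⱼ ≤ Q`, as for the dimensions of the quotients by `T ^ n` of a `k[T]`-module with Jordan blocks of
sizes `aⱼ`, then it counts the odd `aⱼ`. -/
noncomputable def altDiffSum (Q : ℕ) : (ℕ → ℤ) →ₗ[ℤ] ℤ :=
  ∑ i ∈ Finset.range Q, (-1 : ℤ) ^ i •
    ((LinearMap.proj (i + 1) : (ℕ → ℤ) →ₗ[ℤ] ℤ) - LinearMap.proj i)

theorem altDiffSum_apply (Q : ℕ) (F : ℕ → ℤ) :
    altDiffSum Q F = ∑ i ∈ Finset.range Q, (-1) ^ i * (F (i + 1) - F i) := by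
  simp [altDiffSum]

theorem altDiffSum_congr {F G : ℕ → ℤ} {Q : ℕ} (h : ∀ i ≤ Q, F i = G i) :
    altDiffSum Q F = altDiffSum Q G := by
  simp only [altDiffSum_apply]
  refine Finset.sum_congr rfl fun i hi => ?_
  rw [h i (Finset.mem_range.1 hi).le, h (i + 1) (Finset.mem_range.1 hi)]

theorem altDiffSum_add_range (P R : ℕ) (F : ℕ → ℤ) :
    altDiffSum (P + R) F = altDiffSum P F + (-1) ^ P * altDiffSum R (fun i => F (P + i)) := by
  simp only [altDiffSum_apply, Finset.sum_range_add, Finset.mul_sum, pow_add, mul_assoc, add_assoc]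

theorem altDiffSum_const_add (Q : ℕ) (c : ℤ) (F : ℕ → ℤ) :
    altDiffSum Q (fun i => c + F i) = altDiffSum Q F := by
  simp only [altDiffSum_apply, add_sub_add_left_eq_sub]

theorem altDiffSum_linear_add {Q : ℕ} (hQ : Even Q) (b c : ℤ) (F : ℕ → ℤ) :
    altDiffSum Q (fun i => (b - i) * c + F i) = altDiffSum Q F := by
  have hdiff (i : ℕ) : (b - (i + 1 : ℕ)) * c + F (i + 1) - ((b - i) * c + F i) =
      -c + (F (i + 1) - F i) := by
    push_cast
    ring
  simp only [altDiffSum_apply, hdiff, mul_add, Finset.sum_add_distrib, ← Finset.sum_mul,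
    neg_one_geom_sum, if_pos hQ, zero_mul, zero_add]

theorem altDiffSum_reflect {Q : ℕ} (hQ : Even Q) (F : ℕ → ℤ) :
    altDiffSum Q (fun i => F (Q - i)) = altDiffSum Q F := by
  rw [altDiffSum_apply, altDiffSum_apply, ← Finset.sum_range_reflect]
  refine Finset.sum_congr rfl fun i hi => ?_
  have hiQ := Finset.mem_range.1 hi
  have hsign : (-1 : ℤ) ^ (Q - 1 - i) = -(-1) ^ i := by
    have hcongr : (-1 : ℤ) ^ (Q - 1 - i) = (-1) ^ (i + 1) := neg_one_pow_congr (by grind)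
    rw [hcongr, pow_succ, mul_neg_one]
  rw [hsign, show Q - (Q - 1 - i + 1) = i by omega, show Q - (Q - 1 - i) = i + 1 by omega]
  ring

theorem altDiffSum_min {s Q : ℕ} (h : s ≤ Q) :
    altDiffSum Q (fun n => ((min s n : ℕ) : ℤ)) = (s % 2 : ℕ) := by
  obtain ⟨t, rfl⟩ := Nat.exists_eq_add_of_le h
  rw [altDiffSum_add_range, altDiffSum_congr (G := fun n => (n : ℤ)) (by simp +contextual),
    show (fun i => ((min s (s + i) : ℕ) : ℤ)) = fun _ => (s : ℤ) by simp]
  simp only [altDiffSum_apply, Nat.cast_add, Nat.cast_one, add_sub_cancel_left, mul_one, sub_self,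
    mul_zero, Finset.sum_const_zero, add_zero, neg_one_geom_sum]
  split_ifs with hs <;> grind

end AltDiffSum

section CharTwo

variable {k : Type*} [Field k] {B : Type*} [CommRing B] [Algebra k B] [CharP B 2]

theorem altDiffSum_tensorColength_add (J : Ideal B) [Module.Finite k (B ⧸ J)] (s : B) {r a : ℕ}
    (ha : a ≤ 2 ^ r) :
    altDiffSum (2 ^ r + 2 ^ r) (tensorColength k J s a) =
      altDiffSum (2 ^ r) (tensorColength k (J ⊔ Ideal.span {s ^ 2 ^ r}) s a) +
        (-1) ^ 2 ^ r * altDiffSum (2 ^ r) (tensorColength k (J.colon {s ^ 2 ^ r}) s a) := by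
  rw [altDiffSum_add_range]
  simp only [tensorColength_pow_add 2 J s ha, altDiffSum_const_add]
  rw [altDiffSum_congr fun n hn => (tensorColength_sup_span_pow 2 J s ha hn).symm]

theorem altDiffSum_tensorColength_dual {J : Ideal B} [Module.Finite k (B ⧸ J)] {s : B} {r a : ℕ}
    (hr : r ≠ 0) (hs : s ^ 2 ^ r ∈ J) (ha : a ≤ 2 ^ r) :
    altDiffSum (2 ^ r) (tensorColength k J s (2 ^ r - a)) =
      altDiffSum (2 ^ r) (tensorColength k J s a) := by
  have heven : Even (2 ^ r) := even_two.pow_of_ne_zero hr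
  rw [← altDiffSum_reflect heven]
  rw [altDiffSum_congr fun n hn => tensorColength_dual 2 hs ha hn]
  exact altDiffSum_linear_add heven _ _ _

/-- Tensoring with a Jordan block of size `a` multiplies the number of odd blocks by `a % 2`. -/
theorem altDiffSum_tensorColength {J : Ideal B} [Module.Finite k (B ⧸ J)] {s : B} {r a : ℕ}
    (hs : s ^ 2 ^ r ∈ J) (ha : a ≤ 2 ^ r) :
    altDiffSum (2 ^ r) (tensorColength k J s a) =
      if Odd a then altDiffSum (2 ^ r) (powColength k J s) else 0 := by
  induction r generalizing J a with
  | zero =>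
    obtain rfl | rfl : a = 0 ∨ a = 1 := by grind
    · simp [altDiffSum_apply, tensorColength_zero_left]
    · simp [altDiffSum_apply, tensorColength_one_left]
  | succ r ih =>
    wlog hle : a ≤ 2 ^ r generalizing a
    · rw [← altDiffSum_tensorColength_dual r.succ_ne_zero hs ha, this (Nat.sub_le ..) (by grind)]
      simp only [Nat.odd_sub ha]
      grind
    have hsup : s ^ 2 ^ r ∈ J ⊔ Ideal.span {s ^ 2 ^ r} :=
      Ideal.mem_sup_right (Ideal.mem_span_singleton_self _)
    have hcolon : s ^ 2 ^ r ∈ J.colon {s ^ 2 ^ r} := by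
      rwa [Submodule.mem_colon_singleton, smul_eq_mul, ← pow_add, ← two_mul, ← pow_succ']
    have hone : powColength k J s = tensorColength k J s 1 :=
      funext fun n => (tensorColength_one_left J s n).symm
    rw [hone, pow_succ, mul_two, altDiffSum_tensorColength_add J s hle,
      altDiffSum_tensorColength_add J s Nat.one_le_two_pow]
    simp only [ih hsup, ih hcolon, hle, Nat.one_le_two_pow, odd_one, if_true]
    split_ifs <;> simp

theorem altDiffSum_sum_tensorColength {J : Ideal B} [Module.Finite k (B ⧸ J)] {s : B} {r : ℕ}
    (hs : s ^ 2 ^ r ∈ J) :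
    altDiffSum (2 ^ r) (fun n => ∑ a ∈ Finset.range (2 ^ r),
        (tensorColength k J s a n + tensorColength k J s (a + 1) n)) =
      2 ^ r * altDiffSum (2 ^ r) (powColength k J s) := by
  have hpair : ∀ a ∈ Finset.range (2 ^ r),
      altDiffSum (2 ^ r) (tensorColength k J s a + tensorColength k J s (a + 1)) =
        altDiffSum (2 ^ r) (powColength k J s) := by
    intro a ha
    rw [Finset.mem_range] at ha
    rw [map_add, altDiffSum_tensorColength hs ha.le, altDiffSum_tensorColength hs ha]
    grind
  have hsum : (fun n => ∑ a ∈ Finset.range (2 ^ r),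
      (tensorColength k J s a n + tensorColength k J s (a + 1) n)) =
        ∑ a ∈ Finset.range (2 ^ r), (tensorColength k J s a + tensorColength k J s (a + 1)) := by
    ext n
    simp
  rw [hsum, map_sum, Finset.sum_congr rfl hpair]
  simp

theorem tensorColength_even_two (J : Ideal B) [Module.Finite k (B ⧸ J)] (s : B) (t : ℕ) :
    tensorColength k J s (2 * t) 2 = 2 * powColength k J s (2 * t) := by
  rw [tensorColength_comm]
  simpa using tensorColength_mul (k := k) 2 J s (r := 1) (a := 2) le_rfl t

theorem tensorColength_odd_two (J : Ideal B) [Module.Finite k (B ⧸ J)] (s : B) (t : ℕ) :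
    tensorColength k J s (2 * t + 1) 2 =
      powColength k J s (2 * t) + powColength k J s (2 * t + 1 + 1) := by
  have hmem := X_add_C_pow_sub_C_mem_truncIdeal 2 J s (r := 1) (a := 2) le_rfl t
  rw [tensorColength_comm, tensorColength_add_of_sub_mem J s (by simpa using hmem),
    tensorColength_comm, tensorColength_one_left, add_assoc, powColength_add J s (2 * t) (1 + 1)]
  push_cast
  ring

theorem sum_tensorColength_one_two {J : Ideal B} [Module.Finite k (B ⧸ J)] {s : B} {Q : ℕ}
    (hQ : Even Q) :
    2 * ∑ a ∈ Finset.range Q, (tensorColength k J s a 1 + tensorColength k J s (a + 1) 1) -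
        ∑ a ∈ Finset.range Q, (tensorColength k J s a 2 + tensorColength k J s (a + 1) 2) =
      2 * altDiffSum Q (powColength k J s) := by
  obtain ⟨u, rfl⟩ := even_iff_exists_two_mul.1 hQ
  clear hQ
  simp only [altDiffSum_apply, tensorColength_comm J s _ 1, tensorColength_one_left]
  induction u with
  | zero => simp
  | succ u ih =>
    have hnext : tensorColength k J s (2 * u + 1 + 1) 2 = 2 * powColength k J s (2 * u + 1 + 1) :=
      tensorColength_even_two J s (u + 1)
    have hsign : (-1 : ℤ) ^ (2 * u) = 1 := (even_two_mul u).neg_one_pow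
    rw [show 2 * (u + 1) = 2 * u + 1 + 1 from rfl]
    simp only [Finset.sum_range_succ, hnext, tensorColength_even_two, tensorColength_odd_two,
      pow_succ, hsign]
    linear_combination ih

end CharTwo

section Hyperbolic

variable {k : Type*} [Field k] {B : Type*} [CommRing B] [Algebra k B]

/-- The element `s + xy` of `B[x][y]`. -/
noncomputable def addHyperbolic (s : B) : B[X][X] :=
  Polynomial.C (Polynomial.C s) + Polynomial.C Polynomial.X * Polynomial.X

theorem aeval_X_add_C (s : B) :
    Polynomial.aeval (R := B) (Polynomial.C Polynomial.X * Polynomial.X : B[X][X])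
      (Polynomial.X + Polynomial.C s) = addHyperbolic s := by
  rw [map_add, Polynomial.aeval_X, Polynomial.aeval_C, add_comm]
  rfl

theorem mem_truncIdeal_truncIdeal {J : Ideal B} {a b : ℕ} {p : B[X][X]} :
    p ∈ truncIdeal (truncIdeal J a) b ↔ ∀ j < b, ∀ i < a, (p.coeff j).coeff i ∈ J := by
  simp only [mem_truncIdeal]

variable (k) in
/-- The map `a(T) ↦ x ^ c y ^ d a(xy)` from `B[T]` to `B[x][y]`. -/
noncomputable def diagIncl (c d : ℕ) : B[X] →ₗ[k] B[X][X] :=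
  LinearMap.mulLeft k (Polynomial.X ^ d * Polynomial.C (Polynomial.X ^ c)) ∘ₗ
    ((Polynomial.aeval (R := B) (Polynomial.C Polynomial.X * Polynomial.X)).restrictScalars
      k).toLinearMap

theorem coeff_sum_monomial_diag (c d : ℕ) (p : B[X][X]) (t : ℕ) :
    (∑ i ∈ Finset.range (p.natDegree + 1),
      Polynomial.monomial i ((p.coeff (i + d)).coeff (i + c))).coeff t =
        (p.coeff (t + d)).coeff (t + c) := by
  simp only [Polynomial.finsetSum_coeff, Polynomial.coeff_monomial, Finset.sum_ite_eq',
    Finset.mem_range, ite_eq_left_iff]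
  intro ht
  rw [Polynomial.coeff_eq_zero_of_natDegree_lt (p := p) (by omega), Polynomial.coeff_zero]

variable (k) in
/-- The map from `B[x][y]` to `B[T]` that reads off the coefficients of the monomials
`x ^ (t + c) y ^ (t + d)`. -/
noncomputable def diagProj (c d : ℕ) : B[X][X] →ₗ[k] B[X] where
  toFun p := ∑ i ∈ Finset.range (p.natDegree + 1),
    Polynomial.monomial i ((p.coeff (i + d)).coeff (i + c))
  map_add' p q := by
    ext t
    rw [coeff_sum_monomial_diag]
    simp only [Polynomial.coeff_add, coeff_sum_monomial_diag]
  map_smul' b p := by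
    ext t
    rw [coeff_sum_monomial_diag]
    simp only [Polynomial.coeff_smul, RingHom.id_apply, coeff_sum_monomial_diag]

theorem coeff_diagProj (c d : ℕ) (p : B[X][X]) (t : ℕ) :
    (diagProj k c d p).coeff t = (p.coeff (t + d)).coeff (t + c) :=
  coeff_sum_monomial_diag c d p t

theorem diagIncl_monomial (c d t : ℕ) (b : B) :
    diagIncl k c d (Polynomial.monomial t b) =
      Polynomial.monomial (t + d) (Polynomial.monomial (t + c) b) := by
  have halg : algebraMap B B[X][X] b = Polynomial.C (Polynomial.C b) := rfl
  simp only [diagIncl, LinearMap.comp_apply, LinearMap.mulLeft_apply, AlgHom.toLinearMap_apply,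
    AlgHom.restrictScalars_apply, Polynomial.aeval_monomial, halg]
  simp only [← Polynomial.C_mul_X_pow_eq_monomial, map_mul, map_pow]
  ring

theorem coeff_coeff_diagIncl (c d : ℕ) (a : B[X]) (i j : ℕ) :
    ((diagIncl k c d a).coeff j).coeff i =
      if c ≤ i ∧ d ≤ j ∧ i - c = j - d then a.coeff (i - c) else 0 := by
  induction a using Polynomial.induction_on' with
  | add p q hp hq =>
    simp only [map_add, Polynomial.coeff_add, hp, hq]
    split_ifs <;> simp
  | monomial t b =>
    rw [diagIncl_monomial]
    simp only [Polynomial.coeff_monomial, apply_ite (Polynomial.coeff · i), Polynomial.coeff_zero]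
    grind

theorem diagProj_diagIncl {c d c' d' : ℕ} (hcd : c = 0 ∨ d = 0) (hcd' : c' = 0 ∨ d' = 0)
    (a : B[X]) : diagProj k c' d' (diagIncl k c d a) = if c' = c ∧ d' = d then a else 0 := by
  ext t
  rw [coeff_diagProj, coeff_coeff_diagIncl]
  split_ifs <;> grind [Polynomial.coeff_zero]

theorem diagProj_addHyperbolic_mul (s : B) {c d : ℕ} (hcd : c = 0 ∨ d = 0) (p : B[X][X]) :
    diagProj k c d (addHyperbolic s * p) =
      (Polynomial.X + Polynomial.C s) * diagProj k c d p := by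
  ext t
  simp only [coeff_diagProj, addHyperbolic, add_mul, mul_assoc, Polynomial.coeff_add,
    Polynomial.coeff_C_mul]
  rw [add_comm]
  congr 1
  cases t with
  | zero => obtain rfl | rfl := hcd <;> simp
  | succ t => simp [coeff_diagProj, add_right_comm t 1]

theorem diagProj_addHyperbolic_pow_mul (s : B) {c d : ℕ} (hcd : c = 0 ∨ d = 0) (n : ℕ)
    (p : B[X][X]) :
    diagProj k c d (addHyperbolic s ^ n * p) =
      (Polynomial.X + Polynomial.C s) ^ n * diagProj k c d p := by
  induction n with
  | zero => simp
  | succ n ih =>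
    rw [pow_succ', mul_assoc, diagProj_addHyperbolic_mul s hcd, ih, pow_succ', mul_assoc]

theorem diagProj_mem {J : Ideal B} {s : B} {Q n c d : ℕ} (hcd : c = 0 ∨ d = 0) {p : B[X][X]}
    (hp : p ∈ truncIdeal (truncIdeal J Q) Q ⊔ Ideal.span {addHyperbolic s ^ n}) :
    diagProj k c d p ∈
      truncIdeal J (Q - (c + d)) ⊔ Ideal.span {(Polynomial.X + Polynomial.C s) ^ n} := by
  obtain ⟨u, hu, v, hv, rfl⟩ := Submodule.mem_sup.1 hp
  obtain ⟨w, rfl⟩ := Ideal.mem_span_singleton.1 hv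
  rw [map_add, diagProj_addHyperbolic_pow_mul s hcd]
  refine add_mem (Ideal.mem_sup_left (mem_truncIdeal.2 fun i hi => ?_))
    (Ideal.mem_sup_right (Ideal.mul_mem_right _ _ (Ideal.mem_span_singleton_self _)))
  rw [coeff_diagProj]
  exact mem_truncIdeal_truncIdeal.1 hu _ (by omega) _ (by omega)

theorem diagIncl_mem {J : Ideal B} {s : B} {Q n c d : ℕ} (hcd : c = 0 ∨ d = 0) {a : B[X]}
    (ha : a ∈ truncIdeal J (Q - (c + d)) ⊔ Ideal.span {(Polynomial.X + Polynomial.C s) ^ n}) :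
    diagIncl k c d a ∈ truncIdeal (truncIdeal J Q) Q ⊔ Ideal.span {addHyperbolic s ^ n} := by
  obtain ⟨u, hu, v, hv, rfl⟩ := Submodule.mem_sup.1 ha
  obtain ⟨w, rfl⟩ := Ideal.mem_span_singleton.1 hv
  rw [map_add]
  refine add_mem (Ideal.mem_sup_left (mem_truncIdeal_truncIdeal.2 fun j hj i hi => ?_))
    (Ideal.mem_sup_right ?_)
  · rw [coeff_coeff_diagIncl]
    split_ifs
    exacts [mem_truncIdeal.1 hu _ (by omega), J.zero_mem]
  · simp only [diagIncl, LinearMap.comp_apply, LinearMap.mulLeft_apply,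
      AlgHom.toLinearMap_apply, AlgHom.restrictScalars_apply, map_mul, map_pow, aeval_X_add_C]
    exact Ideal.mul_mem_left _ _ (Ideal.mul_mem_right _ _ (Ideal.mem_span_singleton_self _))

/-- The exponents `(c, d)` of the monomials `x ^ c y ^ d` that generate `B[x, y] ⧸ (x ^ Q, y ^ Q)`
over `B[xy]`. The monomial `y ^ Q`, which is zero in this quotient, is included for symmetry. -/
def axisExponent (Q : ℕ) : Fin Q ⊕ Fin Q → ℕ × ℕ :=
  Sum.elim (fun c => (c, 0)) (fun d => (0, d + 1))

theorem axisExponent_injective (Q : ℕ) : Function.Injective (axisExponent Q) := by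
  rintro (c | c) (d | d) h <;> simp_all [axisExponent, Fin.ext_iff]

theorem axisExponent_fst_eq_zero_or {Q : ℕ} (c : Fin Q ⊕ Fin Q) :
    (axisExponent Q c).1 = 0 ∨ (axisExponent Q c).2 = 0 := by
  cases c <;> simp [axisExponent]

theorem exists_add_axisExponent {Q i j : ℕ} (hi : i < Q) (hj : j < Q) :
    ∃ c t, t + (axisExponent Q c).1 = i ∧ t + (axisExponent Q c).2 = j := by
  obtain h | h := le_or_gt j i
  · exact ⟨Sum.inl ⟨i - j, by omega⟩, j, by simp [axisExponent, h]⟩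
  · exact ⟨Sum.inr ⟨j - i - 1, by omega⟩, i, by simp [axisExponent]; omega⟩

theorem sup_iSup_range_diagIncl (J : Ideal B) (Q : ℕ) :
    (truncIdeal (truncIdeal J Q) Q).restrictScalars k ⊔
      ⨆ c, LinearMap.range (diagIncl k (axisExponent Q c).1 (axisExponent Q c).2) = ⊤ := by
  refine eq_top_iff.2 fun p _ => ?_
  induction p using Polynomial.induction_on' with
  | add p q hp hq => exact add_mem (hp trivial) (hq trivial)
  | monomial j b =>
  induction b using Polynomial.induction_on' with
  | add p q hp hq => exact map_add (Polynomial.monomial j) p q ▸ add_mem (hp trivial) (hq trivial)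
  | monomial i b =>
    by_cases hij : i < Q ∧ j < Q
    · obtain ⟨c, t, rfl, rfl⟩ := exists_add_axisExponent hij.1 hij.2
      exact Submodule.mem_sup_right
        (Submodule.mem_iSup_of_mem c ⟨Polynomial.monomial t b, diagIncl_monomial _ _ t b⟩)
    · refine Submodule.mem_sup_left (mem_truncIdeal_truncIdeal.2 fun j' hj' i' hi' => ?_)
      rw [Polynomial.coeff_monomial, apply_ite (Polynomial.coeff · i'), Polynomial.coeff_monomial]
      grind [J.zero_mem, Polynomial.coeff_zero]

theorem splitsQuotient_addHyperbolic (J : Ideal B) (s : B) (Q n : ℕ) :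
    SplitsQuotient (truncIdeal (truncIdeal J Q) Q ⊔ Ideal.span {addHyperbolic s ^ n})
      (fun c => truncIdeal J (Q - ((axisExponent Q c).1 + (axisExponent Q c).2)) ⊔
        Ideal.span {(Polynomial.X + Polynomial.C s) ^ n})
      (fun c => diagProj k (axisExponent Q c).1 (axisExponent Q c).2)
      (fun c => diagIncl k (axisExponent Q c).1 (axisExponent Q c).2) where
  proj_mem c _ := diagProj_mem (axisExponent_fst_eq_zero_or c)
  incl_mem c _ := diagIncl_mem (axisExponent_fst_eq_zero_or c)
  proj_incl c c' a := by
    rw [diagProj_diagIncl (axisExponent_fst_eq_zero_or c) (axisExponent_fst_eq_zero_or c')]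
    simp only [← Prod.ext_iff, (axisExponent_injective Q).eq_iff]
  sup_iSup_range := by
    rw [← top_le_iff, ← sup_iSup_range_diagIncl J Q]
    exact sup_le_sup_right (fun _ hp => Ideal.mem_sup_left hp) _

/-- Multiplication by `xy` on `k[x, y] ⧸ (x ^ Q, y ^ Q)` has one Jordan block of size `Q` and two of
each smaller size. -/
theorem powColength_addHyperbolic (J : Ideal B) [Module.Finite k (B ⧸ J)] (s : B) (Q n : ℕ) :
    powColength k (truncIdeal (truncIdeal J Q) Q) (addHyperbolic s) n =
      ∑ a ∈ Finset.range Q, (tensorColength k J s a n + tensorColength k J s (a + 1) n) := by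
  rw [powColength, (splitsQuotient_addHyperbolic (k := k) J s Q n).colength_eq_sum,
    Fintype.sum_sum_type, add_comm, Finset.sum_add_distrib]
  simp only [axisExponent, Sum.elim_inl, Sum.elim_inr, add_zero, zero_add]
  congr 1
  · rw [← Finset.sum_range_reflect, ← Fin.sum_univ_eq_sum_range
      (fun i => tensorColength k J s (Q - 1 - i) n)]
    simp only [tensorColength, powColength, Nat.sub_sub, add_comm]
  · rw [← Finset.sum_range_reflect, ← Fin.sum_univ_eq_sum_range
      (fun i => tensorColength k J s (Q - 1 - i + 1) n)]
    refine Finset.sum_congr rfl fun i _ => ?_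
    rw [show Q - 1 - i + 1 = Q - i by omega]
    rfl

end Hyperbolic

section HyperbolicCharTwo

variable {k : Type*} [Field k] {B : Type*} [CommRing B] [Algebra k B] [CharP B 2]

theorem altDiffSum_powColength_addHyperbolic {J : Ideal B} [Module.Finite k (B ⧸ J)] {s : B} {r : ℕ}
    (hs : s ^ 2 ^ r ∈ J) :
    altDiffSum (2 ^ r)
        (powColength k (truncIdeal (truncIdeal J (2 ^ r)) (2 ^ r)) (addHyperbolic s)) =
      2 ^ r * altDiffSum (2 ^ r) (powColength k J s) := by
  rw [funext (powColength_addHyperbolic J s (2 ^ r)), altDiffSum_sum_tensorColength hs]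

/-- Both sides equal the number of Jordan blocks of size one. -/
theorem powColength_addHyperbolic_one_two (J : Ideal B) [Module.Finite k (B ⧸ J)] (s : B) {Q : ℕ}
    (hQ : Even Q) :
    2 * powColength k (truncIdeal (truncIdeal J Q) Q) (addHyperbolic s) 1 -
        powColength k (truncIdeal (truncIdeal J Q) Q) (addHyperbolic s) 2 =
      2 * altDiffSum Q (powColength k J s) := by
  rw [powColength_addHyperbolic, powColength_addHyperbolic, sum_tensorColength_one_two hQ]

end HyperbolicCharTwo

section Expand

variable {k : Type*} [Field k] {σ : Type*} (p : ℕ)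

/-- The entrywise quotient of the exponent vector `u` by `p`, rounded down. -/
noncomputable def expQuotient (u : σ →₀ ℕ) : σ →₀ ℕ := u.mapRange (· / p) (Nat.zero_div p)

/-- The exponent vector with entries in `{0, …, p - 1}` that represents `ε`. -/
noncomputable def ofResidue [Fintype σ] (ε : σ → Fin p) : σ →₀ ℕ :=
  Finsupp.equivFunOnFinite.symm fun i => ε i

theorem expQuotient_ofResidue [Fintype σ] (ε : σ → Fin p) : expQuotient p (ofResidue p ε) = 0 := by
  ext i
  simp [expQuotient, ofResidue]

variable (k) in
/-- The map `f ↦ x ^ ε f(x₁ ^ p, …, xₙ ^ p)`. -/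
noncomputable def expandIncl [Fintype σ] (ε : σ → Fin p) :
    MvPolynomial σ k →ₗ[k] MvPolynomial σ k :=
  LinearMap.mulLeft k (monomial (ofResidue p ε) 1) ∘ₗ (expand p).toLinearMap

theorem expandIncl_apply [Fintype σ] (ε : σ → Fin p) (f : MvPolynomial σ k) :
    expandIncl k p ε f = monomial (ofResidue p ε) 1 * expand p f := rfl

variable [NeZero p]

/-- The exponent vector `u` reduced modulo `p`. -/
def residue (u : σ →₀ ℕ) : σ → Fin p := fun i => Fin.ofNat p (u i)

theorem residue_add_smul (u v : σ →₀ ℕ) : residue p (u + p • v) = residue p u := by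
  ext i
  simp [residue]

theorem expQuotient_add_smul (u v : σ →₀ ℕ) :
    expQuotient p (u + p • v) = expQuotient p u + v := by
  ext i
  simp [expQuotient, Nat.add_mul_div_left _ _ (NeZero.pos p)]

variable [Fintype σ]

theorem residue_ofResidue (ε : σ → Fin p) : residue p (ofResidue p ε) = ε := by
  ext i
  simp [residue, ofResidue]

theorem ofResidue_residue_add (u : σ →₀ ℕ) :
    ofResidue p (residue p u) + p • expQuotient p u = u := by
  ext i
  simp [residue, ofResidue, expQuotient, Nat.mod_add_div]

variable (k) in
/-- The `k`-linear map that sends the monomial with exponents `ε + p v` to the one with exponents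
`v`, and kills the monomials whose exponents are not congruent to `ε` modulo `p`. -/
noncomputable def expandProj (ε : σ → Fin p) : MvPolynomial σ k →ₗ[k] MvPolynomial σ k :=
  (basisMonomials σ k).constr k fun u =>
    if ε = residue p u then monomial (expQuotient p u) 1 else 0

theorem expandProj_monomial (ε : σ → Fin p) (u : σ →₀ ℕ) (b : k) :
    expandProj k p ε (monomial u b) =
      if ε = residue p u then monomial (expQuotient p u) b else 0 := by
  have hsmul : (monomial u b : MvPolynomial σ k) = b • basisMonomials σ k u := by
    simp [smul_monomial]
  rw [hsmul, map_smul, expandProj, Module.Basis.constr_basis, smul_ite, smul_zero, smul_monomial,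
    smul_eq_mul, mul_one]

theorem expandProj_mul_expand (ε : σ → Fin p) (f g : MvPolynomial σ k) :
    expandProj k p ε (f * expand p g) = expandProj k p ε f * g := by
  induction f using MvPolynomial.induction_on' with
  | add f₁ f₂ h₁ h₂ => rw [add_mul, map_add, h₁, h₂, map_add, add_mul]
  | monomial u b =>
  induction g using MvPolynomial.induction_on' with
  | add g₁ g₂ h₁ h₂ => rw [map_add, mul_add, map_add, h₁, h₂, mul_add]
  | monomial v c =>
    rw [expand_monomial, monomial_mul, expandProj_monomial, expandProj_monomial, residue_add_smul,
      expQuotient_add_smul, ite_mul, zero_mul, monomial_mul]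

theorem expandProj_mem {I : Ideal (MvPolynomial σ k)} (ε : σ → Fin p) {f : MvPolynomial σ k}
    (hf : f ∈ I.map (expand p)) : expandProj k p ε f ∈ I := by
  suffices ∀ g, expandProj k p ε (g * f) ∈ I by simpa using this 1
  induction hf using Submodule.span_induction with
  | mem f hf =>
    obtain ⟨a, ha, rfl⟩ := hf
    exact fun g => expandProj_mul_expand p ε g a ▸ I.mul_mem_left _ ha
  | zero => simp
  | add f₁ f₂ _ _ h₁ h₂ => exact fun g => by rw [mul_add, map_add]; exact add_mem (h₁ g) (h₂ g)
  | smul a f _ h => exact fun g => by rw [smul_eq_mul, ← mul_assoc]; exact h _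

theorem splitsQuotient_map_expand (I : Ideal (MvPolynomial σ k)) :
    SplitsQuotient (I.map (expand p)) (fun _ => I) (expandProj k p) (expandIncl k p) where
  proj_mem ε _ := expandProj_mem p ε
  incl_mem ε f hf := Ideal.mul_mem_left _ _ (Ideal.mem_map_of_mem _ hf)
  proj_incl ε ε' f := by
    rw [expandIncl_apply, expandProj_mul_expand, expandProj_monomial, residue_ofResidue,
      expQuotient_ofResidue, ite_mul, zero_mul, ← C_apply, C_1, one_mul]
  sup_iSup_range := by
    refine eq_top_iff.2 fun f _ => ?_
    induction f using MvPolynomial.induction_on' with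
    | add f g hf hg => exact add_mem (hf trivial) (hg trivial)
    | monomial u b =>
      refine Submodule.mem_sup_right (Submodule.mem_iSup_of_mem (residue p u)
        ⟨monomial (expQuotient p u) b, ?_⟩)
      rw [expandIncl_apply, expand_monomial, monomial_mul, ofResidue_residue_add, one_mul]

theorem colength_map_expand (I : Ideal (MvPolynomial σ k))
    [Module.Finite k (MvPolynomial σ k ⧸ I)] :
    colength k (I.map (expand p : MvPolynomial σ k →ₐ[k] MvPolynomial σ k)) =
      p ^ Fintype.card σ * colength k I := by
  classical simp [(splitsQuotient_map_expand (k := k) p I).colength_eq_sum]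

end Expand

section VarPowIdeal

variable (k : Type*) [Field k]

/-- The ideal generated by the `Q`-th powers of the variables, the Frobenius power of the maximal
ideal at the origin when `Q` is a power of the characteristic. -/
noncomputable def varPowIdeal (σ : Type*) (Q : ℕ) : Ideal (MvPolynomial σ k) :=
  Ideal.span (Set.range fun i => X i ^ Q)

variable {k}

theorem pow_mem_varPowIdeal {σ : Type*} (p : ℕ) [ExpChar k p] {f : MvPolynomial σ k}
    (hf : f ∈ idealOfVars σ k) (r : ℕ) : f ^ p ^ r ∈ varPowIdeal k σ (p ^ r) := by
  have h := Ideal.mem_map_of_mem (iterateFrobenius (MvPolynomial σ k) p r) hf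
  rwa [idealOfVars, Ideal.map_span, ← Set.range_comp] at h

theorem map_expand_varPowIdeal (σ : Type*) (p Q : ℕ) :
    (varPowIdeal k σ Q).map (expand p : MvPolynomial σ k →ₐ[k] MvPolynomial σ k) =
      varPowIdeal k σ (p * Q) := by
  rw [varPowIdeal, Ideal.map_span, ← Set.range_comp]
  simp only [Function.comp_def, map_pow, expand_X, ← pow_mul, varPowIdeal]

theorem map_finSuccEquiv_varPowIdeal (n Q : ℕ) :
    (varPowIdeal k (Fin (n + 1)) Q).map (finSuccEquiv k n : _ →+* _) =
      truncIdeal (varPowIdeal k (Fin n) Q) Q := by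
  rw [varPowIdeal, Ideal.map_span, ← Set.range_comp, ← Fin.cons_self_tail (_ ∘ _), Fin.range_cons,
    Ideal.span_insert, sup_comm, truncIdeal, varPowIdeal, Ideal.map_span, ← Set.range_comp]
  simp [Function.comp_def, Fin.tail_def, finSuccEquiv_X_zero, finSuccEquiv_X_succ]

instance finite_quotient_varPowIdeal (n Q : ℕ) :
    Module.Finite k (MvPolynomial (Fin n) k ⧸ varPowIdeal k (Fin n) Q) := by
  induction n with
  | zero =>
    exact .of_surjective ((Ideal.Quotient.mkₐ k _).comp
      (isEmptyAlgEquiv k (Fin 0)).symm.toAlgHom).toLinearMap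
        ((Ideal.Quotient.mkₐ_surjective k _).comp (AlgEquiv.surjective _))
  | succ n ih =>
    exact .equiv (Ideal.quotientEquivAlg _ _ (finSuccEquiv k n)
      (map_finSuccEquiv_varPowIdeal n Q).symm).symm.toLinearEquiv

theorem colength_varPowIdeal (n Q : ℕ) : colength k (varPowIdeal k (Fin n) Q) = Q ^ n := by
  induction n with
  | zero =>
    have hbot : varPowIdeal k (Fin 0) Q = ⊥ := by simp [varPowIdeal]
    rw [hbot, colength, ((AlgEquiv.quotientBot k _).trans
      (isEmptyAlgEquiv k (Fin 0))).toLinearEquiv.finrank_eq]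
    simp
  | succ n ih =>
    rw [← colength_map_equiv (finSuccEquiv k n), map_finSuccEquiv_varPowIdeal,
      colength_truncIdeal, ih, pow_succ']

theorem powColength_varPowIdeal_expand (n p Q : ℕ) [NeZero p] (f : MvPolynomial (Fin n) k)
    (i : ℕ) :
    powColength k (varPowIdeal k (Fin n) (p * Q)) (expand p f) i =
      p ^ n * powColength k (varPowIdeal k (Fin n) Q) f i := by
  have h := colength_map_expand p (varPowIdeal k (Fin n) Q ⊔ Ideal.span {f ^ i})
  rwa [Ideal.map_sup, map_expand_varPowIdeal, Ideal.map_span, Set.image_singleton, map_pow,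
    Fintype.card_fin] at h

theorem powColength_varPowIdeal_one (n : ℕ) {f : MvPolynomial (Fin n) k}
    (hf : f ∈ idealOfVars (Fin n) k) : powColength k (varPowIdeal k (Fin n) 1) f 1 = 1 := by
  have hmem : f ^ 1 ∈ varPowIdeal k (Fin n) 1 := by simpa [varPowIdeal, idealOfVars] using hf
  rw [powColength, sup_eq_left.2 ((Ideal.span_singleton_le_iff_mem _).2 hmem),
    colength_varPowIdeal, Nat.cast_one, one_pow]

theorem natCast_HKfun (n p e : ℕ) (f : MvPolynomial (Fin n) k) :
    (HKfun k n p e f : ℤ) = powColength k (varPowIdeal k (Fin n) (p ^ e)) f 1 := by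
  rw [HKfun, Ideal.span_union, powColength, pow_one]
  rfl

theorem powColength_varPowIdeal_X_pow (Q a n : ℕ) :
    powColength k (varPowIdeal k (Fin 1) Q) (X 0 ^ a) n = (min Q (a * n) : ℕ) := by
  rw [← powColength_map_equiv (finSuccEquiv k 0), map_finSuccEquiv_varPowIdeal, map_pow,
    finSuccEquiv_X_zero, powColength, ← pow_mul, truncIdeal_sup_span_X_pow, colength_truncIdeal,
    colength_varPowIdeal, pow_zero, mul_one]

variable (k) in
/-- The isomorphism `k[x₀, …, xₙ₊₁] ≃ k[x₂, …, xₙ₊₁][x₁][x₀]`. -/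
noncomputable def finSuccSuccEquiv (n : ℕ) :
    MvPolynomial (Fin (n + 2)) k ≃ₐ[k] (MvPolynomial (Fin n) k)[X][X] :=
  (finSuccEquiv k (n + 1)).trans (Polynomial.mapAlgEquiv (finSuccEquiv k n))

theorem finSuccSuccEquiv_X_zero (n : ℕ) : finSuccSuccEquiv k n (X 0) = Polynomial.X := by
  simp [finSuccSuccEquiv, finSuccEquiv_X_zero]

theorem finSuccSuccEquiv_X_one (n : ℕ) :
    finSuccSuccEquiv k n (X 1) = Polynomial.C Polynomial.X := by
  have h : finSuccEquiv k (n + 1) (X 1) = Polynomial.C (X 0) := finSuccEquiv_X_succ (j := 0)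
  simp [finSuccSuccEquiv, h, finSuccEquiv_X_zero]

theorem finSuccSuccEquiv_X_succ_succ (n : ℕ) (i : Fin n) :
    finSuccSuccEquiv k n (X i.succ.succ) = Polynomial.C (Polynomial.C (X i)) := by
  simp [finSuccSuccEquiv, finSuccEquiv_X_succ]

theorem map_finSuccSuccEquiv_varPowIdeal (n Q : ℕ) :
    (varPowIdeal k (Fin (n + 2)) Q).map (finSuccSuccEquiv k n : _ →+* _) =
      truncIdeal (truncIdeal (varPowIdeal k (Fin n) Q) Q) Q := by
  have hcomp : RingHomClass.toRingHom (finSuccSuccEquiv k n) =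
      (Polynomial.mapRingHom (RingHomClass.toRingHom (finSuccEquiv k n))).comp
        (RingHomClass.toRingHom (finSuccEquiv k (n + 1))) := rfl
  rw [hcomp, ← Ideal.map_map, map_finSuccEquiv_varPowIdeal, map_mapRingHom_truncIdeal,
    map_finSuccEquiv_varPowIdeal]

end VarPowIdeal

section A2

theorem two_pow_mod_six {r : ℕ} (hr : r ≠ 0) : 2 ^ r % 6 = 2 ∨ 2 ^ r % 6 = 4 := by
  induction r, Nat.one_le_iff_ne_zero.2 hr using Nat.le_induction with
  | base => simp
  | succ r h ih => grind

/-- Multiplication by `z ^ 3` on `k[z] ⧸ (z ^ Q)` has Jordan blocks of sizes `⌊(Q + 2) / 3⌋`,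
`⌊(Q + 1) / 3⌋` and `⌊Q / 3⌋`; exactly two of these are odd. -/
theorem altDiffSum_min_three_mul {Q : ℕ} (hQ : Q % 6 = 2 ∨ Q % 6 = 4) :
    altDiffSum Q (fun n => ((min Q (3 * n) : ℕ) : ℤ)) = 2 := by
  have hblocks : (fun n => ((min Q (3 * n) : ℕ) : ℤ)) =
      (fun n => ((min ((Q + 2) / 3) n : ℕ) : ℤ)) + (fun n => ((min ((Q + 1) / 3) n : ℕ) : ℤ)) +
        fun n => ((min (Q / 3) n : ℕ) : ℤ) := by
    funext n
    simp only [Pi.add_apply]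
    omega
  rw [hblocks, map_add, map_add, altDiffSum_min (by omega), altDiffSum_min (by omega),
    altDiffSum_min (by omega)]
  omega

theorem two_mul_val_lt {m : ℕ} (i : Fin m) : 2 * (i : ℕ) < 2 * m + 1 := by omega

theorem two_mul_val_add_one_lt {m : ℕ} (i : Fin m) : 2 * (i : ℕ) + 1 < 2 * m + 1 := by omega

variable (k : Type*) [Field k]

/-- The equation `x₀x₁ + ⋯ + x₂ₘ₋₂x₂ₘ₋₁ + x₂ₘ³` of the `A₂` singularity of dimension `2m`. -/
noncomputable def a2Poly (m : ℕ) : MvPolynomial (Fin (2 * m + 1)) k :=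
  (∑ i : Fin m, X ⟨2 * i, two_mul_val_lt i⟩ * X ⟨2 * i + 1, two_mul_val_add_one_lt i⟩) +
    X (Fin.last (2 * m)) ^ 3

theorem a2Poly_mem_idealOfVars (m : ℕ) : a2Poly k m ∈ idealOfVars (Fin (2 * m + 1)) k := by
  have hX (i : Fin (2 * m + 1)) : X i ∈ idealOfVars (Fin (2 * m + 1)) k :=
    Ideal.subset_span ⟨i, rfl⟩
  exact add_mem (sum_mem fun i _ => Ideal.mul_mem_left _ _ (hX _))
    (Ideal.pow_mem_of_mem _ (hX _) 3 three_pos)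

theorem a2Poly_zero : a2Poly k 0 = X 0 ^ 3 := by
  simp [a2Poly]

theorem finSuccSuccEquiv_a2Poly (m : ℕ) :
    finSuccSuccEquiv k (2 * m + 1) (a2Poly k (m + 1)) = addHyperbolic (a2Poly k m) := by
  have hzero : finSuccSuccEquiv k (2 * m + 1) (X ⟨_, two_mul_val_lt (0 : Fin (m + 1))⟩) =
      Polynomial.X := finSuccSuccEquiv_X_zero _
  have hone : finSuccSuccEquiv k (2 * m + 1) (X ⟨_, two_mul_val_add_one_lt (0 : Fin (m + 1))⟩) =
      Polynomial.C Polynomial.X := finSuccSuccEquiv_X_one _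
  have heven (i : Fin m) : finSuccSuccEquiv k (2 * m + 1) (X ⟨_, two_mul_val_lt i.succ⟩) =
      Polynomial.C (Polynomial.C (X ⟨_, two_mul_val_lt i⟩)) :=
    finSuccSuccEquiv_X_succ_succ _ ⟨_, two_mul_val_lt i⟩
  have hodd (i : Fin m) : finSuccSuccEquiv k (2 * m + 1) (X ⟨_, two_mul_val_add_one_lt i.succ⟩) =
      Polynomial.C (Polynomial.C (X ⟨_, two_mul_val_add_one_lt i⟩)) :=
    finSuccSuccEquiv_X_succ_succ _ ⟨_, two_mul_val_add_one_lt i⟩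
  have hlast : finSuccSuccEquiv k (2 * m + 1) (X (Fin.last (2 * (m + 1)))) =
      Polynomial.C (Polynomial.C (X (Fin.last (2 * m)))) :=
    finSuccSuccEquiv_X_succ_succ _ (Fin.last (2 * m))
  rw [a2Poly, Fin.sum_univ_succ, addHyperbolic, a2Poly]
  simp only [map_add, map_sum, map_mul, map_pow, hzero, hone, heven, hodd, hlast]
  ring

variable {k}

theorem expand_two_a2Poly [CharP k 2] (m : ℕ) : expand 2 (a2Poly k m) = a2Poly k m ^ 2 := by
  rw [a2Poly, add_pow_char, sum_pow_char]
  simp [mul_pow, ← pow_mul]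

theorem powColength_a2Poly_zero (Q n : ℕ) :
    powColength k (varPowIdeal k (Fin (2 * 0 + 1)) Q) (a2Poly k 0) n = (min Q (3 * n) : ℕ) := by
  rw [a2Poly_zero]
  exact powColength_varPowIdeal_X_pow Q 3 n

theorem powColength_a2Poly_succ (m Q n : ℕ) :
    powColength k (varPowIdeal k (Fin (2 * (m + 1) + 1)) Q) (a2Poly k (m + 1)) n =
      powColength k (truncIdeal (truncIdeal (varPowIdeal k (Fin (2 * m + 1)) Q) Q) Q)
        (addHyperbolic (a2Poly k m)) n := by
  rw [← finSuccSuccEquiv_a2Poly, ← map_finSuccSuccEquiv_varPowIdeal]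
  exact (powColength_map_equiv _ _ _ _).symm

variable [CharP k 2]

theorem powColength_a2Poly_two (m Q : ℕ) :
    powColength k (varPowIdeal k (Fin (2 * m + 1)) (2 * Q)) (a2Poly k m) 2 =
      2 ^ (2 * m + 1) * powColength k (varPowIdeal k (Fin (2 * m + 1)) Q) (a2Poly k m) 1 := by
  have h := powColength_varPowIdeal_expand (2 * m + 1) 2 Q (a2Poly k m) 1
  rwa [expand_two_a2Poly, powColength, pow_one] at h

theorem altDiffSum_powColength_a2Poly (m : ℕ) {r : ℕ} (hr : r ≠ 0) :
    altDiffSum (2 ^ r) (powColength k (varPowIdeal k (Fin (2 * m + 1)) (2 ^ r)) (a2Poly k m)) =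
      2 * (2 ^ r) ^ m := by
  induction m with
  | zero =>
    rw [funext (powColength_a2Poly_zero (2 ^ r)), altDiffSum_min_three_mul (two_pow_mod_six hr),
      pow_zero, mul_one]
  | succ m ih =>
    rw [funext (powColength_a2Poly_succ m (2 ^ r)), altDiffSum_powColength_addHyperbolic
      (pow_mem_varPowIdeal 2 (a2Poly_mem_idealOfVars k m) r), ih]
    ring

theorem powColength_a2Poly_recurrence (m e : ℕ) :
    2 * powColength k (varPowIdeal k (Fin (2 * (m + 1) + 1)) (2 ^ (e + 1))) (a2Poly k (m + 1)) 1 =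
      2 ^ (2 * (m + 1) + 1) *
          powColength k (varPowIdeal k (Fin (2 * (m + 1) + 1)) (2 ^ e)) (a2Poly k (m + 1)) 1 +
        4 * (2 ^ (e + 1)) ^ m := by
  have hEven : Even (2 ^ (e + 1)) := even_two.pow_of_ne_zero e.succ_ne_zero
  have hblocks := powColength_addHyperbolic_one_two (k := k)
    (varPowIdeal k (Fin (2 * m + 1)) (2 ^ (e + 1))) (a2Poly k m) hEven
  rw [← powColength_a2Poly_succ, ← powColength_a2Poly_succ,
    altDiffSum_powColength_a2Poly m (r := e + 1) e.succ_ne_zero] at hblocks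
  have hfrobenius := powColength_a2Poly_two (k := k) (m + 1) (2 ^ e)
  rw [← pow_succ'] at hfrobenius
  linear_combination hblocks + hfrobenius

theorem powColength_a2Poly_one (m e : ℕ) :
    ((2 : ℤ) ^ (m + 2) - 1) *
        powColength k (varPowIdeal k (Fin (2 * (m + 1) + 1)) (2 ^ e)) (a2Poly k (m + 1)) 1 =
      (2 ^ (m + 2) + 1) * 2 ^ (2 * (m + 1) * e) - 2 * 2 ^ (e * m) := by
  induction e with
  | zero =>
    rw [pow_zero, powColength_varPowIdeal_one _ (a2Poly_mem_idealOfVars k _)]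
    ring
  | succ e ih =>
    refine mul_left_cancel₀ (two_ne_zero' ℤ) ?_
    linear_combination ((2 : ℤ) ^ (m + 2) - 1) * powColength_a2Poly_recurrence (k := k) m e +
      2 ^ (2 * (m + 1) + 1) * ih

end A2

/-- Hilbert–Kunz function of the even-dimensional `A₂` singularity in characteristic 2:
for `d = 2m`,
`(2^{m+1} − 1) · HK_e(S_{2,d}) = (2^{m+1} + 1) · 2^{d·e} − 2 · 2^{e(m−1)}`. -/
theorem HK_function_A2_char_two_even (k : Type*) [Field k] [CharP k 2]
    (m : ℕ) (hm : 1 ≤ m) (e : ℕ) :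
    ((2 : ℤ) ^ (m + 1) - 1) *
        (HKfun k (2 * m + 1) 2 e
          ((∑ i : Fin m,
              (X (⟨2 * i, by omega⟩ : Fin (2 * m + 1)) : MvPolynomial (Fin (2 * m + 1)) k) *
                X (⟨2 * i + 1, by omega⟩ : Fin (2 * m + 1))) +
            X (⟨2 * m, by omega⟩ : Fin (2 * m + 1)) ^ 3)) =
      (2 ^ (m + 1) + 1) * 2 ^ (2 * m * e) - 2 * 2 ^ (e * (m - 1)) := by
  obtain ⟨m, rfl⟩ := Nat.exists_eq_add_of_le' hm
  rw [natCast_HKfun]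
  exact powColength_a2Poly_one m e
end

section
/- Let k be a field of characteristic 2, let m ≥ 0, set d = 2m + 1, and let e ≥ 1. Then 2^m · dim_k ( k[x_0,…,x_d] / (x_0^{2^e},…,x_d^{2^e}, x_0x_1 + x_2x_3 + ⋯ + x_{2m−2}x_{2m−1} + x_{2m}² + x_{2m+1}³) ) = (2^m + 1) · 2^{d·e}. In particular the Hilbert–Kunz function of the odd-dimensional A_2 singularity in characteristic 2 is HK_e(S_{2,d}) = ((2^m+1)/2^m)·2^{de} for d = 2m+1. -/
open MvPolynomial

/-!
Let `q = 2Q` with `Q = 2 ^ a`, let `g = x₀x₁ + ⋯ + x₂ₘ₋₂x₂ₘ₋₁`, and write `z`, `w` for the last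
two variables. Modulo `z² + g + w³` one has `z ^ q = (g + w³) ^ Q = g ^ Q`, because Frobenius is
additive and `w ^ (3Q)` is a multiple of `w ^ q`. Eliminating `z` therefore leaves a free module of
rank two over `A[w] / (w ^ q, g ^ Q)`, where `A = k[x₀, …, x₂ₘ₋₁] / (xᵢ ^ q)`.

To compute `dim A / (g ^ Q)`, add the pairs one at a time. The element `h = g ^ Q` satisfies
`h² = g ^ q = 0`, and a new pair `x, y` replaces it by `h + x ^ Q y ^ Q`. Multiplication by
`x ^ Q y ^ Q` acts on the monomials `x ^ (i + Q s) y ^ (j + Q t)`, `i, j < Q`, by moving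
`(s, t) = (0, 0)` to `(1, 1)` and killing the other three, so that each of the `Q²` blocks
contributes `dim A + 2 dim A / (h)`.
-/

section AdjoinRoot

variable {k R : Type*} [Field k] [CommRing R] [Algebra k R]

theorem finrank_adjoinRoot_of_monic {f : Polynomial R} (hf : f.Monic) :
    Module.finrank k (AdjoinRoot f) = f.natDegree * Module.finrank k R := by
  nontriviality R using Module.finrank_zero_of_subsingleton,
    Module.subsingleton R (AdjoinRoot f)
  have := hf.free_adjoinRoot
  rw [← Module.finrank_mul_finrank k R (AdjoinRoot f), (AdjoinRoot.powerBasis' hf).finrank,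
    AdjoinRoot.powerBasis'_dim, mul_comm]

theorem finrank_adjoinRoot_quotient_map_of {f : Polynomial R} (hf : f.Monic) (I : Ideal R) :
    Module.finrank k (AdjoinRoot f ⧸ I.map (AdjoinRoot.of f)) =
      f.natDegree * Module.finrank k (R ⧸ I) := by
  have hfI : (f.map (Ideal.Quotient.mk I)).Monic := hf.map _
  have hdegree : (f.map (Ideal.Quotient.mk I)).natDegree * Module.finrank k (R ⧸ I) =
      f.natDegree * Module.finrank k (R ⧸ I) := by
    nontriviality R ⧸ I using Module.finrank_zero_of_subsingleton
    rw [hf.natDegree_map]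
  rw [← hdegree, ← finrank_adjoinRoot_of_monic hfI]
  exact ((AdjoinRoot.quotEquivQuotMap f I).restrictScalars k).toLinearEquiv.finrank_eq

theorem finrank_adjoinRoot_quotient_span_mk_comm (f g : Polynomial R) :
    Module.finrank k (AdjoinRoot f ⧸ Ideal.span {AdjoinRoot.mk f g}) =
      Module.finrank k (AdjoinRoot g ⧸ Ideal.span {AdjoinRoot.mk g f}) := by
  have hmap (p q : Polynomial R) : Ideal.span {AdjoinRoot.mk p q} =
      (Ideal.span {q}).map (Ideal.Quotient.mkₐ k (Ideal.span {p})) := by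
    rw [Ideal.map_span, Set.image_singleton]
    rfl
  rw [hmap f g, hmap g f]
  exact (DoubleQuot.quotQuotEquivCommₐ k (Ideal.span {f}) (Ideal.span {g})).toLinearEquiv.finrank_eq

theorem finrank_adjoinRoot_X_pow_quotient_root_pow_add_of {n : ℕ} (hn : n ≠ 0) (Q : ℕ) (c : R) :
    Module.finrank k (AdjoinRoot (Polynomial.X ^ (n * Q) : Polynomial R) ⧸
        Ideal.span {AdjoinRoot.root (Polynomial.X ^ (n * Q)) ^ n + AdjoinRoot.of _ c}) =
      n * Module.finrank k (R ⧸ Ideal.span {c ^ Q}) := by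
  nontriviality R using Module.finrank_zero_of_subsingleton,
    Module.subsingleton R (AdjoinRoot (Polynomial.X ^ (n * Q) : Polynomial R))
  let f : Polynomial R := Polynomial.X ^ n + Polynomial.C c
  have hroot : AdjoinRoot.root f ^ n = AdjoinRoot.of f (-c) := by
    rw [map_neg, eq_neg_iff_add_eq_zero]
    exact AdjoinRoot.mk_self
  -- Modulo `Xⁿ + c` the truncation `X ^ (n * Q)` becomes a constant.
  have hmk : AdjoinRoot.mk f (Polynomial.X ^ (n * Q)) = AdjoinRoot.of f ((-c) ^ Q) := by
    rw [map_pow, AdjoinRoot.mk_X, pow_mul, hroot, map_pow]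
  have hneg : Ideal.span {(-c) ^ Q} = Ideal.span {c ^ Q} := by
    rw [neg_pow, Ideal.span_singleton_mul_left_unit (isUnit_one.neg.pow Q)]
  calc
    _ = Module.finrank k (AdjoinRoot (Polynomial.X ^ (n * Q) : Polynomial R) ⧸
          Ideal.span {AdjoinRoot.mk (Polynomial.X ^ (n * Q)) f}) := rfl
    _ = Module.finrank k (AdjoinRoot f ⧸ (Ideal.span {(-c) ^ Q}).map (AdjoinRoot.of f)) := by
      rw [finrank_adjoinRoot_quotient_span_mk_comm, hmk, Ideal.map_span, Set.image_singleton]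
    _ = n * Module.finrank k (R ⧸ Ideal.span {c ^ Q}) := by
      rw [finrank_adjoinRoot_quotient_map_of (Polynomial.monic_X_pow_add_C c hn),
        Polynomial.natDegree_X_pow_add_C, hneg]

end AdjoinRoot

theorem finrank_quotient_span_singleton_congr {k A B : Type*} [CommRing k] [CommRing A]
    [CommRing B] [Algebra k A] [Algebra k B] (φ : A ≃ₐ[k] B) {a : A} {b : B} (h : φ a = b) :
    Module.finrank k (A ⧸ Ideal.span {a}) = Module.finrank k (B ⧸ Ideal.span {b}) := by
  refine (Ideal.quotientEquivAlg _ _ φ ?_).toLinearEquiv.finrank_eq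
  rw [← h, Ideal.map_span, Set.image_singleton]
  rfl

theorem add_pow_char_pow_of_algebra (k : Type*) {A : Type*} [Field k] [CommRing A] [Algebra k A]
    (p : ℕ) [Fact p.Prime] [CharP k p] (x y : A) (a : ℕ) :
    (x + y) ^ p ^ a = x ^ p ^ a + y ^ p ^ a := by
  nontriviality A
  have : CharP A p := charP_of_injective_algebraMap' k p
  exact add_pow_char_pow x y p a

section CornerShift

variable {k R S ι : Type*} [CommRing R] [CommRing S] [Algebra R S]

/-- Multiplication by `u` sends the `(0, 0)` corner of each `2 × 2` block of the basis `b` to the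
`(1, 1)` corner and kills the rest of the block. -/
structure IsCornerShift (b : Module.Basis (ι × Fin 2 × Fin 2) R S) (u : S) : Prop where
  mul_zero_zero (i : ι) : u * b (i, 0, 0) = b (i, 1, 1)
  mul_zero_one (i : ι) : u * b (i, 0, 1) = 0
  mul_one_zero (i : ι) : u * b (i, 1, 0) = 0
  mul_one_one (i : ι) : u * b (i, 1, 1) = 0

/-- The map that presents `S / (h + u)` when `h ^ 2 = 0` and `u` shifts corners: on a block with
coordinates `c`, it is `(c₀₀ - h c₁₁, c₀₁ mod h, c₁₀ mod h)`. -/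
noncomputable def cornerMap (b : Module.Basis (ι × Fin 2 × Fin 2) R S) (h : R) :
    S →ₗ[R] ι → R × (R ⧸ Ideal.span {h}) × (R ⧸ Ideal.span {h}) :=
  LinearMap.pi fun i =>
    (b.coord (i, 0, 0) - h • b.coord (i, 1, 1)).prod
      (((Ideal.span {h}).mkQ ∘ₗ b.coord (i, 0, 1)).prod
        ((Ideal.span {h}).mkQ ∘ₗ b.coord (i, 1, 0)))

theorem exists_forall_repr_eq {M : Type*} [AddCommGroup M] [Module R M] [Finite ι]
    (b : Module.Basis ι R M) (c : ι → R) : ∃ x, ∀ i, b.repr x i = c i :=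
  ⟨b.equivFun.symm c, congrFun (b.equivFun.apply_symm_apply c)⟩

theorem cornerMap_surjective [Finite ι] (b : Module.Basis (ι × Fin 2 × Fin 2) R S) (h : R) :
    Function.Surjective (cornerMap b h) := by
  intro y
  choose c₀₁ hc₀₁ using fun i => Ideal.Quotient.mk_surjective (y i).2.1
  choose c₁₀ hc₁₀ using fun i => Ideal.Quotient.mk_surjective (y i).2.2
  obtain ⟨x, hx⟩ := exists_forall_repr_eq b
    fun j => !![(y j.1).1, c₀₁ j.1; c₁₀ j.1, 0] j.2.1 j.2.2
  refine ⟨x, funext fun i => Prod.ext ?_ (Prod.ext ?_ ?_)⟩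
  · simp [cornerMap, hx]
  · simp [cornerMap, hx, ← hc₀₁]
  · simp [cornerMap, hx, ← hc₁₀]

theorem cornerMap_eq_zero_iff {b : Module.Basis (ι × Fin 2 × Fin 2) R S} {h : R} {x : S} :
    cornerMap b h x = 0 ↔ ∀ i, b.repr x (i, 0, 0) = h * b.repr x (i, 1, 1) ∧
      h ∣ b.repr x (i, 0, 1) ∧ h ∣ b.repr x (i, 1, 0) := by
  simp [funext_iff, cornerMap, Prod.ext_iff, sub_eq_zero, Ideal.Quotient.eq_zero_iff_dvd]

namespace IsCornerShift

variable {b : Module.Basis (ι × Fin 2 × Fin 2) R S} {u : S}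

theorem repr_mul (hu : IsCornerShift b u) (x : S) (i : ι) (s t : Fin 2) :
    b.repr (u * x) (i, s, t) = if s = 1 ∧ t = 1 then b.repr x (i, 0, 0) else 0 := by
  classical
  suffices b.coord (i, s, t) ∘ₗ LinearMap.mulLeft R u =
      if s = 1 ∧ t = 1 then b.coord (i, 0, 0) else 0 by
    have := LinearMap.congr_fun this x
    split_ifs at this ⊢ <;> exact this
  refine b.ext ?_
  rintro ⟨j, s', t'⟩
  fin_cases s' <;> fin_cases t' <;> fin_cases s <;> fin_cases t <;>
    simp [hu.mul_zero_zero, hu.mul_zero_one, hu.mul_one_zero, hu.mul_one_one, Finsupp.single_apply]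

theorem ker_cornerMap [Finite ι] (hu : IsCornerShift b u) {h : R} (hh : h ^ 2 = 0) :
    LinearMap.ker (cornerMap b h) =
      (Ideal.span {algebraMap R S h + u}).restrictScalars R := by
  ext x
  rw [LinearMap.mem_ker, cornerMap_eq_zero_iff, Submodule.restrictScalars_mem,
    Ideal.mem_span_singleton]
  constructor
  · intro hx
    choose h₀₀ h₀₁ h₁₀ using hx
    choose c₀₁ hc₀₁ using h₀₁
    choose c₁₀ hc₁₀ using h₁₀
    obtain ⟨y, hy⟩ := exists_forall_repr_eq b
      fun j => !![b.repr x (j.1, 1, 1), c₀₁ j.1; c₁₀ j.1, 0] j.2.1 j.2.2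
    refine ⟨y, b.ext_elem ?_⟩
    rintro ⟨i, s, t⟩
    rw [add_mul, ← Algebra.smul_def, map_add, Finsupp.add_apply, hu.repr_mul]
    fin_cases s <;> fin_cases t <;> simp [hy, h₀₀, hc₀₁, hc₁₀]
  · rintro ⟨y, rfl⟩ i
    have hhh : h * (h * b.repr y (i, 1, 1)) = 0 := by rw [← mul_assoc, ← sq, hh, zero_mul]
    rw [add_mul, ← Algebra.smul_def]
    simp [hu.repr_mul, mul_add, hhh]

theorem finrank_quotient [Field k] [Algebra k R] [Algebra k S] [IsScalarTower k R S]
    [Module.Finite k R] [Fintype ι] (hu : IsCornerShift b u) {h : R} (hh : h ^ 2 = 0) :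
    Module.finrank k (S ⧸ Ideal.span {algebraMap R S h + u}) =
      Fintype.card ι * (Module.finrank k R + 2 * Module.finrank k (R ⧸ Ideal.span {h})) := by
  have : Module.Finite k (R ⧸ Ideal.span {h}) := Module.Finite.trans R _
  let e := (Submodule.Quotient.restrictScalarsEquiv R (Ideal.span {algebraMap R S h + u})).symm ≪≫ₗ
    Submodule.quotEquivOfEq _ _ (hu.ker_cornerMap hh).symm ≪≫ₗ
    (cornerMap b h).quotKerEquivOfSurjective (cornerMap_surjective b h)
  rw [(e.restrictScalars k).finrank_eq, Module.finrank_pi_fintype]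
  simp only [Module.finrank_prod, Finset.sum_const, Finset.card_univ, smul_eq_mul]
  ring

end IsCornerShift

end CornerShift

/-- The ring `R[t] / (t ^ q)`: one truncated variable, written `AdjoinRoot.root _`, is adjoined
to `R`. -/
abbrev AdjoinNilpotent (R : Type*) [CommRing R] (q : ℕ) : Type _ :=
  AdjoinRoot (Polynomial.X ^ q : Polynomial R)

namespace AdjoinNilpotent

variable {k R : Type*} [Field k] [CommRing R] [Algebra k R]

theorem root_pow (R : Type*) [CommRing R] (q : ℕ) :
    (AdjoinRoot.root (Polynomial.X ^ q : Polynomial R)) ^ q = 0 := by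
  rw [← AdjoinRoot.mk_X, ← map_pow, AdjoinRoot.mk_self]

theorem finrank_quotient_root_pow_add_of_add_root_pow (p : ℕ) [Fact p.Prime] [CharP k p] (a : ℕ)
    {n : ℕ} (hn : p ≤ n) (g : R) :
    Module.finrank k (AdjoinNilpotent (AdjoinNilpotent R (p * p ^ a)) (p * p ^ a) ⧸
        Ideal.span {AdjoinRoot.root (Polynomial.X ^ (p * p ^ a)) ^ p +
          AdjoinRoot.of _ (AdjoinRoot.of _ g + AdjoinRoot.root _ ^ n)}) =
      p * (p * p ^ a * Module.finrank k (R ⧸ Ideal.span {g ^ p ^ a})) := by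
  have hpow : (AdjoinRoot.of _ g + AdjoinRoot.root _ ^ n : AdjoinNilpotent R (p * p ^ a)) ^ p ^ a =
      AdjoinRoot.of _ (g ^ p ^ a) := by
    rw [add_pow_char_pow_of_algebra k, ← pow_mul,
      pow_eq_zero_of_le (Nat.mul_le_mul_right _ hn) (root_pow R _), add_zero, map_pow]
  have hmap : Ideal.span {AdjoinRoot.of _ (g ^ p ^ a)} = (Ideal.span {g ^ p ^ a}).map
      (AdjoinRoot.of (Polynomial.X ^ (p * p ^ a) : Polynomial R)) := by
    rw [Ideal.map_span, Set.image_singleton]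
  rw [finrank_adjoinRoot_X_pow_quotient_root_pow_add_of (Fact.out : p.Prime).ne_zero, hpow, hmap,
    finrank_adjoinRoot_quotient_map_of (Polynomial.monic_X_pow _)]
  nontriviality R using Module.finrank_zero_of_subsingleton
  rw [Polynomial.natDegree_X_pow]

/-- The basis `1, t, …, t ^ (q - 1)` of `R[t] / (t ^ q)`. -/
noncomputable def powerBasis (R : Type*) [CommRing R] [Nontrivial R] (q : ℕ) :
    Module.Basis (Fin q) R (AdjoinNilpotent R q) :=
  (AdjoinRoot.powerBasis' (Polynomial.monic_X_pow q)).basis.reindex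
    (finCongr (Polynomial.natDegree_X_pow q))

theorem powerBasis_apply (R : Type*) [CommRing R] [Nontrivial R] {q : ℕ} (i : Fin q) :
    powerBasis R q i = AdjoinRoot.root _ ^ (i : ℕ) := by
  rw [powerBasis, Module.Basis.reindex_apply, PowerBasis.basis_eq_pow]
  rfl

instance (R : Type*) [CommRing R] [Nontrivial R] (q : ℕ) [NeZero q] :
    Nontrivial (AdjoinNilpotent R q) :=
  ⟨0, powerBasis R q 0, ((powerBasis R q).ne_zero 0).symm⟩

/-- The monomial basis of `R[x, y] / (x ^ (2 * Q), y ^ (2 * Q))`, arranged in `2 × 2` blocks: the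
block `(i, j)` consists of the `x ^ (i + Q * s) * y ^ (j + Q * t)` for `s, t < 2`. -/
noncomputable def pairBasis (R : Type*) [CommRing R] [Nontrivial R] (Q : ℕ) [NeZero Q] :
    Module.Basis ((Fin Q × Fin Q) × Fin 2 × Fin 2) R
      (AdjoinNilpotent (AdjoinNilpotent R (2 * Q)) (2 * Q)) :=
  ((powerBasis R (2 * Q)).smulTower (powerBasis (AdjoinNilpotent R (2 * Q)) (2 * Q))).reindex
    (((Equiv.prodProdProdComm _ _ _ _).trans
      (((Equiv.prodComm _ _).trans finProdFinEquiv).prodCongr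
        ((Equiv.prodComm _ _).trans finProdFinEquiv))).symm)

theorem pairBasis_apply (R : Type*) [CommRing R] [Nontrivial R] {Q : ℕ} [NeZero Q] (i j : Fin Q)
    (s t : Fin 2) : pairBasis R Q ((i, j), s, t) =
      AdjoinRoot.of _ (AdjoinRoot.root _) ^ (i + Q * s : ℕ) *
        AdjoinRoot.root _ ^ (j + Q * t : ℕ) := by
  rw [pairBasis, Module.Basis.reindex_apply, Module.Basis.smulTower_apply, powerBasis_apply,
    powerBasis_apply, Algebra.smul_def, AdjoinRoot.algebraMap_eq, map_pow]
  rfl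

theorem isCornerShift_pairBasis (R : Type*) [CommRing R] [Nontrivial R] (Q : ℕ) [NeZero Q] :
    IsCornerShift (pairBasis R Q)
      (AdjoinRoot.root _ ^ Q * AdjoinRoot.of _ (AdjoinRoot.root _) ^ Q) := by
  have hx : AdjoinRoot.of (Polynomial.X ^ (2 * Q) : Polynomial (AdjoinNilpotent R (2 * Q)))
      (AdjoinRoot.root _) ^ (2 * Q) = 0 := by
    rw [← map_pow, root_pow, map_zero]
  have hy := root_pow (AdjoinNilpotent R (2 * Q)) (2 * Q)
  constructor <;> rintro ⟨i, j⟩ <;> simp only [pairBasis_apply, Fin.val_one, Fin.val_zero]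
  · ring
  · linear_combination AdjoinRoot.of _ (AdjoinRoot.root _) ^ (Q + i) *
      AdjoinRoot.root _ ^ (j : ℕ) * hy
  · linear_combination AdjoinRoot.of _ (AdjoinRoot.root _) ^ (i : ℕ) *
      AdjoinRoot.root _ ^ (Q + j) * hx
  · linear_combination AdjoinRoot.of _ (AdjoinRoot.root _) ^ (2 * Q + i) *
      AdjoinRoot.root _ ^ (j : ℕ) * hy

theorem finrank_quotient_of_add_root_pow_mul_of_root_pow [Nontrivial R] [Module.Finite k R] (Q : ℕ)
    [NeZero Q] {h : R} (hh : h ^ 2 = 0) :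
    Module.finrank k (AdjoinNilpotent (AdjoinNilpotent R (2 * Q)) (2 * Q) ⧸
        Ideal.span {AdjoinRoot.of _ (AdjoinRoot.of _ h) +
          AdjoinRoot.root _ ^ Q * AdjoinRoot.of _ (AdjoinRoot.root _) ^ Q}) =
      Q * Q * (Module.finrank k R + 2 * Module.finrank k (R ⧸ Ideal.span {h})) := by
  refine ((isCornerShift_pairBasis R Q).finrank_quotient hh).trans ?_
  rw [Fintype.card_prod, Fintype.card_fin]

end AdjoinNilpotent

/-- The truncated polynomial ring `k[x₀, …, xₙ₋₁] / (x₀ ^ q, …, xₙ₋₁ ^ q)`. -/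
abbrev TruncatedPolynomial (k : Type*) [CommRing k] (q n : ℕ) : Type _ :=
  MvPolynomial (Fin n) k ⧸
    Ideal.span (Set.range fun i : Fin n => (X i : MvPolynomial (Fin n) k) ^ q)

namespace TruncatedPolynomial

section CommRing

variable (k : Type*) [CommRing k] (q : ℕ) {n : ℕ}

/-- The class of the variable `xᵢ`. -/
noncomputable def var (i : Fin n) : TruncatedPolynomial k q n :=
  Ideal.Quotient.mkₐ k _ (X i)

theorem var_pow (i : Fin n) : var k q i ^ q = 0 := by
  rw [var, ← map_pow]
  exact Ideal.Quotient.eq_zero_iff_mem.2 (Ideal.subset_span ⟨i, rfl⟩)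

variable {k q} {A : Type*} [CommRing A] [Algebra k A]

/-- The algebra homomorphism sending `xᵢ` to `v i`, given that `v i ^ q = 0`. -/
noncomputable def lift (v : Fin n → A) (hv : ∀ i, v i ^ q = 0) :
    TruncatedPolynomial k q n →ₐ[k] A :=
  Ideal.Quotient.liftₐ _ (aeval v) fun a ha => by
    refine (Ideal.span_le (I := RingHom.ker (aeval v))).2 ?_ ha
    rintro _ ⟨i, rfl⟩
    simp [hv]

@[simp]
theorem lift_var (v : Fin n → A) (hv : ∀ i, v i ^ q = 0) (i : Fin n) :
    lift v hv (var k q i) = v i :=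
  aeval_X v i

theorem algHom_ext {f g : TruncatedPolynomial k q n →ₐ[k] A}
    (h : ∀ i, f (var k q i) = g (var k q i)) : f = g :=
  Ideal.Quotient.algHom_ext _ (MvPolynomial.algHom_ext h)

variable (k q)

/-- Singling out the variable `xᵢ` of a truncated polynomial ring in `n + 1` variables. -/
noncomputable def peel (i : Fin (n + 1)) :
    TruncatedPolynomial k q (n + 1) ≃ₐ[k] AdjoinNilpotent (TruncatedPolynomial k q n) q :=
  AlgEquiv.ofAlgHom
    (lift (i.insertNth (AdjoinRoot.root _) fun j => AdjoinRoot.of _ (var k q j)) <| by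
      rw [Fin.forall_iff_succAbove i]
      simp [AdjoinNilpotent.root_pow, ← map_pow, var_pow])
    (AdjoinRoot.liftAlgHom _ (lift (fun j => var k q (i.succAbove j)) fun _ => var_pow k q _)
      (var k q i) (by simp [var_pow]))
    (AdjoinRoot.algHom_ext' (algHom_ext fun j => by simp) (by simp))
    (algHom_ext <| by
      rw [Fin.forall_iff_succAbove i]
      simp)

@[simp]
theorem peel_var_self (i : Fin (n + 1)) : peel k q i (var k q i) = AdjoinRoot.root _ := by
  simp [peel]

@[simp]
theorem peel_var_succAbove (i : Fin (n + 1)) (j : Fin n) :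
    peel k q i (var k q (i.succAbove j)) = AdjoinRoot.of _ (var k q j) := by
  simp [peel]

@[simp]
theorem peel_last_var_castSucc (j : Fin n) :
    peel k q (Fin.last n) (var k q j.castSucc) = AdjoinRoot.of _ (var k q j) := by
  simpa using peel_var_succAbove k q (Fin.last n) j

/-- Singling out the last two variables: `xₙ` becomes the outer root, `xₙ₊₁` the inner one, so that
`xₙ` can be eliminated over the ring generated by the others. -/
noncomputable def peelTwo (n : ℕ) : TruncatedPolynomial k q (n + 2) ≃ₐ[k]
    AdjoinNilpotent (AdjoinNilpotent (TruncatedPolynomial k q n) q) q :=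
  (peel k q (Fin.last n).castSucc).trans
    (AdjoinRoot.mapAlgEquiv (peel k q (Fin.last n)) _ _ (by simp))

theorem peelTwo_var_outer : peelTwo k q n (var k q (Fin.last n).castSucc) = AdjoinRoot.root _ := by
  simp [peelTwo]

theorem peelTwo_var_inner :
    peelTwo k q n (var k q (Fin.last (n + 1))) = AdjoinRoot.of _ (AdjoinRoot.root _) := by
  have h : Fin.last (n + 1) = (Fin.last n).castSucc.succAbove (Fin.last n) := by simp
  rw [h, peelTwo, AlgEquiv.trans_apply, peel_var_succAbove]
  simp

theorem peelTwo_var_castSucc_castSucc (i : Fin n) :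
    peelTwo k q n (var k q i.castSucc.castSucc) =
      AdjoinRoot.of _ (AdjoinRoot.of _ (var k q i)) := by
  have h : i.castSucc.castSucc = (Fin.last n).castSucc.succAbove i.castSucc :=
    (Fin.succAbove_of_castSucc_lt _ _ (Fin.castSucc_lt_castSucc_iff.2 i.castSucc_lt_last)).symm
  rw [h, peelTwo, AlgEquiv.trans_apply, peel_var_succAbove]
  simp

/-- The hyperbolic quadratic form `x₀x₁ + ⋯ + x₂ₘ₋₂x₂ₘ₋₁` in the truncated polynomial ring. -/
noncomputable def hyperbolicForm (m : ℕ) : TruncatedPolynomial k q (2 * m) :=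
  ∑ i : Fin m, var k q ⟨2 * i, by omega⟩ * var k q ⟨2 * i + 1, by omega⟩

theorem peelTwo_sum_mul (m : ℕ) :
    peelTwo k q (2 * m) (∑ i : Fin m, var k q ⟨2 * i, by omega⟩ * var k q ⟨2 * i + 1, by omega⟩) =
      AdjoinRoot.of _ (AdjoinRoot.of _ (hyperbolicForm k q m)) := by
  simp only [hyperbolicForm, map_sum, map_mul, ← peelTwo_var_castSucc_castSucc, Fin.castSucc_mk]

theorem peelTwo_hyperbolicForm_succ (m : ℕ) :
    peelTwo k q (2 * m) (hyperbolicForm k q (m + 1)) =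
      AdjoinRoot.of _ (AdjoinRoot.of _ (hyperbolicForm k q m)) +
        AdjoinRoot.root _ * AdjoinRoot.of _ (AdjoinRoot.root _) := by
  calc
    _ = peelTwo k q (2 * m)
          ((∑ i : Fin m, var k q ⟨2 * i, by omega⟩ * var k q ⟨2 * i + 1, by omega⟩) +
            var k q (Fin.last (2 * m)).castSucc * var k q (Fin.last (2 * m + 1))) :=
      congrArg (peelTwo k q (2 * m)) (Fin.sum_univ_castSucc _)
    _ = _ := by
      rw [map_add, map_mul, peelTwo_sum_mul, peelTwo_var_outer, peelTwo_var_inner]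

end CommRing

section Field

variable (k : Type*) [Field k] (q : ℕ)

instance [NeZero q] (n : ℕ) : Nontrivial (TruncatedPolynomial k q n) :=
  (lift (A := k) (fun _ => 0) fun _ => zero_pow (NeZero.ne q)).toRingHom.domain_nontrivial

theorem finrank_eq_pow [NeZero q] (n : ℕ) :
    Module.finrank k (TruncatedPolynomial k q n) = q ^ n := by
  induction n with
  | zero =>
    let e : TruncatedPolynomial k q 0 ≃ₐ[k] k :=
      AlgEquiv.ofAlgHom (lift Fin.elim0 fun i => i.elim0) (Algebra.ofId k _)
        (by ext) (algHom_ext fun i => i.elim0)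
    rw [e.toLinearEquiv.finrank_eq, Module.finrank_self, pow_zero]
  | succ n ih =>
    rw [(peel k q (Fin.last n)).toLinearEquiv.finrank_eq,
      finrank_adjoinRoot_of_monic (Polynomial.monic_X_pow q), Polynomial.natDegree_X_pow, ih,
      pow_succ']

instance [NeZero q] (n : ℕ) : Module.Finite k (TruncatedPolynomial k q n) :=
  Module.finite_of_finrank_pos (by rw [finrank_eq_pow]; exact NeZero.pos _)

theorem peelTwo_hyperbolicForm_succ_pow (p : ℕ) [Fact p.Prime] [CharP k p] (a m : ℕ) :
    peelTwo k q (2 * m) (hyperbolicForm k q (m + 1) ^ p ^ a) =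
      AdjoinRoot.of _ (AdjoinRoot.of _ (hyperbolicForm k q m ^ p ^ a)) +
        AdjoinRoot.root _ ^ p ^ a * AdjoinRoot.of _ (AdjoinRoot.root _) ^ p ^ a := by
  rw [map_pow, peelTwo_hyperbolicForm_succ, add_pow_char_pow_of_algebra k, mul_pow, map_pow,
    map_pow]

theorem hyperbolicForm_pow_eq_zero (p : ℕ) [Fact p.Prime] [CharP k p] (a m : ℕ) :
    hyperbolicForm k (p ^ a) m ^ p ^ a = 0 := by
  refine Finset.sum_induction _ (· ^ p ^ a = 0) (fun x y hx hy => ?_) ?_ fun i _ => ?_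
  · rw [add_pow_char_pow_of_algebra k, hx, hy, add_zero]
  · exact zero_pow (NeZero.ne _)
  · rw [mul_pow, var_pow, zero_mul]

theorem finrank_quotient_hyperbolicForm_pow_succ [CharP k 2] (a m : ℕ) :
    Module.finrank k (TruncatedPolynomial k (2 * 2 ^ a) (2 * (m + 1)) ⧸
        Ideal.span {hyperbolicForm k (2 * 2 ^ a) (m + 1) ^ 2 ^ a}) =
      2 ^ a * 2 ^ a * ((2 * 2 ^ a) ^ (2 * m) +
        2 * Module.finrank k (TruncatedPolynomial k (2 * 2 ^ a) (2 * m) ⧸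
          Ideal.span {hyperbolicForm k (2 * 2 ^ a) m ^ 2 ^ a})) := by
  have hsq : (hyperbolicForm k (2 * 2 ^ a) m ^ 2 ^ a) ^ 2 = 0 := by
    rw [← pow_mul, ← pow_succ, ← pow_succ' 2 a]
    exact hyperbolicForm_pow_eq_zero k 2 (a + 1) m
  rw [← finrank_eq_pow k (2 * 2 ^ a) (2 * m),
    ← AdjoinNilpotent.finrank_quotient_of_add_root_pow_mul_of_root_pow _ hsq]
  exact finrank_quotient_span_singleton_congr (peelTwo k (2 * 2 ^ a) (2 * m))
    (peelTwo_hyperbolicForm_succ_pow k (2 * 2 ^ a) 2 a m)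

theorem two_mul_finrank_quotient_hyperbolicForm_pow [CharP k 2] (a m : ℕ) :
    2 * Module.finrank k (TruncatedPolynomial k (2 * 2 ^ a) (2 * m) ⧸
        Ideal.span {hyperbolicForm k (2 * 2 ^ a) m ^ 2 ^ a}) =
      (2 * 2 ^ a) ^ (2 * m) + (2 * 2 ^ a * 2 ^ a) ^ m := by
  induction m with
  | zero =>
    have hzero : hyperbolicForm k (2 * 2 ^ a) 0 ^ 2 ^ a = 0 := by
      simp [hyperbolicForm]
    rw [hzero, Ideal.span_singleton_zero,
      (AlgEquiv.quotientBot k (TruncatedPolynomial k (2 * 2 ^ a) _)).toLinearEquiv.finrank_eq,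
      finrank_eq_pow]
    ring
  | succ m ih =>
    rw [finrank_quotient_hyperbolicForm_pow_succ, ih]
    ring

end Field

end TruncatedPolynomial

theorem HKfun_eq_finrank_truncatedPolynomial_quotient (k : Type*) [Field k] (n p e : ℕ)
    (f : MvPolynomial (Fin n) k) :
    HKfun k n p e f = Module.finrank k
      (TruncatedPolynomial k (p ^ e) n ⧸ Ideal.span {Ideal.Quotient.mkₐ k _ f}) := by
  rw [HKfun, Ideal.span_union, ← Set.image_singleton, ← Ideal.map_span]
  exact (DoubleQuot.quotQuotEquivQuotSupₐ k _ _).symm.toLinearEquiv.finrank_eq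

open TruncatedPolynomial in
theorem HKfun_sum_mul_add_pow_add_pow (k : Type*) [Field k] (p : ℕ) [Fact p.Prime] [CharP k p]
    (m a : ℕ) {n : ℕ} (hn : p ≤ n) :
    HKfun k (2 * m + 2) p (a + 1)
        ((∑ i : Fin m, X ⟨2 * i, by omega⟩ * X ⟨2 * i + 1, by omega⟩) +
          X ⟨2 * m, by omega⟩ ^ p + X ⟨2 * m + 1, by omega⟩ ^ n) =
      p * (p * p ^ a * Module.finrank k (TruncatedPolynomial k (p * p ^ a) (2 * m) ⧸
        Ideal.span {hyperbolicForm k (p * p ^ a) m ^ p ^ a})) := by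
  rw [HKfun_eq_finrank_truncatedPolynomial_quotient, pow_succ',
    ← AdjoinNilpotent.finrank_quotient_root_pow_add_of_add_root_pow p a hn]
  refine finrank_quotient_span_singleton_congr (peelTwo k (p * p ^ a) (2 * m)) ?_
  rw [map_add (AdjoinRoot.of _), map_pow (AdjoinRoot.of _), ← peelTwo_sum_mul,
    ← peelTwo_var_outer, ← peelTwo_var_inner]
  simp only [map_add, map_sum, map_mul, map_pow]
  rw [add_left_comm, ← add_assoc]
  rfl

/-- Hilbert–Kunz function of the odd-dimensional `A₂` singularity in characteristic 2:
for `d = 2m + 1`, `2^m · HK_e(S_{2,d}) = (2^m + 1) · 2^{d·e}`. -/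
theorem HK_function_A2_char_two_odd (k : Type*) [Field k] [CharP k 2]
    (m : ℕ) (e : ℕ) (he : 1 ≤ e) :
    2 ^ m *
        HKfun k (2 * m + 2) 2 e
          ((∑ i : Fin m,
              (X (⟨2 * i, by omega⟩ : Fin (2 * m + 2)) : MvPolynomial (Fin (2 * m + 2)) k) *
                X (⟨2 * i + 1, by omega⟩ : Fin (2 * m + 2))) +
            X (⟨2 * m, by omega⟩ : Fin (2 * m + 2)) ^ 2 +
            X (⟨2 * m + 1, by omega⟩ : Fin (2 * m + 2)) ^ 3) =
      (2 ^ m + 1) * 2 ^ ((2 * m + 1) * e) := by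
  obtain ⟨a, rfl⟩ := Nat.exists_eq_add_of_le' he
  rw [HKfun_sum_mul_add_pow_add_pow k 2 m a (Nat.le_succ 2), mul_left_comm 2,
    TruncatedPolynomial.two_mul_finrank_quotient_hyperbolicForm_pow, mul_comm _ (a + 1), pow_mul 2,
    pow_succ' 2 a]
  ring
end

section
/- Let k be a field of characteristic 2 and d ≥ 1. The real sequence e ↦ dim_k( k[x_0,…,x_d]/(x_0^{2^e},…,x_d^{2^e}, P_d) ) / 2^{d·e} converges as e → ∞; its limit (the Hilbert–Kunz multiplicity of the A_2 singularity in characteristic 2) equals (2^{m+1} + 1)/(2^{m+1} − 1) when d = 2m is even, and equals (2^m + 1)/2^m when d = 2m + 1 is odd. -/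
open MvPolynomial

/-- The defining equation `P_d` of the `A₂` singularity in characteristic 2:
`P_d = x_0x_1 + ⋯ + x_{d−3}x_{d−2} + x_{d−1}² + x_d³` for `d` odd and
`P_d = x_0x_1 + ⋯ + x_{d−2}x_{d−1} + x_d³` for `d` even. -/
noncomputable def A2poly (k : Type*) [Field k] (d : ℕ) : MvPolynomial (Fin (d + 1)) k :=
  (∑ i : Fin (d / 2),
      X (⟨2 * i, by omega⟩ : Fin (d + 1)) * X (⟨2 * i + 1, by omega⟩ : Fin (d + 1))) +
    (if Odd d then X (⟨d - 1, by omega⟩ : Fin (d + 1)) ^ 2 else 0) +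
    X (⟨d, by omega⟩ : Fin (d + 1)) ^ 3

/-!
The Hilbert–Kunz function of `f` is the number of Jordan blocks of multiplication by `f` on
`k[xᵢ] / (xᵢ ^ 2 ^ e)`. A sum of polynomials in disjoint sets of variables acts as
`S ⊗ 1 + 1 ⊗ T` on a tensor product, and in characteristic 2 the Weyr characteristic of such an
operator is the convolution, for bitwise xor, of those of `S` and `T` (Han–Monsky); for single
Jordan blocks this is the computation of the colength of `(x ^ a, y ^ b, (x + y) ^ c)` by
reflecting two of the exponents in a power of `2`. Characters of xor turn these convolutions into
products. The Weyr characteristics of `x * y` and `x ^ 2` are combinations of the constant `1` and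
of the Rademacher characters `i ↦ (-1) ^ (bit b of i)`, so only the sums of that of `x ^ 3` against
these are needed.
-/

namespace A2HK

section Colength

variable (k : Type*) {R : Type*} [CommRing k] [CommRing R] [Algebra k R]

/-- The length over `k` of the quotient `R ⧸ I`, which is its dimension when `k` is a field. -/
noncomputable def colength (I : Ideal R) : ℕ∞ :=
  Module.length k (R ⧸ I)

@[simp]
lemma colength_top : colength k (⊤ : Ideal R) = 0 :=
  have : Subsingleton (R ⧸ (⊤ : Ideal R)) := Ideal.Quotient.subsingleton_iff.2 rfl
  Module.length_eq_zero

lemma colength_eq_colength_colon_add (I : Ideal R) (f : R) :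
    colength k I = colength k (I.colon {f}) + colength k (I ⊔ Ideal.span {f}) := by
  have hle : (I.colon {f}).restrictScalars k ≤
      (I.restrictScalars k).comap (LinearMap.mulRight k f) := fun x hx ↦
    Submodule.mem_colon_singleton.1 hx
  let mulF : (R ⧸ I.colon {f}) →ₗ[k] R ⧸ I :=
    ((I.colon {f}).restrictScalars k).mapQ (I.restrictScalars k) (LinearMap.mulRight k f) hle
  have mulF_mk (x : R) : mulF (Ideal.Quotient.mk _ x) = Ideal.Quotient.mk I (x * f) := rfl
  refine Module.length_eq_add_of_exact mulF
    (Ideal.Quotient.factorₐ k (le_sup_left : I ≤ I ⊔ Ideal.span {f})).toLinearMap ?_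
    (Ideal.Quotient.factor_surjective le_sup_left) ?_
  · rw [injective_iff_map_eq_zero]
    intro y hy
    obtain ⟨x, rfl⟩ := Ideal.Quotient.mk_surjective y
    rw [mulF_mk, Ideal.Quotient.eq_zero_iff_mem] at hy
    exact Ideal.Quotient.eq_zero_iff_mem.2 (Submodule.mem_colon_singleton.2 hy)
  · intro y
    obtain ⟨x, rfl⟩ := Ideal.Quotient.mk_surjective y
    change Ideal.Quotient.mk (I ⊔ Ideal.span {f}) x = 0 ↔ _
    rw [Ideal.Quotient.eq_zero_iff_mem, sup_comm, Ideal.mem_span_singleton_sup]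
    constructor
    · rintro ⟨w, b, hb, rfl⟩
      exact ⟨Ideal.Quotient.mk _ w, by
        rw [mulF_mk, map_add, Ideal.Quotient.eq_zero_iff_mem.2 hb, add_zero]⟩
    · rintro ⟨z, hz⟩
      obtain ⟨w, rfl⟩ := Ideal.Quotient.mk_surjective z
      rw [mulF_mk, eq_comm, Ideal.Quotient.eq] at hz
      exact ⟨w, _, hz, by ring⟩

variable [DecompositionMonoid R]

lemma colon_span_singleton_mul_sup {x c : R} (h : IsRelPrime c x) {J : Ideal R} (hc : c ∈ J) :
    (Ideal.span {x} * J ⊔ Ideal.span {c}).colon {x} = J := by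
  ext z
  rw [Submodule.mem_colon_singleton, smul_eq_mul, sup_comm, Ideal.mem_span_singleton_sup]
  constructor
  · rintro ⟨m, _, hxw, hz⟩
    obtain ⟨w, hw, rfl⟩ := Ideal.mem_span_singleton_mul.1 hxw
    have hdvd : c ∣ (z - w) * x := ⟨m, by linear_combination -hz⟩
    rw [← sub_add_cancel z w]
    exact J.add_mem (Ideal.mem_of_dvd J (h.dvd_of_dvd_mul_right hdvd) hc) hw
  · intro hz
    exact ⟨0, z * x, mul_comm x z ▸ Ideal.mul_mem_mul (Ideal.mem_span_singleton_self x) hz,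
      by ring⟩

lemma colength_span_singleton_mul_sup {x c : R} (h : IsRelPrime c x) {J : Ideal R} (hc : c ∈ J) :
    colength k (Ideal.span {x} * J ⊔ Ideal.span {c}) =
      colength k J + colength k (Ideal.span {x, c}) := by
  have hsup : Ideal.span {x} * J ⊔ Ideal.span {c} ⊔ Ideal.span {x} = Ideal.span {x, c} := by
    rw [Ideal.span_insert, sup_right_comm,
      sup_eq_right.2 (Ideal.mul_le_left : Ideal.span {x} * J ≤ _)]
  rw [colength_eq_colength_colon_add k _ x, colon_span_singleton_mul_sup h hc, hsup]

lemma colength_span_mul_mul {x c : R} (h : IsRelPrime c x) (u v : R) :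
    colength k (Ideal.span {x * u, x * v, c}) =
      colength k (Ideal.span {u, v, c}) + colength k (Ideal.span {x, c}) := by
  rw [← colength_span_singleton_mul_sup k h (Ideal.subset_span (by simp))]
  congr 1
  simp only [Ideal.span_insert, Ideal.mul_sup, Ideal.span_singleton_mul_span_singleton, sup_assoc]
  rw [sup_eq_right.2 (Ideal.span_singleton_le_span_singleton.2 (Dvd.intro_left x rfl))]

lemma colength_span_mul {x c : R} (h : IsRelPrime c x) (u : R) :
    colength k (Ideal.span {x * u, c}) =
      colength k (Ideal.span {u, c}) + colength k (Ideal.span {x, c}) := by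
  simpa [Set.insert_comm _ (0 : R)] using colength_span_mul_mul k h u 0

lemma colength_span_pow_left {u v : R} (h : IsRelPrime u v) (a : ℕ) :
    colength k (Ideal.span {u ^ a, v}) = a * colength k (Ideal.span {u, v}) := by
  induction a with
  | zero => simp [Ideal.span_insert, Ideal.span_singleton_one]
  | succ a ih => rw [pow_succ', colength_span_mul k h.symm, ih, Nat.cast_succ, add_mul, one_mul]

lemma colength_span_pow_pow {u v : R} (h : IsRelPrime u v) (a b : ℕ) :
    colength k (Ideal.span {u ^ a, v ^ b}) = a * b * colength k (Ideal.span {u, v}) := by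
  rw [colength_span_pow_left k h.pow_right, Set.pair_comm, colength_span_pow_left k h.symm,
    Set.pair_comm, mul_assoc]

lemma colength_span_pow_pow_mul_pow {u v : R} (h : IsRelPrime u v) {q j : ℕ} (hj : j ≤ q) :
    colength k (Ideal.span {u ^ q, v ^ q, (u * v) ^ j}) =
      (j * (2 * q - j) : ℕ) * colength k (Ideal.span {u, v}) := by
  have hfactor : Ideal.span {u ^ q, v ^ q, (u * v) ^ j} =
      Ideal.span {u ^ j * u ^ (q - j), u ^ j * v ^ j, v ^ q} := by
    rw [pow_mul_pow_sub u hj, mul_pow, Set.pair_comm]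
  have habsorb : Ideal.span {u ^ (q - j), v ^ j, v ^ q} = Ideal.span {u ^ (q - j), v ^ j} := by
    rw [Ideal.span_insert, Ideal.span_insert (v ^ j), Ideal.span_insert (u ^ (q - j)),
      sup_eq_left.2 (Ideal.span_singleton_le_span_singleton.2 (pow_dvd_pow v hj))]
  have hcount : (q - j) * j + j * q = j * (2 * q - j) := by
    obtain ⟨c, rfl⟩ := Nat.exists_eq_add_of_le hj
    rw [Nat.add_sub_cancel_left, show 2 * (j + c) - j = j + 2 * c by omega]
    ring
  rw [hfactor, colength_span_mul_mul k h.symm.pow, habsorb, colength_span_pow_pow k h,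
    colength_span_pow_pow k h, ← add_mul, ← hcount]
  push_cast
  rfl

end Colength

section Triple

/-- Three elements of a `k`-algebra that sum to zero, any two of which are coprime and generate
an ideal of colength one: the model is `x, y, -(x + y)` in `k[x, y]`. -/
structure IsLinearTriple (k : Type*) {R : Type*} [CommRing k] [CommRing R] [Algebra k R]
    (s t r : R) : Prop where
  add_add_eq_zero : s + t + r = 0
  isRelPrime : IsRelPrime s t
  colength_eq_one : colength k (Ideal.span {s, t}) = 1

namespace IsLinearTriple

variable {k R : Type*} [CommRing k] [CommRing R] [Algebra k R] {s t r : R}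

lemma rotate (h : IsLinearTriple k s t r) : IsLinearTriple k t r s := by
  have hr : r = -(s + t * 1) := by linear_combination h.add_add_eq_zero
  have hspan : Ideal.span {t, r} = Ideal.span {s, t} := by
    apply le_antisymm <;> rw [Ideal.span_le] <;> rintro x (rfl | rfl)
    · exact Ideal.subset_span (by simp)
    · exact Ideal.mem_span_pair.2 ⟨-1, -1, by rw [hr]; ring⟩
    · exact Ideal.mem_span_pair.2 ⟨-1, -1, by rw [hr]; ring⟩
    · exact Ideal.subset_span (by simp)
  refine ⟨by linear_combination h.add_add_eq_zero, ?_, hspan ▸ h.colength_eq_one⟩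
  rw [hr, IsRelPrime.neg_right_iff]
  exact h.isRelPrime.symm.add_mul_left_right 1

lemma pow_expChar_pow_mem (h : IsLinearTriple k s t r) (p : ℕ) [ExpChar R p] (e : ℕ)
    {I : Ideal R} (hs : s ^ p ^ e ∈ I) (ht : t ^ p ^ e ∈ I) : r ^ p ^ e ∈ I := by
  have hsum : s ^ p ^ e + t ^ p ^ e + r ^ p ^ e = 0 := by
    rw [← add_pow_expChar_pow, ← add_pow_expChar_pow, h.add_add_eq_zero,
      zero_pow (pow_ne_zero e (expChar_pos R p).ne')]
  rw [show r ^ p ^ e = -(s ^ p ^ e + t ^ p ^ e) by linear_combination hsum]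
  exact I.neg_mem (I.add_mem hs ht)

variable [DecompositionMonoid R]

lemma colength_pow_pow (h : IsLinearTriple k s t r) (a b : ℕ) :
    colength k (Ideal.span {s ^ a, t ^ b}) = a * b := by
  rw [colength_span_pow_pow k h.isRelPrime, h.colength_eq_one, mul_one]

lemma colength_of_le_of_le (h : IsLinearTriple k s t r) (p : ℕ) [ExpChar R p] {e a b c : ℕ}
    (ha : a ≤ p ^ e) (hb : b ≤ p ^ e) (hc : p ^ e ≤ c) :
    colength k (Ideal.span {s ^ a, t ^ b, r ^ c}) = a * b := by
  have hmem : r ^ c ∈ Ideal.span {s ^ a, t ^ b} := by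
    refine Ideal.pow_mem_of_pow_mem _ (h.pow_expChar_pow_mem p e ?_ ?_) hc
    · exact Ideal.pow_mem_of_pow_mem _ (Ideal.subset_span (by simp)) ha
    · exact Ideal.pow_mem_of_pow_mem _ (Ideal.subset_span (by simp)) hb
  rw [show ({s ^ a, t ^ b, r ^ c} : Set R) = insert (r ^ c) {s ^ a, t ^ b} by
      ext; simp only [Set.mem_insert_iff, Set.mem_singleton_iff]; tauto,
    Ideal.span, Submodule.span_insert_eq_span hmem, h.colength_pow_pow]

lemma colength_reflect (h : IsLinearTriple k s t r) (p : ℕ) [ExpChar R p] {e a a' b b' c : ℕ}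
    (ha : a' + a = p ^ e) (hb : b + b' = p ^ e) (hc : c ≤ p ^ e) :
    colength k (Ideal.span {s ^ a, t ^ b, r ^ c}) + a' * c =
      colength k (Ideal.span {s ^ a', t ^ b', r ^ c}) + b * c := by
  have hrs : IsRelPrime (r ^ c) (s ^ a') := h.rotate.rotate.isRelPrime.pow
  have hrt : IsRelPrime (r ^ c) (t ^ b) := h.rotate.isRelPrime.symm.pow
  have hspan : Ideal.span {s ^ a' * s ^ a, s ^ a' * t ^ b, r ^ c} =
      Ideal.span {t ^ b * s ^ a', t ^ b * t ^ b', r ^ c} := by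
    rw [← pow_add, ← pow_add, ha, hb, mul_comm (t ^ b)]
    apply le_antisymm <;> rw [Ideal.span_le] <;> rintro x (rfl | rfl | rfl)
    · refine h.rotate.pow_expChar_pow_mem p e (Ideal.subset_span (by simp)) ?_
      exact Ideal.pow_mem_of_pow_mem _ (Ideal.subset_span (by simp)) hc
    · exact Ideal.subset_span (by simp)
    · exact Ideal.subset_span (by simp)
    · exact Ideal.subset_span (by simp)
    · refine h.rotate.rotate.pow_expChar_pow_mem p e ?_ (Ideal.subset_span (by simp))
      exact Ideal.pow_mem_of_pow_mem _ (Ideal.subset_span (by simp)) hc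
    · exact Ideal.subset_span (by simp)
  calc
    _ = colength k (Ideal.span {s ^ a' * s ^ a, s ^ a' * t ^ b, r ^ c}) := by
      rw [colength_span_mul_mul k hrs, Set.pair_comm (s ^ a') (r ^ c),
        h.rotate.rotate.colength_pow_pow, mul_comm (c : ℕ∞)]
    _ = _ := by
      rw [hspan, colength_span_mul_mul k hrt, h.rotate.colength_pow_pow]

end IsLinearTriple

end Triple

section NimCount

open Finset

/-- The number of triples `(i, j, l)` with `i < a`, `j < b`, `l < c` and `i ^^^ j = l`. -/
def nimCount (a b c : ℕ) : ℕ :=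
  ∑ i ∈ range a, ∑ j ∈ range b, if i ^^^ j < c then 1 else 0

lemma nimCount_rotate (a b c : ℕ) : nimCount a b c = nimCount b c a := by
  rw [nimCount, sum_comm]
  refine sum_congr rfl fun j _ ↦ ?_
  rw [← card_filter, ← card_filter]
  refine card_nbij' (· ^^^ j) (j ^^^ ·) ?_ ?_ ?_ ?_ <;> intro i hi <;>
    simp_all [Nat.xor_comm]

lemma nimCount_add_left (a a' b c : ℕ) :
    nimCount (a + a') b c =
      nimCount a b c + ∑ i ∈ range a', ∑ j ∈ range b, if (a + i) ^^^ j < c then 1 else 0 :=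
  sum_range_add _ a a'

lemma nimCount_add_right (a b b' c : ℕ) :
    nimCount a (b + b') c =
      nimCount a b c + ∑ i ∈ range a, ∑ j ∈ range b', if i ^^^ (b + j) < c then 1 else 0 := by
  simp only [nimCount, sum_range_add, sum_add_distrib]

lemma nimCount_of_le_of_le {e a b c : ℕ} (ha : a ≤ 2 ^ e) (hb : b ≤ 2 ^ e) (hc : 2 ^ e ≤ c) :
    nimCount a b c = a * b := by
  have hlt (i) (hi : i ∈ range a) (j) (hj : j ∈ range b) : i ^^^ j < c :=
    (Nat.xor_lt_two_pow ((mem_range.1 hi).trans_le ha) ((mem_range.1 hj).trans_le hb)).trans_le hc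
  rw [nimCount, sum_congr rfl fun i hi ↦ sum_congr rfl fun j hj ↦ if_pos (hlt i hi j hj)]
  simp

lemma two_pow_sub_succ_xor {e i j : ℕ} (hi : i < 2 ^ e) (hj : j < 2 ^ e) :
    (2 ^ e - (i + 1)) ^^^ j = i ^^^ (2 ^ e - (j + 1)) := by
  refine Nat.eq_of_testBit_eq fun n ↦ ?_
  rw [Nat.testBit_xor, Nat.testBit_xor, Nat.testBit_two_pow_sub_succ hi,
    Nat.testBit_two_pow_sub_succ hj]
  rcases lt_or_ge n e with hn | hn
  · simp [hn]
  · have h2 := Nat.pow_le_pow_right two_pos hn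
    simp [hn.not_gt, Nat.testBit_lt_two_pow (hi.trans_le h2),
      Nat.testBit_lt_two_pow (hj.trans_le h2)]

lemma nimCount_reflect {e a a' b b' c : ℕ} (ha : a' + a = 2 ^ e) (hb : b + b' = 2 ^ e)
    (hc : c ≤ 2 ^ e) :
    nimCount a b c + a' * c = nimCount a' b' c + b * c := by
  have hcorner : (∑ i ∈ range a, ∑ j ∈ range b', if i ^^^ (b + j) < c then 1 else 0) =
      ∑ i ∈ range a, ∑ j ∈ range b', if (a' + i) ^^^ j < c then 1 else 0 := by
    rw [← sum_range_reflect]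
    refine sum_congr rfl fun i hi ↦ ?_
    rw [← sum_range_reflect]
    refine sum_congr rfl fun j hj ↦ ?_
    rw [mem_range] at hi hj
    rw [show a - 1 - i = 2 ^ e - (a' + i + 1) by omega,
      show b + (b' - 1 - j) = 2 ^ e - (j + 1) by omega,
      two_pow_sub_succ_xor (by omega) (by omega)]
    congr 3
    omega
  have hleft := nimCount_add_left a' a b' c
  have hright := nimCount_add_right a b b' c
  rw [ha, ← nimCount_rotate, ← nimCount_rotate, nimCount_of_le_of_le (e := e) (by omega) hc le_rfl]
    at hleft
  rw [hb, nimCount_rotate, nimCount_rotate, nimCount_of_le_of_le (e := e) hc (by omega) le_rfl]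
    at hright
  have hsub : a * c + a' * c = b * c + b' * c := by rw [← add_mul, ← add_mul, hb, add_comm a, ha]
  linarith

namespace IsLinearTriple

variable {k R : Type*} [CommRing k] [CommRing R] [Algebra k R] [DecompositionMonoid R] [CharP R 2]
  {s t r : R}

lemma colength_eq_nimCount_of_le_of_le (h : IsLinearTriple k s t r) {e a b c : ℕ}
    (ha : a ≤ 2 ^ e) (hb : b ≤ 2 ^ e) (hc : 2 ^ e ≤ c) :
    colength k (Ideal.span {s ^ a, t ^ b, r ^ c}) = nimCount a b c := by
  have : ExpChar R 2 := .prime Nat.prime_two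
  rw [h.colength_of_le_of_le 2 ha hb hc, nimCount_of_le_of_le ha hb hc, Nat.cast_mul]

lemma colength_eq_nimCount_of_reflect (h : IsLinearTriple k s t r) {e a a' b b' c : ℕ}
    (ha : a' + a = 2 ^ e) (hb : b + b' = 2 ^ e) (hc : c ≤ 2 ^ e)
    (heq : colength k (Ideal.span {s ^ a', t ^ b', r ^ c}) = nimCount a' b' c) :
    colength k (Ideal.span {s ^ a, t ^ b, r ^ c}) = nimCount a b c := by
  have : ExpChar R 2 := .prime Nat.prime_two
  have hlen := h.colength_reflect 2 ha hb hc
  rw [heq] at hlen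
  have hsum : colength k (Ideal.span {s ^ a, t ^ b, r ^ c}) + (a' * c : ℕ) =
      nimCount a b c + (a' * c : ℕ) := by
    rw [Nat.cast_mul, hlen]
    exact_mod_cast (nimCount_reflect ha hb hc).symm
  exact ENat.add_left_injective_of_ne_top (ENat.natCast_ne_top _) hsum

theorem colength_eq_nimCount (h : IsLinearTriple k s t r) {e a b c : ℕ}
    (ha : a ≤ 2 ^ e) (hb : b ≤ 2 ^ e) (hc : c ≤ 2 ^ e) :
    colength k (Ideal.span {s ^ a, t ^ b, r ^ c}) = nimCount a b c := by
  induction e generalizing a b c s t r with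
  | zero =>
    obtain rfl | hc' := Nat.eq_zero_or_pos c
    · simp [nimCount, Ideal.span_insert, Ideal.span_singleton_one]
    · exact h.colength_eq_nimCount_of_le_of_le ha hb ((pow_zero 2).trans_le hc')
  | succ e ih =>
    have hbelow {s t r : R} (h : IsLinearTriple k s t r) {a b c : ℕ} (ha : a ≤ 2 ^ e)
        (hb : b ≤ 2 ^ e) : colength k (Ideal.span {s ^ a, t ^ b, r ^ c}) = nimCount a b c :=
      (le_total c (2 ^ e)).elim (ih h ha hb) (h.colength_eq_nimCount_of_le_of_le ha hb)
    have hsame {s t r : R} (h : IsLinearTriple k s t r) {a b c : ℕ} (ha : a ≤ 2 ^ (e + 1))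
        (hb : b ≤ 2 ^ (e + 1)) (hc : c ≤ 2 ^ (e + 1)) (hab : a ≤ 2 ^ e ↔ b ≤ 2 ^ e) :
        colength k (Ideal.span {s ^ a, t ^ b, r ^ c}) = nimCount a b c := by
      by_cases ha' : a ≤ 2 ^ e
      · exact hbelow h ha' (hab.1 ha')
      · refine h.colength_eq_nimCount_of_reflect (Nat.sub_add_cancel ha) (Nat.add_sub_cancel' hb)
          hc (hbelow h ?_ ?_) <;> omega
    have hrotate (x y z : R) : ({x, y, z} : Set R) = {y, z, x} := by
      rw [Set.insert_comm, Set.pair_comm]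
    -- Two of the three exponents lie on the same side of `2 ^ e`.
    by_cases hab : a ≤ 2 ^ e ↔ b ≤ 2 ^ e
    · exact hsame h ha hb hc hab
    by_cases hbc : b ≤ 2 ^ e ↔ c ≤ 2 ^ e
    · rw [hrotate, nimCount_rotate]
      exact hsame h.rotate hb hc ha hbc
    · rw [hrotate, hrotate, nimCount_rotate, nimCount_rotate]
      exact hsame h.rotate.rotate hc ha hb (by tauto)

end IsLinearTriple

end NimCount

section Weyr

open TensorProduct Module

variable {k : Type*} [Field k]
variable {V V' W W' : Type*} [AddCommGroup V] [Module k V] [AddCommGroup V'] [Module k V']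
  [AddCommGroup W] [Module k W] [AddCommGroup W'] [Module k W']

/-- The Weyr characteristic of an endomorphism `T`: if `T` is nilpotent, `weyr T i` is the number
of its Jordan blocks of size greater than `i`. It is integer valued so that it can be multiplied by
signs. -/
noncomputable def weyr (T : V →ₗ[k] V) (i : ℕ) : ℤ :=
  finrank k (LinearMap.ker (T ^ (i + 1))) - finrank k (LinearMap.ker (T ^ i))

lemma sum_range_weyr (T : V →ₗ[k] V) (j : ℕ) :
    ∑ i ∈ Finset.range j, weyr T i = finrank k (LinearMap.ker (T ^ j)) := by
  have hzero : finrank k (LinearMap.ker (T ^ 0)) = 0 := by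
    rw [pow_zero, Module.End.one_eq_id, LinearMap.ker_id, finrank_bot]
  simp only [weyr]
  rw [Finset.sum_range_sub fun i ↦ (finrank k (LinearMap.ker (T ^ i)) : ℤ), hzero, Nat.cast_zero,
    sub_zero]

/-- Endomorphisms of possibly different spaces that correspond to each other under some linear
equivalence. -/
def AreConjugate (T : V →ₗ[k] V) (S : W →ₗ[k] W) : Prop :=
  ∃ φ : V ≃ₗ[k] W, S ∘ₗ φ.toLinearMap = φ.toLinearMap ∘ₗ T

lemma AreConjugate.weyr_eq {T : V →ₗ[k] V} {S : W →ₗ[k] W} (h : AreConjugate T S) :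
    weyr T = weyr S := by
  obtain ⟨φ, hφ⟩ := h
  have hker (j : ℕ) : finrank k (LinearMap.ker (T ^ j)) = finrank k (LinearMap.ker (S ^ j)) := by
    have hpow := Module.End.commute_pow_left_of_commute hφ j
    rw [← φ.ker_comp (T ^ j), ← hpow, LinearMap.ker_comp, Submodule.comap_equiv_eq_map_symm]
    exact LinearEquiv.finrank_map_eq φ.symm _
  funext i
  rw [weyr, weyr, hker, hker]

lemma AreConjugate.pow_eq_zero {T : V →ₗ[k] V} {S : W →ₗ[k] W} (h : AreConjugate T S) {q : ℕ}
    (hT : T ^ q = 0) : S ^ q = 0 := by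
  obtain ⟨φ, hφ⟩ := h
  have hpow := Module.End.commute_pow_left_of_commute hφ q
  rw [hT, LinearMap.comp_zero] at hpow
  exact (LinearMap.cancel_right φ.surjective).1 (by rw [hpow, LinearMap.zero_comp])

section Pi

variable {ι : Type*} {U : ι → Type*} [∀ i, AddCommGroup (U i)] [∀ i, Module k (U i)]

lemma piMap_pow (S : ∀ i, U i →ₗ[k] U i) (j : ℕ) :
    LinearMap.piMap S ^ j = LinearMap.piMap fun i ↦ S i ^ j := by
  induction j with
  | zero => rfl
  | succ j ih => simp only [pow_succ, ih]; rfl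

lemma finrank_ker_piMap [Fintype ι] [∀ i, Module.Finite k (U i)] (S : ∀ i, U i →ₗ[k] U i) :
    finrank k (LinearMap.ker (LinearMap.piMap S)) = ∑ i, finrank k (LinearMap.ker (S i)) := by
  have e : LinearMap.ker (LinearMap.piMap S) ≃ₗ[k] ∀ i, LinearMap.ker (S i) :=
    { toFun := fun v i ↦ ⟨v.1 i, congrFun (LinearMap.mem_ker.1 v.2) i⟩
      invFun := fun w ↦ ⟨fun i ↦ w i, funext fun i ↦ (w i).2⟩
      map_add' := fun _ _ ↦ rfl
      map_smul' := fun _ _ ↦ rfl }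
  rw [e.finrank_eq, finrank_pi_fintype]

lemma weyr_piMap [Fintype ι] [∀ i, Module.Finite k (U i)] (S : ∀ i, U i →ₗ[k] U i) (j : ℕ) :
    weyr (LinearMap.piMap S) j = ∑ i, weyr (S i) j := by
  rw [weyr, piMap_pow, piMap_pow, finrank_ker_piMap, finrank_ker_piMap, Nat.cast_sum,
    Nat.cast_sum, ← Finset.sum_sub_distrib]
  rfl

end Pi

/-- The operator `S ⊗ 1 + 1 ⊗ T`. -/
noncomputable def tensorSum (S : V →ₗ[k] V) (T : W →ₗ[k] W) : V ⊗[k] W →ₗ[k] V ⊗[k] W :=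
  TensorProduct.map S LinearMap.id + TensorProduct.map LinearMap.id T

@[simp]
lemma tensorSum_tmul (S : V →ₗ[k] V) (T : W →ₗ[k] W) (v : V) (w : W) :
    tensorSum S T (v ⊗ₜ w) = S v ⊗ₜ w + v ⊗ₜ T w := rfl

lemma AreConjugate.tensorSum {S : V →ₗ[k] V} {S' : V' →ₗ[k] V'} {T : W →ₗ[k] W}
    {T' : W' →ₗ[k] W'} (hS : AreConjugate S S') (hT : AreConjugate T T') :
    AreConjugate (tensorSum S T) (tensorSum S' T') := by
  obtain ⟨φ, hφ⟩ := hS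
  obtain ⟨ψ, hψ⟩ := hT
  refine ⟨TensorProduct.congr φ ψ, TensorProduct.ext' fun v w ↦ ?_⟩
  have hv : S' (φ v) = φ (S v) := LinearMap.congr_fun hφ v
  have hw : T' (ψ w) = ψ (T w) := LinearMap.congr_fun hψ w
  simp [hv, hw]

lemma areConjugate_tensorSum_comm (S : V →ₗ[k] V) (T : W →ₗ[k] W) :
    AreConjugate (tensorSum S T) (tensorSum T S) :=
  ⟨TensorProduct.comm k V W, TensorProduct.ext' fun v w ↦ by simp [add_comm]⟩

section Pi

variable {ι : Type*} [Fintype ι] {U : ι → Type*} [∀ i, AddCommGroup (U i)] [∀ i, Module k (U i)]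
  [∀ i, Module.Finite k (U i)]

lemma weyr_tensorSum_piMap_right [Module.Finite k V] (S : V →ₗ[k] V) (T : ∀ i, U i →ₗ[k] U i)
    (j : ℕ) :
    weyr (tensorSum S (LinearMap.piMap T)) j = ∑ i, weyr (tensorSum S (T i)) j := by
  classical
  have hconj : AreConjugate (tensorSum S (LinearMap.piMap T))
      (LinearMap.piMap fun i ↦ tensorSum S (T i)) :=
    ⟨TensorProduct.piRight k k V U, TensorProduct.ext' fun v w ↦ funext fun i ↦ by simp⟩
  rw [hconj.weyr_eq, weyr_piMap]

lemma weyr_tensorSum_piMap_left [Module.Finite k W] (S : ∀ i, U i →ₗ[k] U i) (T : W →ₗ[k] W)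
    (j : ℕ) :
    weyr (tensorSum (LinearMap.piMap S) T) j = ∑ i, weyr (tensorSum (S i) T) j := by
  rw [(areConjugate_tensorSum_comm _ T).weyr_eq, weyr_tensorSum_piMap_right]
  exact Finset.sum_congr rfl fun i _ ↦ by rw [(areConjugate_tensorSum_comm _ T).weyr_eq]

end Pi

lemma finrank_ker_mulLeft_mk_pow {R : Type*} [CommRing R] [Algebra k R] (I : Ideal R)
    [Module.Finite k (R ⧸ I)] (a : R) (j : ℕ) :
    (finrank k (LinearMap.ker (LinearMap.mulLeft k (Ideal.Quotient.mk I a) ^ j)) : ℕ∞) =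
      colength k (I ⊔ Ideal.span {a ^ j}) := by
  rw [LinearMap.pow_mulLeft, ← map_pow]
  set T := LinearMap.mulLeft k (Ideal.Quotient.mk I (a ^ j)) with hT
  have hrange : LinearMap.range T =
      ((Ideal.span {a ^ j}).map (Ideal.Quotient.mk I)).restrictScalars k := by
    ext y
    simp [hT, Ideal.map_span, Ideal.mem_span_singleton, dvd_def, eq_comm]
  have hker : finrank k (LinearMap.ker T) = finrank k ((R ⧸ I) ⧸ LinearMap.range T) := by
    have h₁ := (LinearMap.range T).finrank_quotient_add_finrank
    have h₂ := T.finrank_range_add_finrank_ker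
    omega
  let e : ((R ⧸ I) ⧸ LinearMap.range T) ≃ₗ[k] R ⧸ I ⊔ Ideal.span {a ^ j} :=
    (Submodule.quotEquivOfEq _ _ hrange).trans
      (DoubleQuot.quotQuotEquivQuotSupₐ k I (Ideal.span {a ^ j})).toLinearEquiv
  rw [hker, ← length_eq_finrank, e.length_eq, colength]

end Weyr

section TruncAlgebra

open TensorProduct

section CommRing

variable (k : Type*) [CommRing k] {σ τ : Type*}

/-- The ideal of `k[xᵢ : i ∈ σ]` generated by the pure powers `xᵢ ^ n i`. -/
noncomputable def powerIdeal (n : σ → ℕ) : Ideal (MvPolynomial σ k) :=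
  Ideal.span (Set.range fun i ↦ X i ^ n i)

/-- The truncated polynomial algebra `k[xᵢ : i ∈ σ] / (xᵢ ^ n i : i ∈ σ)`. -/
abbrev TruncAlgebra (n : σ → ℕ) : Type _ :=
  MvPolynomial σ k ⧸ powerIdeal k n

namespace TruncAlgebra

variable {k}

/-- The class of a polynomial in a truncated polynomial algebra. -/
noncomputable def mk (n : σ → ℕ) : MvPolynomial σ k →ₐ[k] TruncAlgebra k n :=
  Ideal.Quotient.mkₐ k (powerIdeal k n)

lemma mk_surjective (n : σ → ℕ) : Function.Surjective (mk (k := k) n) :=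
  Ideal.Quotient.mkₐ_surjective k _

lemma mk_X_pow (n : σ → ℕ) (i : σ) : mk n (X i : MvPolynomial σ k) ^ n i = 0 := by
  rw [← map_pow]
  exact Ideal.Quotient.eq_zero_iff_mem.2 (Ideal.subset_span ⟨i, rfl⟩)

lemma algHom_ext {n : σ → ℕ} {A : Type*} [Semiring A] [Algebra k A]
    {f g : TruncAlgebra k n →ₐ[k] A} (h : ∀ i, f (mk n (X i)) = g (mk n (X i))) : f = g :=
  Ideal.Quotient.algHom_ext _ (MvPolynomial.algHom_ext h)

/-- The universal property of a truncated polynomial algebra. -/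
noncomputable def lift {n : σ → ℕ} {A : Type*} [CommRing A] [Algebra k A] (a : σ → A)
    (ha : ∀ i, a i ^ n i = 0) : TruncAlgebra k n →ₐ[k] A :=
  Ideal.Quotient.liftₐ _ (aeval a) fun f hf ↦ by
    have hle : powerIdeal k n ≤ RingHom.ker (aeval a : MvPolynomial σ k →ₐ[k] A) := by
      rw [powerIdeal, Ideal.span_le]
      rintro _ ⟨i, rfl⟩
      simp [ha]
    exact hle hf

lemma lift_mk_X {n : σ → ℕ} {A : Type*} [CommRing A] [Algebra k A] (a : σ → A)
    (ha : ∀ i, a i ^ n i = 0) (i : σ) : lift a ha (mk n (X i : MvPolynomial σ k)) = a i :=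
  aeval_X a i

/-- The map of truncated polynomial algebras induced by a map of the sets of variables. -/
noncomputable def rename (f : σ → τ) (n : τ → ℕ) : TruncAlgebra k (n ∘ f) →ₐ[k] TruncAlgebra k n :=
  lift (fun i ↦ mk n (X (f i))) fun i ↦ mk_X_pow n (f i)

lemma rename_mk_X (f : σ → τ) (n : τ → ℕ) (i : σ) :
    rename f n (mk (n ∘ f) (X i : MvPolynomial σ k)) = mk n (X (f i)) :=
  lift_mk_X _ _ i

lemma rename_mk (f : σ → τ) (n : τ → ℕ) (g : MvPolynomial σ k) :
    rename f n (mk (n ∘ f) g) = mk n (MvPolynomial.rename f g) := by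
  have hcomp : (rename f n).comp (mk (k := k) (n ∘ f)) = (mk n).comp (MvPolynomial.rename f) :=
    MvPolynomial.algHom_ext fun i ↦ by simp [rename_mk_X]
  exact AlgHom.congr_fun hcomp g

/-- Renaming the variables of a truncated polynomial algebra along a bijection. -/
noncomputable def renameEquiv (f : σ ≃ τ) (n : τ → ℕ) :
    TruncAlgebra k (n ∘ f) ≃ₐ[k] TruncAlgebra k n :=
  AlgEquiv.ofAlgHom (rename f n)
    (lift (fun j ↦ mk (n ∘ f) (X (f.symm j))) fun j ↦ by
      simpa using mk_X_pow (k := k) (n ∘ f) (f.symm j))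
    (algHom_ext fun j ↦ by simp [lift_mk_X, rename_mk_X])
    (algHom_ext fun i ↦ by simp [lift_mk_X, rename_mk_X])

variable (k) in
/-- The map splitting the variables of a truncated polynomial algebra into two groups. -/
noncomputable def split (n : σ ⊕ τ → ℕ) :
    TruncAlgebra k n →ₐ[k] TruncAlgebra k (n ∘ Sum.inl) ⊗[k] TruncAlgebra k (n ∘ Sum.inr) :=
  lift (A := TruncAlgebra k (n ∘ Sum.inl) ⊗[k] TruncAlgebra k (n ∘ Sum.inr))
    (Sum.elim (fun i ↦ mk (n ∘ Sum.inl) (X i) ⊗ₜ[k] 1) fun i ↦ 1 ⊗ₜ[k] mk (n ∘ Sum.inr) (X i)) <| by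
      rintro (i | i)
      · rw [Sum.elim_inl, Algebra.TensorProduct.tmul_pow]
        exact (congrArg (· ⊗ₜ[k] _) (mk_X_pow (n ∘ Sum.inl) i)).trans (zero_tmul _ _)
      · rw [Sum.elim_inr, Algebra.TensorProduct.tmul_pow]
        exact (congrArg (_ ⊗ₜ[k] ·) (mk_X_pow (n ∘ Sum.inr) i)).trans (tmul_zero _ _)

lemma split_mk_X_inl (n : σ ⊕ τ → ℕ) (i : σ) :
    split k n (mk n (X (Sum.inl i))) = mk (n ∘ Sum.inl) (X i) ⊗ₜ[k] 1 :=
  lift_mk_X _ _ _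

lemma split_mk_X_inr (n : σ ⊕ τ → ℕ) (i : τ) :
    split k n (mk n (X (Sum.inr i))) = 1 ⊗ₜ[k] mk (n ∘ Sum.inr) (X i) :=
  lift_mk_X _ _ _

lemma split_rename_inl (n : σ ⊕ τ → ℕ) (a : TruncAlgebra k (n ∘ Sum.inl)) :
    split k n (rename Sum.inl n a) = a ⊗ₜ[k] 1 := by
  have hcomp : (split k n).comp (rename Sum.inl n) = Algebra.TensorProduct.includeLeft :=
    algHom_ext fun i ↦ by simp [rename_mk_X, split_mk_X_inl]
  exact AlgHom.congr_fun hcomp a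

lemma split_rename_inr (n : σ ⊕ τ → ℕ) (a : TruncAlgebra k (n ∘ Sum.inr)) :
    split k n (rename Sum.inr n a) = 1 ⊗ₜ[k] a := by
  have hcomp : (split k n).comp (rename Sum.inr n) = Algebra.TensorProduct.includeRight :=
    algHom_ext fun i ↦ by simp [rename_mk_X, split_mk_X_inr]
  exact AlgHom.congr_fun hcomp a

variable (k) in
/-- Splitting the variables of a truncated polynomial algebra into two groups decomposes it as a
tensor product. -/
noncomputable def tensorEquiv (n : σ ⊕ τ → ℕ) :
    TruncAlgebra k (n ∘ Sum.inl) ⊗[k] TruncAlgebra k (n ∘ Sum.inr) ≃ₐ[k] TruncAlgebra k n :=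
  AlgEquiv.ofAlgHom (Algebra.TensorProduct.productMap (rename Sum.inl n) (rename Sum.inr n))
    (split k n)
    (algHom_ext <| by rintro (i | i) <;> simp [split_mk_X_inl, split_mk_X_inr, rename_mk_X])
    (Algebra.TensorProduct.ext' fun a b ↦ by simp [split_rename_inl, split_rename_inr])

lemma tensorEquiv_mk_tmul_mk (n : σ ⊕ τ → ℕ) (f : MvPolynomial σ k) (g : MvPolynomial τ k) :
    tensorEquiv k n (mk (n ∘ Sum.inl) f ⊗ₜ[k] mk (n ∘ Sum.inr) g) =
      mk n (MvPolynomial.rename Sum.inl f * MvPolynomial.rename Sum.inr g) := by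
  rw [map_mul, ← rename_mk, ← rename_mk]
  exact Algebra.TensorProduct.productMap_apply_tmul (rename (k := k) Sum.inl n) (rename Sum.inr n)
    _ _

instance [Finite σ] (n : σ → ℕ) : Module.Finite k (TruncAlgebra k n) := by
  have hadjoin : Algebra.adjoin k (Set.range fun i ↦ mk n (X i : MvPolynomial σ k)) = ⊤ := by
    have h := congrArg (Subalgebra.map (mk n)) (adjoin_range_X (R := k) (σ := σ))
    rwa [AlgHom.map_adjoin, ← Set.range_comp, Algebra.map_top,
      (AlgHom.range_eq_top _).2 (mk_surjective n)] at h
  have hfg := fg_adjoin_of_finite (R := k) (Set.finite_range fun i ↦ mk n (X i : MvPolynomial σ k))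
    (by
      rintro _ ⟨i, rfl⟩
      exact ⟨Polynomial.X ^ n i, Polynomial.monic_X_pow _, by
        rw [Polynomial.eval₂_X_pow]; exact mk_X_pow n i⟩)
  rw [hadjoin] at hfg
  exact ⟨hfg⟩

end TruncAlgebra

lemma powerIdeal_of_unique [Unique σ] (n : σ → ℕ) :
    powerIdeal k n = Ideal.span {X default ^ n default} := by
  rw [powerIdeal, Set.range_unique]

/-- The truncated polynomial algebra in one variable as a quotient of the univariate ring. -/
noncomputable def TruncAlgebra.polynomialEquiv [Unique σ] (n : ℕ) :
    (Polynomial k ⧸ Ideal.span {(Polynomial.X : Polynomial k) ^ n}) ≃ₐ[k]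
      TruncAlgebra k fun _ : σ ↦ n :=
  Ideal.quotientEquivAlg _ _ (uniqueAlgEquiv k σ).symm <| by
    rw [powerIdeal_of_unique, Ideal.map_span, Set.image_singleton]
    simp

lemma TruncAlgebra.polynomialEquiv_mk_X [Unique σ] (n : ℕ) :
    polynomialEquiv k n (Ideal.Quotient.mk _ Polynomial.X) = mk (fun _ : σ ↦ n) (X default) := by
  change mk _ ((uniqueAlgEquiv k σ).symm Polynomial.X) = _
  simp

end CommRing

variable {k : Type*} [Field k] {σ τ : Type*}

/-- Multiplication by the class of `f` on a truncated polynomial algebra. -/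
noncomputable abbrev mulOp (n : σ → ℕ) (f : MvPolynomial σ k) :
    TruncAlgebra k n →ₗ[k] TruncAlgebra k n :=
  LinearMap.mulLeft k (TruncAlgebra.mk n f)

lemma finrank_ker_mulOp_pow [Finite σ] (n : σ → ℕ) (f : MvPolynomial σ k) (j : ℕ) :
    (Module.finrank k (LinearMap.ker (mulOp n f ^ j)) : ℕ∞) =
      colength k (powerIdeal k n ⊔ Ideal.span {f ^ j}) :=
  finrank_ker_mulLeft_mk_pow (powerIdeal k n) f j

lemma weyr_mulOp_rename (q : σ ≃ τ) (n : τ → ℕ) (f : MvPolynomial σ k) :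
    weyr (mulOp n (rename q f)) = weyr (mulOp (n ∘ q) f) := by
  refine (AreConjugate.weyr_eq ⟨(TruncAlgebra.renameEquiv q n).toLinearEquiv, ?_⟩).symm
  refine LinearMap.ext fun v ↦ ?_
  change TruncAlgebra.mk n (rename q f) * TruncAlgebra.renameEquiv q n v =
    TruncAlgebra.renameEquiv q n (TruncAlgebra.mk _ f * v)
  rw [map_mul, ← TruncAlgebra.rename_mk]
  rfl

lemma tensorSum_mulLeft {A B : Type*} [CommRing A] [Algebra k A] [CommRing B] [Algebra k B]
    (a : A) (b : B) :
    tensorSum (LinearMap.mulLeft k a) (LinearMap.mulLeft k b) =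
      LinearMap.mulLeft k (a ⊗ₜ[k] 1 + 1 ⊗ₜ[k] b) :=
  TensorProduct.ext' fun v w ↦ by simp [add_mul]

lemma weyr_mulOp_rename_inl_add_rename_inr (n : σ ⊕ τ → ℕ) (f : MvPolynomial σ k)
    (g : MvPolynomial τ k) :
    weyr (mulOp n (rename Sum.inl f + rename Sum.inr g)) =
      weyr (tensorSum (mulOp (n ∘ Sum.inl) f) (mulOp (n ∘ Sum.inr) g)) := by
  rw [tensorSum_mulLeft]
  refine (AreConjugate.weyr_eq ⟨(TruncAlgebra.tensorEquiv k n).toLinearEquiv, ?_⟩).symm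
  have hf := TruncAlgebra.tensorEquiv_mk_tmul_mk n f 1
  have hg := TruncAlgebra.tensorEquiv_mk_tmul_mk n 1 g
  rw [map_one, map_one, mul_one] at hf
  rw [map_one, map_one, one_mul] at hg
  refine LinearMap.ext fun v ↦ ?_
  change TruncAlgebra.mk n _ * TruncAlgebra.tensorEquiv k n v = TruncAlgebra.tensorEquiv k n (_ * v)
  rw [map_mul, map_add, map_add, hf, hg]

section Unique

variable [Unique σ]

lemma finrank_truncAlgebra_of_unique (n : ℕ) :
    Module.finrank k (TruncAlgebra k fun _ : σ ↦ n) = n := by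
  rw [← (TruncAlgebra.polynomialEquiv k n).toLinearEquiv.finrank_eq,
    finrank_quotient_span_eq_natDegree, Polynomial.natDegree_X_pow]

lemma finrank_ker_mulOp_X_pow_pow (n a j : ℕ) :
    Module.finrank k
      (LinearMap.ker (mulOp (fun _ : σ ↦ n) (X default ^ a : MvPolynomial σ k) ^ j)) =
      min n (a * j) := by
  have hsup : powerIdeal k (fun _ : σ ↦ n) ⊔ Ideal.span {(X default ^ a) ^ j} =
      powerIdeal k fun _ : σ ↦ min n (a * j) := by
    simp only [powerIdeal_of_unique, ← pow_mul]
    rcases le_total n (a * j) with h | h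
    · rw [min_eq_left h, sup_eq_left, Ideal.span_singleton_le_span_singleton]
      exact pow_dvd_pow _ h
    · rw [min_eq_right h, sup_eq_right, Ideal.span_singleton_le_span_singleton]
      exact pow_dvd_pow _ h
  rw [← Nat.cast_inj (R := ℕ∞), finrank_ker_mulOp_pow, hsup, colength, Module.length_eq_finrank,
    finrank_truncAlgebra_of_unique]

end Unique

end TruncAlgebra

section JordanBlock

open Module

variable (k : Type*) [Field k]

/-- The nilpotent Jordan block of size `n`, realised as multiplication by `x` on
`k[x] / (x ^ n)`. -/
noncomputable abbrev jordanBlock (n : ℕ) :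
    TruncAlgebra k (fun _ : Unit ↦ n) →ₗ[k] TruncAlgebra k fun _ : Unit ↦ n :=
  mulOp (fun _ ↦ n) (X ())

lemma finrank_ker_jordanBlock_pow (n j : ℕ) :
    finrank k (LinearMap.ker (jordanBlock k n ^ j)) = min n j := by
  have h := finrank_ker_mulOp_X_pow_pow (k := k) (σ := Unit) n 1 j
  rwa [pow_one, one_mul] at h

lemma weyr_jordanBlock (n i : ℕ) : weyr (jordanBlock k n) i = if i < n then 1 else 0 := by
  rw [weyr, finrank_ker_jordanBlock_pow, finrank_ker_jordanBlock_pow]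
  split_ifs <;> omega

lemma le_of_jordanBlock_pow_eq_zero {n q : ℕ} (h : jordanBlock k n ^ q = 0) : n ≤ q := by
  have hker := finrank_ker_jordanBlock_pow k n q
  rw [h, LinearMap.ker_zero, finrank_top, finrank_truncAlgebra_of_unique] at hker
  omega

variable {k} {V : Type*} [AddCommGroup V] [Module k V] [Module.Finite k V]

lemma exists_areConjugate_piMap_jordanBlock {T : V →ₗ[k] V} {q : ℕ} (hT : T ^ q = 0) :
    ∃ (d : ℕ) (n : Fin d → ℕ),
      AreConjugate T (LinearMap.piMap fun i ↦ jordanBlock k (n i)) := by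
  have htorsion : Module.IsTorsion' (Module.AEval' T)
      (Submonoid.powers (Polynomial.X : Polynomial k)) := by
    intro x
    obtain ⟨v, rfl⟩ := (Module.AEval'.of T).surjective x
    refine ⟨⟨Polynomial.X ^ q, q, rfl⟩, ?_⟩
    change (Polynomial.X ^ q : Polynomial k) • Module.AEval'.of T v = 0
    rw [Module.AEval'.X_pow_smul_of, hT, zero_smul, map_zero]
  obtain ⟨d, n, ⟨ψ⟩⟩ :=
    Module.torsion_by_prime_power_decomposition Polynomial.irreducible_X htorsion
  let blocks : Module.AEval' T ≃ₗ[Polynomial k]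
      ∀ i, Polynomial k ⧸ Ideal.span {(Polynomial.X : Polynomial k) ^ n i} :=
    ψ.trans (DirectSum.linearEquivFunOnFintype (Polynomial k) (Fin d) _)
  refine ⟨d, n, ((Module.AEval'.of T).trans (blocks.restrictScalars k)).trans
    (LinearEquiv.piCongrRight fun i ↦ (TruncAlgebra.polynomialEquiv k (n i)).toLinearEquiv), ?_⟩
  refine LinearMap.ext fun v ↦ funext fun i ↦ ?_
  have hblocks : blocks (Module.AEval'.of T (T v)) i =
      Ideal.Quotient.mk _ Polynomial.X * blocks (Module.AEval'.of T v) i := by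
    rw [← Module.AEval'.X_smul_of, map_smul]
    rfl
  change TruncAlgebra.mk _ (X ()) * TruncAlgebra.polynomialEquiv k (n i)
    (blocks (Module.AEval'.of T v) i) =
      TruncAlgebra.polynomialEquiv k (n i) (blocks (Module.AEval'.of T (T v)) i)
  rw [hblocks, map_mul, TruncAlgebra.polynomialEquiv_mk_X]

lemma exists_areConjugate_piMap_jordanBlock_le {T : V →ₗ[k] V} {q : ℕ} (hT : T ^ q = 0) :
    ∃ (d : ℕ) (n : Fin d → ℕ), (∀ i, n i ≤ q) ∧
      AreConjugate T (LinearMap.piMap fun i ↦ jordanBlock k (n i)) := by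
  obtain ⟨d, n, hconj⟩ := exists_areConjugate_piMap_jordanBlock hT
  refine ⟨d, n, fun i ↦ le_of_jordanBlock_pow_eq_zero k (LinearMap.ext fun w ↦ ?_), hconj⟩
  have hpow := hconj.pow_eq_zero hT
  rw [piMap_pow] at hpow
  simpa using congrFun (LinearMap.congr_fun hpow (Pi.single i w)) i

end JordanBlock

section TensorSum

open Module Finset

/-- The convolution of `f` and `g` on `{0, …, 2 ^ e - 1}`, seen as the group `(ℤ/2)^e` under
bitwise xor. -/
def xorConv (e : ℕ) (f g : ℕ → ℤ) (j : ℕ) : ℤ :=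
  ∑ i ∈ range (2 ^ e), f i * g (i ^^^ j)

lemma xorConv_sum_sum {ι κ : Type*} [Fintype ι] [Fintype κ] (e : ℕ) (f : ι → ℕ → ℤ)
    (g : κ → ℕ → ℤ) (j : ℕ) :
    xorConv e (fun i ↦ ∑ a, f a i) (fun i ↦ ∑ b, g b i) j = ∑ a, ∑ b, xorConv e (f a) (g b) j := by
  simp only [xorConv, sum_mul_sum]
  rw [sum_comm]
  exact sum_congr rfl fun a _ ↦ sum_comm

variable {k : Type*} [Field k]

lemma powerIdeal_unit_sum_unit (n : Unit ⊕ Unit → ℕ) :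
    powerIdeal k n =
      Ideal.span {X (Sum.inl ()) ^ n (Sum.inl ()), X (Sum.inr ()) ^ n (Sum.inr ())} := by
  rw [powerIdeal]
  congr 1
  ext f
  simp [eq_comm, Unique.exists_iff]

lemma isRelPrime_X_X {σ : Type*} {i j : σ} (hij : i ≠ j) :
    IsRelPrime (X i : MvPolynomial σ k) (X j) :=
  X_prime.irreducible.isRelPrime_iff_not_dvd.2 fun h ↦ hij (X_dvd_X.1 h)

lemma colength_span_X_inl_X_inr :
    colength k (Ideal.span {(X (Sum.inl ()) : MvPolynomial (Unit ⊕ Unit) k), X (Sum.inr ())}) =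
      1 := by
  have hideal := powerIdeal_unit_sum_unit (k := k) fun _ ↦ 1
  simp only [pow_one] at hideal
  rw [← hideal, colength, Module.length_eq_finrank,
    ← (TruncAlgebra.tensorEquiv k fun _ : Unit ⊕ Unit ↦ 1).toLinearEquiv.finrank_eq,
    finrank_tensorProduct]
  exact congrArg Nat.cast (congrArg₂ (· * ·) (finrank_truncAlgebra_of_unique 1)
    (finrank_truncAlgebra_of_unique 1))

variable [CharP k 2]

lemma isLinearTriple_X_X_add :
    IsLinearTriple k (X (Sum.inl ()) : MvPolynomial (Unit ⊕ Unit) k) (X (Sum.inr ()))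
      (X (Sum.inl ()) + X (Sum.inr ())) where
  add_add_eq_zero := CharTwo.add_self_eq_zero _
  isRelPrime := isRelPrime_X_X Sum.inl_ne_inr
  colength_eq_one := colength_span_X_inl_X_inr

lemma finrank_ker_mulOp_X_add_X_pow {e a b c : ℕ} (ha : a ≤ 2 ^ e) (hb : b ≤ 2 ^ e)
    (hc : c ≤ 2 ^ e) :
    finrank k (LinearMap.ker (mulOp (Sum.elim (fun _ : Unit ↦ a) fun _ : Unit ↦ b)
      (X (Sum.inl ()) + X (Sum.inr ()) : MvPolynomial (Unit ⊕ Unit) k) ^ c)) = nimCount a b c := by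
  rw [← Nat.cast_inj (R := ℕ∞), finrank_ker_mulOp_pow, powerIdeal_unit_sum_unit,
    ← isLinearTriple_X_X_add.colength_eq_nimCount (k := k) ha hb hc, ← Ideal.span_union,
    Set.insert_union, Set.singleton_union]
  rfl

lemma weyr_tensorSum_jordanBlock {e a b j : ℕ} (ha : a ≤ 2 ^ e) (hb : b ≤ 2 ^ e) (hj : j < 2 ^ e) :
    weyr (tensorSum (jordanBlock k a) (jordanBlock k b)) j =
      xorConv e (weyr (jordanBlock k a)) (weyr (jordanBlock k b)) j := by
  have hsum := weyr_mulOp_rename_inl_add_rename_inr (k := k)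
    (Sum.elim (fun _ : Unit ↦ a) fun _ : Unit ↦ b) (X ()) (X ())
  rw [rename_X, rename_X] at hsum
  refine (congrFun hsum.symm j).trans ?_
  rw [weyr, finrank_ker_mulOp_X_add_X_pow ha hb (Nat.succ_le_of_lt hj),
    finrank_ker_mulOp_X_add_X_pow ha hb hj.le, ← nimCount_rotate, ← nimCount_rotate j a b,
    Nat.succ_eq_add_one, nimCount_add_left]
  have hfilter : (range (2 ^ e)).filter (· < a) = range a := by
    ext i
    simp only [mem_filter, mem_range]
    omega
  simp only [xorConv, weyr_jordanBlock, ite_mul, one_mul, zero_mul, ← sum_filter (· < a), hfilter]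
  simp [Nat.xor_comm]

theorem weyr_tensorSum {V W : Type*} [AddCommGroup V] [Module k V] [Module.Finite k V]
    [AddCommGroup W] [Module k W] [Module.Finite k W] {S : V →ₗ[k] V} {T : W →ₗ[k] W} {e j : ℕ}
    (hS : S ^ 2 ^ e = 0) (hT : T ^ 2 ^ e = 0) (hj : j < 2 ^ e) :
    weyr (tensorSum S T) j = xorConv e (weyr S) (weyr T) j := by
  obtain ⟨c, a, ha, hSa⟩ := exists_areConjugate_piMap_jordanBlock_le hS
  obtain ⟨d, b, hb, hTb⟩ := exists_areConjugate_piMap_jordanBlock_le hT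
  rw [(hSa.tensorSum hTb).weyr_eq, hSa.weyr_eq, hTb.weyr_eq, weyr_tensorSum_piMap_left,
    funext (weyr_piMap _), funext (weyr_piMap _), xorConv_sum_sum]
  refine sum_congr rfl fun i _ ↦ ?_
  rw [weyr_tensorSum_piMap_right]
  exact sum_congr rfl fun l _ ↦ weyr_tensorSum_jordanBlock (ha i) (hb l) hj

end TensorSum

section Characters

open Finset

lemma sum_range_two_pow_xor (F : ℕ → ℤ) {e j : ℕ} (hj : j < 2 ^ e) :
    ∑ i ∈ range (2 ^ e), F (i ^^^ j) = ∑ i ∈ range (2 ^ e), F i := by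
  refine sum_nbij' (· ^^^ j) (· ^^^ j) ?_ ?_ ?_ ?_ ?_ <;> intro i hi <;>
    simp_all [Nat.xor_lt_two_pow]

/-- A multiplicative character of the naturals under bitwise xor. -/
def IsXorChar (χ : ℕ → ℤ) : Prop :=
  ∀ i j, χ (i ^^^ j) = χ i * χ j

/-- The Fourier coefficient at `χ` of a function on `{0, …, 2 ^ e - 1}`. -/
def charSum (e : ℕ) (χ f : ℕ → ℤ) : ℤ :=
  ∑ i ∈ range (2 ^ e), χ i * f i

lemma isXorChar_one : IsXorChar 1 := fun _ _ ↦ rfl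

lemma IsXorChar.mul {χ ψ : ℕ → ℤ} (hχ : IsXorChar χ) (hψ : IsXorChar ψ) : IsXorChar (χ * ψ) :=
  fun i j ↦ by simp only [Pi.mul_apply, hχ i j, hψ i j]; ring

lemma IsXorChar.charSum_xorConv {χ : ℕ → ℤ} (hχ : IsXorChar χ) (e : ℕ) (f g : ℕ → ℤ) :
    charSum e χ (xorConv e f g) = charSum e χ f * charSum e χ g := by
  have hinner (i) (hi : i ∈ range (2 ^ e)) :
      ∑ j ∈ range (2 ^ e), χ j * g (i ^^^ j) = χ i * charSum e χ g := by
    rw [← sum_range_two_pow_xor _ (mem_range.1 hi), charSum, mul_sum]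
    refine sum_congr rfl fun j _ ↦ ?_
    rw [hχ, Nat.xor_comm i, Nat.xor_xor_cancel_right]
    ring
  calc
    _ = ∑ i ∈ range (2 ^ e), f i * ∑ j ∈ range (2 ^ e), χ j * g (i ^^^ j) := by
      simp only [charSum, xorConv, mul_sum]
      rw [sum_comm]
      exact sum_congr rfl fun i _ ↦ sum_congr rfl fun j _ ↦ by ring
    _ = _ := by
      rw [charSum, sum_mul]
      exact sum_congr rfl fun i hi ↦ by rw [hinner i hi]; ring

lemma IsXorChar.sum_eq_zero {χ : ℕ → ℤ} (hχ : IsXorChar χ) {e j : ℕ} (hj : j < 2 ^ e)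
    (hχj : χ j = -1) : ∑ i ∈ range (2 ^ e), χ i = 0 := by
  have h := sum_range_two_pow_xor χ hj
  simp only [hχ _ j, hχj, ← sum_mul] at h
  omega

/-- The Rademacher character, the sign given by the `b`-th binary digit. -/
def rademacher (b i : ℕ) : ℤ :=
  if i.testBit b then -1 else 1

lemma isXorChar_rademacher (b : ℕ) : IsXorChar (rademacher b) := fun i j ↦ by
  rw [rademacher, Nat.testBit_xor]
  cases hi : i.testBit b <;> cases hj : j.testBit b <;> simp [rademacher, hi, hj]

lemma rademacher_mul_self (b i : ℕ) : rademacher b i * rademacher b i = 1 := by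
  rw [rademacher]
  split_ifs <;> rfl

lemma rademacher_two_pow (b c : ℕ) : rademacher b (2 ^ c) = if c = b then -1 else 1 := by
  simp [rademacher, Nat.testBit_two_pow]

lemma rademacher_eq_one_of_lt {b i : ℕ} (hi : i < 2 ^ b) : rademacher b i = 1 := by
  simp [rademacher, Nat.testBit_lt_two_pow hi]

lemma rademacher_add_two_pow (b i : ℕ) : rademacher b (i + 2 ^ b) = -rademacher b i := by
  rw [rademacher, rademacher, add_comm, Nat.testBit_two_pow_add_eq]
  cases i.testBit b <;> rfl

lemma rademacher_zero_left (i : ℕ) : rademacher 0 i = 1 - 2 * (i % 2 : ℕ) := by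
  rw [rademacher, Nat.testBit_zero]
  rcases Nat.mod_two_eq_zero_or_one i with h | h <;> simp [h]

lemma rademacher_succ (b i : ℕ) : rademacher (b + 1) i = rademacher b (i / 2) := by
  rw [rademacher, rademacher, Nat.testBit_succ]

lemma sum_rademacher {e b : ℕ} (hb : b < e) : ∑ i ∈ range (2 ^ e), rademacher b i = 0 :=
  (isXorChar_rademacher b).sum_eq_zero (Nat.pow_lt_pow_right one_lt_two hb)
    (by rw [rademacher_two_pow, if_pos rfl])

lemma sum_rademacher_mul_rademacher {e b : ℕ} (hb : b < e) (c : ℕ) :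
    ∑ i ∈ range (2 ^ e), rademacher b i * rademacher c i = if b = c then 2 ^ e else 0 := by
  split_ifs with hbc
  · simp [hbc, rademacher_mul_self]
  · refine ((isXorChar_rademacher b).mul (isXorChar_rademacher c)).sum_eq_zero
      (Nat.pow_lt_pow_right one_lt_two hb) ?_
    rw [Pi.mul_apply, rademacher_two_pow, rademacher_two_pow, if_pos rfl, if_neg hbc, mul_one]

lemma sum_two_pow_mul_rademacher {e i : ℕ} (hi : i < 2 ^ e) :
    ∑ b ∈ range e, 2 ^ b * rademacher b i = 2 ^ e - 1 - 2 * i := by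
  induction e generalizing i with
  | zero => simp_all
  | succ e ih =>
    have hdiv := Nat.div_add_mod i 2
    have hih := ih (i := i / 2) (by rw [pow_succ] at hi; omega)
    rw [sum_range_succ', rademacher_zero_left]
    simp only [rademacher_succ, pow_succ', mul_assoc, ← mul_sum, hih]
    rw [← Nat.cast_inj (R := ℤ), Nat.cast_add, Nat.cast_mul, Nat.cast_ofNat] at hdiv
    linear_combination -2 * hdiv

/-- `f` agrees on `{0, …, 2 ^ e - 1}` with the function `c + ∑ b, a b * rademacher b`. -/
def HasRademacherExpansion (e : ℕ) (f : ℕ → ℤ) (c : ℤ) (a : ℕ → ℤ) : Prop :=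
  ∀ i < 2 ^ e, f i = c + ∑ b ∈ range e, a b * rademacher b i

namespace HasRademacherExpansion

variable {e : ℕ} {f : ℕ → ℤ} {c : ℤ} {a : ℕ → ℤ}

lemma xorConv_zero (hf : HasRademacherExpansion e f c a) (g : ℕ → ℤ) :
    xorConv e f g 0 = c * charSum e 1 g + ∑ b ∈ range e, a b * charSum e (rademacher b) g := by
  have hterm (i) (hi : i ∈ range (2 ^ e)) : f i * g (i ^^^ 0) =
      c * (1 * g i) + ∑ b ∈ range e, a b * (rademacher b i * g i) := by
    rw [hf i (mem_range.1 hi), Nat.xor_zero, add_mul, sum_mul]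
    simp only [mul_assoc, one_mul]
  rw [xorConv, sum_congr rfl hterm, sum_add_distrib, sum_comm]
  simp only [charSum, Pi.one_apply, mul_sum]

lemma charSum_one (hf : HasRademacherExpansion e f c a) : charSum e 1 f = 2 ^ e * c := by
  have h := hf.xorConv_zero 1
  have h0 : ∑ b ∈ range e, a b * charSum e (rademacher b) 1 = 0 :=
    sum_eq_zero fun b hb ↦ by simp [charSum, sum_rademacher (mem_range.1 hb)]
  rw [h0] at h
  simp_all [xorConv, charSum, mul_comm]

lemma charSum_rademacher (hf : HasRademacherExpansion e f c a) {b : ℕ} (hb : b < e) :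
    charSum e (rademacher b) f = 2 ^ e * a b := by
  have h := hf.xorConv_zero (rademacher b)
  have h1 : charSum e 1 (rademacher b) = 0 := by simp [charSum, sum_rademacher hb]
  have h2 : ∑ c ∈ range e, a c * charSum e (rademacher c) (rademacher b) = 2 ^ e * a b := by
    rw [sum_eq_single_of_mem b (mem_range.2 hb)]
    · simp [charSum, sum_rademacher_mul_rademacher hb, mul_comm]
    · intro c hc hcb
      simp [charSum, sum_rademacher_mul_rademacher (mem_range.1 hc), hcb]
  rw [h1, h2] at h
  simp_all [xorConv, charSum, mul_comm]

end HasRademacherExpansion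

section ThirdSums

lemma sum_range_rademacher_div_three_of_le {b n : ℕ} (hn : n ≤ 3 * 2 ^ b) :
    ∑ l ∈ range n, rademacher b (l / 3) = n := by
  rw [sum_congr rfl fun l hl ↦ rademacher_eq_one_of_lt (b := b) (by rw [mem_range] at hl; omega)]
  simp

lemma sum_range_rademacher_div_three_add (b n : ℕ) :
    ∑ l ∈ range (n + 3 * 2 ^ b), rademacher b (l / 3) =
      3 * 2 ^ b - ∑ l ∈ range n, rademacher b (l / 3) := by
  rw [add_comm, sum_range_add, sum_range_rademacher_div_three_of_le le_rfl, sub_eq_add_neg,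
    ← sum_neg_distrib]
  congr 1
  exact sum_congr rfl fun l _ ↦ by
    rw [show (3 * 2 ^ b + l) / 3 = l / 3 + 2 ^ b by omega, rademacher_add_two_pow]

lemma sum_range_rademacher_div_three_add_mul (b n t : ℕ) :
    ∑ l ∈ range (n + t * (6 * 2 ^ b)), rademacher b (l / 3) =
      ∑ l ∈ range n, rademacher b (l / 3) := by
  induction t with
  | zero => simp
  | succ t ih =>
    rw [show n + (t + 1) * (6 * 2 ^ b) = n + t * (6 * 2 ^ b) + 3 * 2 ^ b + 3 * 2 ^ b by ring,
      sum_range_rademacher_div_three_add, sum_range_rademacher_div_three_add, ih, sub_sub_cancel]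

lemma sum_range_two_pow_rademacher_div_three (b n : ℕ) :
    ∑ l ∈ range (2 ^ (b + n + 1)), rademacher b (l / 3) = 2 ^ (b + 1) := by
  induction n using Nat.twoStepInduction with
  | zero =>
    rw [sum_range_rademacher_div_three_of_le (by rw [pow_succ]; omega)]
    push_cast
    rfl
  | one =>
    rw [show 2 ^ (b + 1 + 1) = 2 ^ b + 3 * 2 ^ b by ring, sum_range_rademacher_div_three_add,
      sum_range_rademacher_div_three_of_le (by omega)]
    push_cast
    ring
  | more n ih _ =>
    rw [show 2 ^ (b + (n + 2) + 1) = 2 ^ (b + n + 1) + 2 ^ n * (6 * 2 ^ b) by ring,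
      sum_range_rademacher_div_three_add_mul, ih]

end ThirdSums
end Characters

section HilbertKunz

open Finset

variable {k : Type*} [Field k] {σ τ : Type*}

/-- The Weyr characteristic of multiplication by `f` on `k[xᵢ] / (xᵢ ^ 2 ^ e)`. Its value at `0` is
the Hilbert–Kunz function of `f`; the other values make it determine sums in disjoint sets of
variables. -/
noncomputable def hkWeyr (e : ℕ) (f : MvPolynomial σ k) : ℕ → ℤ :=
  weyr (mulOp (fun _ ↦ 2 ^ e) f)

lemma hkWeyr_zero {n : ℕ} (e : ℕ) (f : MvPolynomial (Fin n) k) :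
    hkWeyr e f 0 = HKfun k n 2 e f := by
  have hsum := sum_range_weyr (mulOp (fun _ ↦ 2 ^ e) f) 1
  rw [sum_range_one] at hsum
  have hle : powerIdeal k (fun _ ↦ 2 ^ e) ≤ Ideal.span (Set.range (fun i ↦ X i ^ 2 ^ e) ∪ {f}) :=
    Ideal.span_mono Set.subset_union_left
  have hfinite := Module.Finite.of_surjective (Ideal.Quotient.factorₐ k hle).toLinearMap
    (Ideal.Quotient.factor_surjective hle)
  rw [hkWeyr, hsum, HKfun, Nat.cast_inj, ← Nat.cast_inj (R := ℕ∞), finrank_ker_mulOp_pow, pow_one,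
    powerIdeal, ← Ideal.span_union, colength, Module.length_eq_finrank]

lemma hkWeyr_rename (q : σ ≃ τ) (e : ℕ) (f : MvPolynomial σ k) :
    hkWeyr e (rename q f) = hkWeyr e f :=
  weyr_mulOp_rename q _ f

lemma X_mem_idealOfVars (i : σ) : X i ∈ idealOfVars σ k :=
  Ideal.subset_span ⟨i, rfl⟩

lemma X_pow_mem_idealOfVars (i : σ) {a : ℕ} (ha : 0 < a) : X i ^ a ∈ idealOfVars σ k :=
  Ideal.pow_mem_of_mem _ (X_mem_idealOfVars i) a ha

section CharTwo

variable [CharP k 2]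

lemma mulOp_pow_two_pow_eq_zero (e : ℕ) {f : MvPolynomial σ k} (hf : f ∈ idealOfVars σ k) :
    mulOp (fun _ ↦ 2 ^ e) f ^ 2 ^ e = 0 := by
  have hle : idealOfVars σ k ≤ (powerIdeal k fun _ ↦ 2 ^ e).comap (iterateFrobenius _ 2 e) :=
    Ideal.span_le.2 <| by
      rintro _ ⟨i, rfl⟩
      exact Ideal.subset_span ⟨i, rfl⟩
  have hmk : TruncAlgebra.mk (fun _ ↦ 2 ^ e) f ^ 2 ^ e = 0 := by
    rw [← map_pow]
    exact Ideal.Quotient.eq_zero_iff_mem.2 (hle hf)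
  rw [LinearMap.pow_mulLeft, hmk, LinearMap.mulLeft_zero_eq_zero]

variable [Finite σ] [Finite τ] {f : MvPolynomial σ k} {g : MvPolynomial τ k}

lemma hkWeyr_rename_inl_add_rename_inr (hf : f ∈ idealOfVars σ k) (hg : g ∈ idealOfVars τ k)
    {e j : ℕ} (hj : j < 2 ^ e) :
    hkWeyr e (rename Sum.inl f + rename Sum.inr g) j = xorConv e (hkWeyr e f) (hkWeyr e g) j :=
  (congrFun (weyr_mulOp_rename_inl_add_rename_inr _ f g) j).trans <|
    weyr_tensorSum (mulOp_pow_two_pow_eq_zero e hf) (mulOp_pow_two_pow_eq_zero e hg) hj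

lemma IsXorChar.charSum_hkWeyr_rename_inl_add_rename_inr {χ : ℕ → ℤ} (hχ : IsXorChar χ) (e : ℕ)
    (hf : f ∈ idealOfVars σ k) (hg : g ∈ idealOfVars τ k) :
    charSum e χ (hkWeyr e (rename Sum.inl f + rename Sum.inr g)) =
      charSum e χ (hkWeyr e f) * charSum e χ (hkWeyr e g) := by
  rw [← hχ.charSum_xorConv]
  exact sum_congr rfl fun j hj ↦ by
    rw [hkWeyr_rename_inl_add_rename_inr hf hg (mem_range.1 hj)]

end CharTwo

section Monomial

variable [Unique σ]

lemma hkWeyr_X_pow (x : σ) (e a i : ℕ) :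
    hkWeyr e (X x ^ a : MvPolynomial σ k) i =
      (min (2 ^ e) (a * (i + 1)) : ℕ) - (min (2 ^ e) (a * i) : ℕ) := by
  rw [hkWeyr, weyr, Subsingleton.elim x default, finrank_ker_mulOp_X_pow_pow,
    finrank_ker_mulOp_X_pow_pow]

lemma sum_range_mul_min_sub_min (φ : ℕ → ℤ) (q : ℕ) {a : ℕ} (ha : 0 < a) (n : ℕ) :
    ∑ i ∈ range n, φ i * ((min q (a * (i + 1)) : ℕ) - (min q (a * i) : ℕ)) =
      ∑ l ∈ range (min q (a * n)), φ (l / a) := by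
  induction n with
  | zero => simp
  | succ n ih =>
    obtain ⟨c, hc⟩ := Nat.exists_eq_add_of_le
      (min_le_min_left q (Nat.mul_le_mul_left a (Nat.le_add_right n 1)))
    have hdiv : ∀ l ∈ range c, φ ((min q (a * n) + l) / a) = φ n := by
      intro l hl
      rw [mem_range] at hl
      rw [mul_add, mul_one] at hc
      rw [show min q (a * n) = a * n by omega, Nat.mul_add_div ha, Nat.div_eq_of_lt (by omega),
        add_zero]
    rw [sum_range_succ, ih, hc, sum_range_add, sum_congr rfl hdiv]
    push_cast
    simp [mul_comm]

lemma charSum_hkWeyr_X_pow (x : σ) (χ : ℕ → ℤ) (e : ℕ) {a : ℕ} (ha : 0 < a) :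
    charSum e χ (hkWeyr e (X x ^ a : MvPolynomial σ k)) =
      ∑ l ∈ range (2 ^ e), χ (l / a) := by
  simp only [charSum, hkWeyr_X_pow]
  rw [sum_range_mul_min_sub_min χ _ ha, min_eq_left (Nat.le_mul_of_pos_left _ ha)]

lemma charSum_one_hkWeyr_X_pow (x : σ) (e : ℕ) {a : ℕ} (ha : 0 < a) :
    charSum e 1 (hkWeyr e (X x ^ a : MvPolynomial σ k)) = 2 ^ e := by
  simp [charSum_hkWeyr_X_pow _ _ _ ha]

lemma charSum_rademacher_hkWeyr_X_pow_three (x : σ) {e b : ℕ} (hb : b < e) :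
    charSum e (rademacher b) (hkWeyr e (X x ^ 3 : MvPolynomial σ k)) = 2 ^ (b + 1) := by
  obtain ⟨n, rfl⟩ := Nat.exists_eq_add_of_lt hb
  rw [charSum_hkWeyr_X_pow _ _ _ three_pos, sum_range_two_pow_rademacher_div_three]

lemma hasRademacherExpansion_hkWeyr_X_sq (x : σ) (e : ℕ) :
    HasRademacherExpansion (e + 1) (hkWeyr (e + 1) (X x ^ 2 : MvPolynomial σ k)) 1
      fun b ↦ if b = e then 1 else 0 := by
  intro i hi
  rw [hkWeyr_X_pow]
  rw [pow_succ] at hi ⊢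
  simp only [ite_mul, one_mul, zero_mul, sum_ite_eq', mem_range, Nat.lt_succ_self, if_true]
  rcases lt_or_ge i (2 ^ e) with h | h
  · rw [rademacher_eq_one_of_lt h]
    omega
  · obtain ⟨l, rfl⟩ := Nat.exists_eq_add_of_le' h
    rw [rademacher_add_two_pow, rademacher_eq_one_of_lt (by omega)]
    omega

end Monomial

section Hyperbolic

variable (k) in
/-- The hyperbolic quadratic form `x * y`. -/
noncomputable def hyperbolic : MvPolynomial (Unit ⊕ Unit) k :=
  X (Sum.inl ()) * X (Sum.inr ())

variable (k) in
lemma hyperbolic_mem_idealOfVars : hyperbolic k ∈ idealOfVars (Unit ⊕ Unit) k :=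
  Ideal.mul_mem_left _ _ (X_mem_idealOfVars _)

lemma finrank_ker_mulOp_hyperbolic_pow {q j : ℕ} (hj : j ≤ q) :
    Module.finrank k (LinearMap.ker (mulOp (fun _ ↦ q) (hyperbolic k) ^ j)) =
      j * (2 * q - j) := by
  rw [hyperbolic, ← Nat.cast_inj (R := ℕ∞), finrank_ker_mulOp_pow, powerIdeal_unit_sum_unit,
    ← Ideal.span_union, Set.insert_union, Set.singleton_union,
    colength_span_pow_pow_mul_pow k (isRelPrime_X_X Sum.inl_ne_inr) hj, colength_span_X_inl_X_inr,
    mul_one]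

lemma hasRademacherExpansion_hkWeyr_hyperbolic (e : ℕ) :
    HasRademacherExpansion e (hkWeyr e (hyperbolic k)) (2 ^ e) fun b ↦ 2 ^ b := by
  intro i hi
  rw [sum_two_pow_mul_rademacher hi, hkWeyr, weyr,
    finrank_ker_mulOp_hyperbolic_pow (Nat.add_one_le_of_lt hi),
    finrank_ker_mulOp_hyperbolic_pow hi.le]
  push_cast [Nat.cast_sub (show i + 1 ≤ 2 * 2 ^ e by omega),
    Nat.cast_sub (show i ≤ 2 * 2 ^ e by omega)]
  ring

end Hyperbolic
end HilbertKunz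

section A2

open Finset

variable (k : Type*) [Field k]

/-- Prepending two variables to `Fin (d + 1)`. -/
def prependPairEquiv (d : ℕ) : (Unit ⊕ Unit) ⊕ Fin (d + 1) ≃ Fin (d + 2 + 1) :=
  ((((finOneEquiv.symm.sumCongr finOneEquiv.symm).trans finSumFinEquiv).sumCongr
    (Equiv.refl _)).trans finSumFinEquiv).trans (finCongr (by omega))

lemma prependPairEquiv_inr (d : ℕ) (i : Fin (d + 1)) :
    prependPairEquiv d (Sum.inr i) = ⟨i + 2, by omega⟩ := by
  ext
  simp [prependPairEquiv]

lemma hkWeyr_A2poly_zero (e : ℕ) :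
    hkWeyr e (A2poly k 0) = hkWeyr e (X (0 : Fin 1) ^ 3 : MvPolynomial _ k) :=
  congrArg (hkWeyr e) (by simp [A2poly])

lemma A2poly_one :
    A2poly k 1 = rename finSumFinEquiv
      (rename Sum.inl (X (0 : Fin 1) ^ 2) + rename Sum.inr (X (0 : Fin 1) ^ 3)) := by
  simp [A2poly, finSumFinEquiv]

lemma A2poly_add_two (d : ℕ) :
    A2poly k (d + 2) = rename (prependPairEquiv d)
      (rename Sum.inl (hyperbolic k) + rename Sum.inr (A2poly k d)) := by
  have hdiv : (d + 2) / 2 = d / 2 + 1 := by omega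
  have hsum : ∑ i : Fin ((d + 2) / 2), (X (⟨2 * i, by omega⟩ : Fin (d + 2 + 1)) *
      X (⟨2 * i + 1, by omega⟩ : Fin (d + 2 + 1)) : MvPolynomial _ k) =
      X 0 * X 1 + ∑ i : Fin (d / 2), X (⟨2 * i + 2, by omega⟩ : Fin (d + 2 + 1)) *
        X (⟨2 * i + 1 + 2, by omega⟩ : Fin (d + 2 + 1)) := by
    rw [← Equiv.sum_comp (finCongr hdiv.symm), Fin.sum_univ_succ]
    rfl
  have hsq : (if Odd (d + 2) then X (⟨d + 2 - 1, by omega⟩ : Fin (d + 2 + 1)) ^ 2 else 0 :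
      MvPolynomial _ k) =
      if Odd d then X (⟨d - 1 + 2, by omega⟩ : Fin (d + 2 + 1)) ^ 2 else 0 := by
    rcases d with _ | d
    · simp
    · simp [Nat.odd_add]
  rw [A2poly, hsum, hsq, A2poly]
  simp only [hyperbolic, map_add, map_mul, map_sum, map_pow, map_zero, rename_X,
    prependPairEquiv_inr, apply_ite (rename (Sum.inr : Fin (d + 1) → (Unit ⊕ Unit) ⊕ _)),
    apply_ite (rename (prependPairEquiv d)), ← add_assoc (X _ * X _)]
  rfl

lemma A2poly_mem_idealOfVars (d : ℕ) : A2poly k d ∈ idealOfVars (Fin (d + 1)) k := by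
  refine add_mem (add_mem (sum_mem fun i _ ↦ Ideal.mul_mem_left _ _ (X_mem_idealOfVars _)) ?_)
    (X_pow_mem_idealOfVars _ three_pos)
  split_ifs
  exacts [X_pow_mem_idealOfVars _ two_pos, zero_mem _]

variable [CharP k 2]

lemma IsXorChar.charSum_hkWeyr_A2poly_two_mul_add {χ : ℕ → ℤ} (hχ : IsXorChar χ) (e d m : ℕ) :
    charSum e χ (hkWeyr e (A2poly k (2 * m + d))) =
      charSum e χ (hkWeyr e (hyperbolic k)) ^ m * charSum e χ (hkWeyr e (A2poly k d)) := by
  induction m with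
  | zero => rw [show 2 * 0 + d = d by ring, pow_zero, one_mul]
  | succ m ih =>
    rw [show 2 * (m + 1) + d = 2 * m + d + 2 by ring, A2poly_add_two, hkWeyr_rename,
      hχ.charSum_hkWeyr_rename_inl_add_rename_inr e (hyperbolic_mem_idealOfVars k)
        (A2poly_mem_idealOfVars k _), ih, pow_succ', mul_assoc]

lemma HKfun_A2poly_add_two (e d : ℕ) :
    (HKfun k (d + 2 + 1) 2 e (A2poly k (d + 2)) : ℤ) =
      2 ^ e * charSum e 1 (hkWeyr e (A2poly k d)) +
        ∑ b ∈ range e, 2 ^ b * charSum e (rademacher b) (hkWeyr e (A2poly k d)) := by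
  rw [← hkWeyr_zero, A2poly_add_two, hkWeyr_rename, hkWeyr_rename_inl_add_rename_inr
    (hyperbolic_mem_idealOfVars k) (A2poly_mem_idealOfVars k d) (Nat.two_pow_pos e),
    (hasRademacherExpansion_hkWeyr_hyperbolic e).xorConv_zero]

lemma IsXorChar.charSum_hkWeyr_A2poly_one {χ : ℕ → ℤ} (hχ : IsXorChar χ) (e : ℕ) :
    charSum e χ (hkWeyr e (A2poly k 1)) =
      charSum e χ (hkWeyr e (X (0 : Fin 1) ^ 2 : MvPolynomial _ k)) *
        charSum e χ (hkWeyr e (X (0 : Fin 1) ^ 3 : MvPolynomial _ k)) := by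
  rw [A2poly_one, hkWeyr_rename, hχ.charSum_hkWeyr_rename_inl_add_rename_inr e
    (X_pow_mem_idealOfVars _ two_pos) (X_pow_mem_idealOfVars _ three_pos)]

lemma charSum_one_hkWeyr_A2poly_one (e : ℕ) :
    charSum e 1 (hkWeyr e (A2poly k 1)) = (2 ^ e) ^ 2 := by
  rw [isXorChar_one.charSum_hkWeyr_A2poly_one k, charSum_one_hkWeyr_X_pow _ e two_pos,
    charSum_one_hkWeyr_X_pow _ e three_pos, sq]

lemma charSum_rademacher_hkWeyr_A2poly_one {e b : ℕ} (hb : b < e + 1) :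
    charSum (e + 1) (rademacher b) (hkWeyr (e + 1) (A2poly k 1)) =
      if b = e then (2 ^ (e + 1)) ^ 2 else 0 := by
  rw [(isXorChar_rademacher b).charSum_hkWeyr_A2poly_one k,
    (hasRademacherExpansion_hkWeyr_X_sq _ e).charSum_rademacher hb,
    charSum_rademacher_hkWeyr_X_pow_three _ hb]
  split_ifs with h
  · rw [h]; ring
  · ring

theorem HKfun_A2poly_even (m e : ℕ) :
    (HKfun k (2 * m + 2 + 1) 2 e (A2poly k (2 * m + 2)) : ℤ) =
      (2 ^ e) ^ (2 * m + 2) + 2 * (2 ^ e) ^ m * ∑ b ∈ range e, (2 ^ (m + 2)) ^ b := by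
  have hexp := hasRademacherExpansion_hkWeyr_hyperbolic (k := k) e
  have hone : charSum e 1 (hkWeyr e (A2poly k (2 * m))) = (2 ^ e) ^ (2 * m + 1) := by
    rw [← add_zero (2 * m), isXorChar_one.charSum_hkWeyr_A2poly_two_mul_add k, hexp.charSum_one,
      hkWeyr_A2poly_zero, charSum_one_hkWeyr_X_pow _ e three_pos]
    ring
  have hrad (b : ℕ) (hb : b ∈ range e) :
      charSum e (rademacher b) (hkWeyr e (A2poly k (2 * m))) =
        (2 ^ e * 2 ^ b) ^ m * 2 ^ (b + 1) := by
    rw [← add_zero (2 * m), (isXorChar_rademacher b).charSum_hkWeyr_A2poly_two_mul_add k,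
      hexp.charSum_rademacher (mem_range.1 hb), hkWeyr_A2poly_zero,
      charSum_rademacher_hkWeyr_X_pow_three _ (mem_range.1 hb)]
  rw [HKfun_A2poly_add_two, hone, mul_sum]
  congr 1
  · ring
  · exact sum_congr rfl fun b hb ↦ by
      rw [hrad b hb, ← pow_mul 2 (m + 2) b]
      ring

theorem HKfun_A2poly_one (e : ℕ) : (HKfun k 2 2 (e + 1) (A2poly k 1) : ℤ) = 2 * 2 ^ (e + 1) := by
  rw [← hkWeyr_zero, A2poly_one, hkWeyr_rename, hkWeyr_rename_inl_add_rename_inr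
    (X_pow_mem_idealOfVars _ two_pos) (X_pow_mem_idealOfVars _ three_pos) (Nat.two_pow_pos _),
    (hasRademacherExpansion_hkWeyr_X_sq _ e).xorConv_zero, charSum_one_hkWeyr_X_pow _ _ three_pos]
  simp only [ite_mul, one_mul, zero_mul, sum_ite_eq', mem_range, Nat.lt_succ_self, if_true]
  rw [charSum_rademacher_hkWeyr_X_pow_three _ (Nat.lt_succ_self e), two_mul]

theorem HKfun_A2poly_odd (m e : ℕ) :
    (HKfun k (2 * m + 1 + 1) 2 (e + 1) (A2poly k (2 * m + 1)) : ℤ) * 2 ^ m =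
      (2 ^ (e + 1)) ^ (2 * m + 1) * (2 ^ m + 1) := by
  rcases m with _ | m
  · rw [show 2 * 0 + 1 = 1 from rfl, HKfun_A2poly_one]
    ring
  have hexp := hasRademacherExpansion_hkWeyr_hyperbolic (k := k) (e + 1)
  have hone : charSum (e + 1) 1 (hkWeyr (e + 1) (A2poly k (2 * m + 1))) =
      (2 ^ (e + 1)) ^ (2 * m + 2) := by
    rw [isXorChar_one.charSum_hkWeyr_A2poly_two_mul_add k, hexp.charSum_one,
      charSum_one_hkWeyr_A2poly_one, ← sq, ← pow_mul, ← pow_add]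
  have hrad (b : ℕ) (hb : b ∈ range (e + 1)) :
      charSum (e + 1) (rademacher b) (hkWeyr (e + 1) (A2poly k (2 * m + 1))) =
        if b = e then (2 ^ (e + 1) * 2 ^ b) ^ m * (2 ^ (e + 1)) ^ 2 else 0 := by
    rw [(isXorChar_rademacher b).charSum_hkWeyr_A2poly_two_mul_add k,
      hexp.charSum_rademacher (mem_range.1 hb),
      charSum_rademacher_hkWeyr_A2poly_one k (mem_range.1 hb), mul_ite, mul_zero]
  have hHK := HKfun_A2poly_add_two k (e + 1) (2 * m + 1)
  rw [hone, sum_congr rfl fun b hb ↦ by rw [hrad b hb]] at hHK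
  simp only [mul_ite, mul_zero, sum_ite_eq', mem_range, Nat.lt_succ_self, if_true] at hHK
  rw [show 2 * (m + 1) + 1 = 2 * m + 1 + 2 by ring, hHK]
  ring

end A2

section Limit

open Filter Topology

variable (k : Type*) [Field k] [CharP k 2]

theorem tendsto_HKfun_A2poly_even (m : ℕ) :
    Tendsto (fun e : ℕ ↦
      (HKfun k (2 * m + 2 + 1) 2 e (A2poly k (2 * m + 2)) : ℝ) / 2 ^ ((2 * m + 2) * e)) atTop
      (𝓝 ((2 ^ (m + 2) + 1) / (2 ^ (m + 2) - 1))) := by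
  have hlt : (1 : ℝ) < 2 ^ (m + 2) := one_lt_pow₀ one_lt_two (by omega)
  have hr : (2 : ℝ) ^ (m + 2) - 1 ≠ 0 := sub_ne_zero.2 hlt.ne'
  have hvalue (e : ℕ) :
      (HKfun k (2 * m + 2 + 1) 2 e (A2poly k (2 * m + 2)) : ℝ) / 2 ^ ((2 * m + 2) * e) =
        1 + 2 * (1 - (2 ^ (m + 2))⁻¹ ^ e) / (2 ^ (m + 2) - 1) := by
    have hHK : (HKfun k (2 * m + 2 + 1) 2 e (A2poly k (2 * m + 2)) : ℝ) =
        (2 ^ e) ^ (2 * m + 2) + 2 * (2 ^ e) ^ m * ∑ b ∈ Finset.range e, (2 ^ (m + 2)) ^ b := by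
      exact_mod_cast HKfun_A2poly_even k m e
    have hpow : ((2 : ℝ) ^ (m + 2)) ^ e = (2 ^ e) ^ (m + 2) := pow_right_comm 2 (m + 2) e
    rw [hHK, geom_sum_eq hlt.ne', inv_pow, hpow, mul_comm _ e, pow_mul 2 e]
    generalize (2 : ℝ) ^ (m + 2) - 1 = r at hr
    field_simp
    ring
  have hgeom : Tendsto (fun e : ℕ ↦ ((2 : ℝ) ^ (m + 2))⁻¹ ^ e) atTop (𝓝 0) :=
    tendsto_pow_atTop_nhds_zero_of_lt_one (by positivity) (inv_lt_one_of_one_lt₀ hlt)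
  have hlim := (((hgeom.const_sub 1).const_mul 2).div_const ((2 : ℝ) ^ (m + 2) - 1)).const_add 1
  simp only [hvalue]
  convert hlim using 2
  field_simp
  ring

theorem tendsto_HKfun_A2poly_odd (m : ℕ) :
    Tendsto (fun e : ℕ ↦
      (HKfun k (2 * m + 1 + 1) 2 e (A2poly k (2 * m + 1)) : ℝ) / 2 ^ ((2 * m + 1) * e)) atTop
      (𝓝 ((2 ^ m + 1) / 2 ^ m)) := by
  rw [← tendsto_add_atTop_iff_nat 1]
  refine tendsto_const_nhds.congr fun e ↦ ?_
  have hHK : (HKfun k (2 * m + 1 + 1) 2 (e + 1) (A2poly k (2 * m + 1)) : ℝ) * 2 ^ m =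
      (2 ^ (e + 1)) ^ (2 * m + 1) * (2 ^ m + 1) := by
    exact_mod_cast HKfun_A2poly_odd k m e
  rw [div_eq_div_iff (by positivity) (by positivity), hHK, mul_comm (2 * m + 1), pow_mul]
  ring

end Limit
end A2HK

/-- The Hilbert–Kunz multiplicity of the `A₂` singularity in characteristic 2 exists and
equals `(2^{m+1} + 1)/(2^{m+1} − 1)` if `d = 2m` is even,
and `(2^m + 1)/2^m` if `d = 2m + 1` is odd. -/
theorem eHK_A2_char_two (k : Type*) [Field k] [CharP k 2] (d : ℕ) (hd : 1 ≤ d) :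
    ∃ L : ℝ,
      Filter.Tendsto
        (fun e : ℕ => (HKfun k (d + 1) 2 e (A2poly k d) : ℝ) / 2 ^ (d * e))
        Filter.atTop (nhds L) ∧
      (∀ m : ℕ, d = 2 * m → L = (2 ^ (m + 1) + 1) / (2 ^ (m + 1) - 1)) ∧
      (∀ m : ℕ, d = 2 * m + 1 → L = (2 ^ m + 1) / 2 ^ m) := by
  obtain ⟨n, rfl | rfl⟩ := Nat.even_or_odd' d
  · obtain ⟨m, rfl⟩ : ∃ m, n = m + 1 := ⟨n - 1, by omega⟩
    refine ⟨_, A2HK.tendsto_HKfun_A2poly_even k m, fun m' hm' ↦ ?_, fun m' hm' ↦ by omega⟩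
    obtain rfl : m' = m + 1 := by omega
    rfl
  · refine ⟨_, A2HK.tendsto_HKfun_A2poly_odd k n, fun m' hm' ↦ by omega, fun m' hm' ↦ ?_⟩
    obtain rfl : m' = n := by omega
    rfl
end

section
/- Let k be a field of characteristic 3, let d ≥ 1 and e ≥ 1. Then dim_k ( k[x_0,…,x_d] / (x_0^{3^e},…,x_d^{3^e}, x_0² + x_1² + ⋯ + x_{d−1}² + x_d³) ) = 3^{d·(e−1)+1} · dim_k ( k[y_0,…,y_{d−1}] / (y_0³,…,y_{d−1}³, y_0² + y_1² + ⋯ + y_{d−1}²) ). That is, the Hilbert–Kunz function of the A_2 singularity in characteristic 3 satisfies HK_e(S_{3,d}) = 3·3^{(e−1)d}·HK_1(R_{3,d−1}). -/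
open MvPolynomial

/-!
Write `R = k[x_1, …, x_d]`. Frobenius on `R` multiplies colengths by `p ^ d`: it is the substitution
`x_i ↦ x_i ^ p`, which makes `R` a free module over itself of rank `p ^ d`, followed by the base
change along Frobenius of `k`. Hence `(x_i ^ (q * p ^ t), f ^ p ^ t)` has `p ^ (t * d)` times the
colength of `(x_i ^ q, f)`.

On the other hand `R[y] / (f + y ^ m)` is free over `R` of rank `m`, and in it `y ^ (m * r)` equals
`f ^ r` up to sign. Therefore `(x_i ^ (m * r), y ^ (m * r), f + y ^ m)` has `m` times the colength
of `(x_i ^ (m * r), f ^ r)`. Taking `m = p ^ s` and `r = p ^ t` combines the two facts.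
-/

open scoped Polynomial TensorProduct

section Free

variable (k : Type*) {A B ι : Type*} [Field k] [CommRing A] [CommRing B]
  [Algebra k A] [Algebra k B] [Fintype ι]

theorem finrank_quotient_map_of_basis [Algebra A B] [IsScalarTower k A B]
    (b : Module.Basis ι A B) (I : Ideal A) :
    Module.finrank k (B ⧸ I.map (algebraMap A B)) =
      Fintype.card ι * Module.finrank k (A ⧸ I) := by
  classical
  let quotientEquiv : (B ⧸ I.map (algebraMap A B)) ≃ₗ[A] ι →₀ A ⧸ I :=
    (I.qoutMapEquivTensorQout B).restrictScalars A ≪≫ₗ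
      TensorProduct.equivFinsuppOfBasisLeft b
  rw [(quotientEquiv.restrictScalars k).finrank_eq, Module.finrank, rank_finsupp]
  simp [Module.finrank]

/-- The family `b` is a basis of `B` over `A`, where `A` acts through `φ`. Naming `φ` rather than
an `Algebra A B` instance allows `A = B`, where that instance would clash with `Algebra.id`. -/
def IsBasisAlong {R A B ι : Type*} [CommRing R] [CommRing A] [CommRing B] [Algebra R A]
    [Algebra R B] [Fintype ι] (φ : A →ₐ[R] B) (b : ι → B) : Prop :=
  Function.Bijective fun c : ι → A => ∑ i, φ (c i) * b i

theorem IsBasisAlong.finrank_quotient_map {φ : A →ₐ[k] B} {b : ι → B}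
    (hb : IsBasisAlong φ b) (I : Ideal A) :
    Module.finrank k (B ⧸ I.map φ) = Fintype.card ι * Module.finrank k (A ⧸ I) := by
  classical
  let _ : Algebra A B := (φ : A →+* B).toAlgebra
  have : IsScalarTower k A B := .of_algebraMap_eq fun x => (φ.commutes x).symm
  have basis : Module.Basis ι A B :=
    .ofEquivFun (LinearEquiv.ofBijective (Fintype.linearCombination A b) hb).symm
  exact finrank_quotient_map_of_basis k basis I

theorem finrank_quotient_span_monic_sup_map_C {F : A[X]} (hF : F.Monic) (I : Ideal A) :
    Module.finrank k (A[X] ⧸ Ideal.span {F} ⊔ I.map Polynomial.C) =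
      F.natDegree * Module.finrank k (A ⧸ I) := by
  have map_eq : (I.map Polynomial.C).map (Ideal.Quotient.mkₐ k (Ideal.span {F})) =
      I.map (algebraMap A (AdjoinRoot F)) := Ideal.map_map _ _
  rw [← (DoubleQuot.quotQuotEquivQuotSupₐ k _ _).toLinearEquiv.finrank_eq, map_eq]
  exact (finrank_quotient_map_of_basis k (AdjoinRoot.powerBasis' hF).basis I).trans (by simp)

end Free

section Expand

variable {σ : Type*} (m : ℕ) [NeZero m]

/-- Coordinatewise division with remainder of exponent vectors: a remainder `a` and a quotient `s`
correspond to the exponent `m • s + a`. The domain is a sigma type because such types index the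
bases produced by `Pi.basis`. -/
noncomputable def remainderQuotientEquivExponent [Finite σ] :
    (Σ _ : σ → Fin m, σ →₀ ℕ) ≃ (σ →₀ ℕ) :=
  (Equiv.sigmaEquivProd _ _).trans <| (Equiv.prodComm _ _).trans <|
    (Finsupp.equivFunOnFinite.prodCongr (Equiv.refl _)).trans <|
    (Equiv.arrowProdEquivProdArrow σ (fun _ => ℕ) fun _ => Fin m).symm.trans <|
    (Equiv.piCongrRight fun _ => (Nat.divModEquiv m).symm).trans Finsupp.equivFunOnFinite.symm

theorem remainderQuotientEquivExponent_apply [Finite σ] (a : σ → Fin m) (s : σ →₀ ℕ) :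
    remainderQuotientEquivExponent m ⟨a, s⟩ =
      m • s + Finsupp.equivFunOnFinite.symm fun i => (a i : ℕ) := by
  ext i
  simp [remainderQuotientEquivExponent, mul_comm]

theorem isBasisAlong_expand (R : Type*) [CommRing R] [Fintype σ] [DecidableEq σ] :
    IsBasisAlong (expand m : MvPolynomial σ R →ₐ[R] MvPolynomial σ R)
      fun a : σ → Fin m => monomial (Finsupp.equivFunOnFinite.symm fun i => (a i : ℕ)) (1 : R) := by
  let reindex : ((σ → Fin m) → MvPolynomial σ R) ≃ₗ[R] MvPolynomial σ R :=
    (Pi.basis fun _ => basisMonomials σ R).equiv (basisMonomials σ R)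
      (remainderQuotientEquivExponent m)
  let combination : ((σ → Fin m) → MvPolynomial σ R) →ₗ[R] MvPolynomial σ R :=
    ∑ a, LinearMap.mulRight R (monomial (Finsupp.equivFunOnFinite.symm fun i => (a i : ℕ)) 1) ∘ₗ
      (expand m).toLinearMap ∘ₗ LinearMap.proj a
  have reindex_eq : reindex.toLinearMap = combination := by
    refine (Pi.basis fun _ => basisMonomials σ R).ext fun ⟨a, s⟩ => ?_
    rw [LinearEquiv.coe_coe, Module.Basis.equiv_apply, remainderQuotientEquivExponent_apply]
    simp only [combination, LinearMap.sum_apply, LinearMap.comp_apply, LinearMap.proj_apply,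
      Pi.basis_apply, AlgHom.toLinearMap_apply, LinearMap.mulRight_apply]
    rw [Finset.sum_eq_single a (fun b _ hb => by simp [Pi.single_eq_of_ne hb]) (by simp)]
    simp [monomial_mul]
  have reindex_apply (c) : reindex c = combination c := LinearMap.congr_fun reindex_eq c
  refine (congrArg Function.Bijective (funext fun c => ?_)).mp reindex.bijective
  simp [reindex_apply, combination]

theorem finrank_quotient_map_expand (k : Type*) [Field k] [Fintype σ]
    (I : Ideal (MvPolynomial σ k)) :
    Module.finrank k (MvPolynomial σ k ⧸ I.map (expand m)) =
      m ^ Fintype.card σ * Module.finrank k (MvPolynomial σ k ⧸ I) := by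
  classical
  rw [(isBasisAlong_expand m k).finrank_quotient_map k I, Fintype.card_fun, Fintype.card_fin]

end Expand

section Frobenius

variable {σ : Type*}

theorem finrank_quotient_map_map {k K : Type*} [Field k] [Field K] (φ : k →+* K)
    (I : Ideal (MvPolynomial σ k)) :
    Module.finrank K (MvPolynomial σ K ⧸ I.map (map φ)) =
      Module.finrank k (MvPolynomial σ k ⧸ I) := by
  let _ : Algebra k K := φ.toAlgebra
  have map_eq : I.map (map φ) = (I.map Algebra.TensorProduct.includeRight).map
      (algebraTensorAlgEquiv (σ := σ) k K : K ⊗[k] MvPolynomial σ k →+* MvPolynomial σ K) := by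
    refine .trans (congrArg I.map (RingHom.ext fun f => ?_)) (Ideal.map_map _ _).symm
    simp [RingHom.algebraMap_toAlgebra]
  let baseChangeEquiv := (Algebra.TensorProduct.tensorQuotientEquiv (R := k) K _ K I).trans
    (Ideal.quotientEquivAlg _ _ (algebraTensorAlgEquiv k K) map_eq)
  rw [← baseChangeEquiv.toLinearEquiv.finrank_eq, Module.finrank_baseChange]

variable {k : Type*} [Field k] (p : ℕ) [ExpChar k p]

theorem finrank_quotient_map_iterateFrobenius [Fintype σ] (e : ℕ) (I : Ideal (MvPolynomial σ k)) :
    Module.finrank k (MvPolynomial σ k ⧸ I.map (iterateFrobenius (MvPolynomial σ k) p e)) =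
      (p ^ e) ^ Fintype.card σ * Module.finrank k (MvPolynomial σ k ⧸ I) := by
  have frobenius_eq : iterateFrobenius (MvPolynomial σ k) p e =
      (map (iterateFrobenius k p e)).comp (expand (p ^ e)).toRingHom :=
    RingHom.ext fun f => (map_iterateFrobenius_expand p f e).symm
  have : NeZero p := ⟨expChar_ne_zero k p⟩
  rw [frobenius_eq, ← Ideal.map_map, finrank_quotient_map_map]
  exact finrank_quotient_map_expand (p ^ e) k I

end Frobenius

section HilbertKunzIdeal

variable {k σ τ S : Type*} [CommRing k] [CommRing S]

/-- The ideal `(x_i^q, f)`, whose colength at `q = p ^ e` is the value at `e` of the Hilbert–Kunz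
function of `f`. -/
noncomputable def hkIdeal (q : ℕ) (f : MvPolynomial σ k) : Ideal (MvPolynomial σ k) :=
  Ideal.span (Set.range (fun i => X i ^ q) ∪ {f})

theorem map_hkIdeal (q : ℕ) (f : MvPolynomial σ k) {F : Type*}
    [FunLike F (MvPolynomial σ k) S] [RingHomClass F (MvPolynomial σ k) S] (φ : F) :
    (hkIdeal q f).map φ = Ideal.span (Set.range (fun i => φ (X i) ^ q) ∪ {φ f}) := by
  rw [hkIdeal, Ideal.map_span, Set.image_union, Set.image_singleton, ← Set.range_comp]
  simp only [Function.comp_def, map_pow]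

theorem map_renameEquiv_hkIdeal (e : σ ≃ τ) (q : ℕ) (f : MvPolynomial σ k) :
    (hkIdeal q f).map (renameEquiv k e) = hkIdeal q (rename e f) := by
  rw [map_hkIdeal, hkIdeal, ← e.surjective.range_comp]
  simp [Function.comp_def]

theorem map_iterateFrobenius_hkIdeal (p : ℕ) [ExpChar k p] (e q : ℕ) (f : MvPolynomial σ k) :
    (hkIdeal q f).map (iterateFrobenius (MvPolynomial σ k) p e) =
      hkIdeal (q * p ^ e) (f ^ p ^ e) := by
  rw [map_hkIdeal, hkIdeal]
  simp only [iterateFrobenius_def, ← pow_mul, mul_comm]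

theorem span_add_pair_pow (x y : S) (r : ℕ) :
    Ideal.span {x + y, x ^ r} = Ideal.span {x + y, y ^ r} := by
  obtain ⟨c, hc⟩ := sub_dvd_pow_sub_pow x (-y) r
  rw [sub_neg_eq_add] at hc
  rw [eq_add_of_sub_eq' hc, Ideal.span_pair_add_left_mul]
  rcases r.even_or_odd with even | odd
  · rw [even.neg_pow]
  · rw [odd.neg_pow, Ideal.span_pair_neg]

theorem optionEquivLeft_rename_some (g : MvPolynomial σ k) :
    optionEquivLeft k σ (rename some g) = Polynomial.C g := by
  have algHom_eq : (optionEquivLeft k σ).toAlgHom.comp (rename some) =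
      (Polynomial.CAlgHom (R := MvPolynomial σ k)).restrictScalars k := by
    ext i
    simp
  exact DFunLike.congr_fun algHom_eq g

theorem map_optionEquivLeft_hkIdeal (m r : ℕ) (g : MvPolynomial σ k) :
    (hkIdeal (m * r) (rename some g + X none ^ m)).map (optionEquivLeft k σ) =
      Ideal.span {Polynomial.X ^ m + Polynomial.C g} ⊔
        (hkIdeal (m * r) (g ^ r)).map Polynomial.C := by
  let T : (MvPolynomial σ k)[X] := Polynomial.X
  let J : Ideal (MvPolynomial σ k)[X] :=
    Ideal.span (Set.range fun i => Polynomial.C (X i) ^ (m * r))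
  calc
    _ = Ideal.span {T ^ m + Polynomial.C g, (T ^ m) ^ r} ⊔ J := by
      rw [map_hkIdeal, Option.range_eq, map_add, map_pow, optionEquivLeft_rename_some,
        optionEquivLeft_X_none]
      simp only [optionEquivLeft_X_some, Function.comp_def, ← pow_mul, J, T, ← Ideal.span_union]
      congr 1
      grind
    _ = Ideal.span {T ^ m + Polynomial.C g, Polynomial.C g ^ r} ⊔ J := by
      rw [span_add_pair_pow]
    _ = _ := by
      rw [map_hkIdeal, Ideal.span_insert, Ideal.span_union, sup_assoc, sup_comm J, map_pow]

end HilbertKunzIdeal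

section Colength

variable {k σ τ : Type*} [Field k]

theorem finrank_quotient_hkIdeal_rename (e : σ ≃ τ) (q : ℕ) (f : MvPolynomial σ k) :
    Module.finrank k (MvPolynomial τ k ⧸ hkIdeal q (rename e f)) =
      Module.finrank k (MvPolynomial σ k ⧸ hkIdeal q f) :=
  (Ideal.quotientEquivAlg _ _ (renameEquiv k e)
    (map_renameEquiv_hkIdeal e q f).symm).toLinearEquiv.finrank_eq.symm

theorem finrank_quotient_hkIdeal_rename_some_add_X_pow {m : ℕ} (hm : m ≠ 0) (r : ℕ)
    (g : MvPolynomial σ k) :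
    Module.finrank k
        (MvPolynomial (Option σ) k ⧸ hkIdeal (m * r) (rename some g + X none ^ m)) =
      m * Module.finrank k (MvPolynomial σ k ⧸ hkIdeal (m * r) (g ^ r)) := by
  rw [(Ideal.quotientEquivAlg _ _ (optionEquivLeft k σ)
      (map_optionEquivLeft_hkIdeal m r g).symm).toLinearEquiv.finrank_eq,
    finrank_quotient_span_monic_sup_map_C k (Polynomial.monic_X_pow_add_C g hm),
    Polynomial.natDegree_X_pow_add_C]

theorem finrank_quotient_hkIdeal_pow [Fintype σ] (p : ℕ) [ExpChar k p] (e q : ℕ)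
    (f : MvPolynomial σ k) :
    Module.finrank k (MvPolynomial σ k ⧸ hkIdeal (q * p ^ e) (f ^ p ^ e)) =
      (p ^ e) ^ Fintype.card σ * Module.finrank k (MvPolynomial σ k ⧸ hkIdeal q f) := by
  rw [← map_iterateFrobenius_hkIdeal, finrank_quotient_map_iterateFrobenius]

end Colength

theorem HK_function_A2_char_three_general (k : Type*) [Field k] (p : ℕ) [ExpChar k p] (d : ℕ)
    {s e : ℕ} (hse : s ≤ e) (f : MvPolynomial (Fin d) k) :
    HKfun k (d + 1) p e (rename Fin.castSucc f + X (Fin.last d) ^ p ^ s) =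
      p ^ (d * (e - s) + s) * HKfun k d p s f := by
  obtain ⟨t, rfl⟩ := Nat.exists_eq_add_of_le hse
  have option_form : rename finSuccEquivLast (rename Fin.castSucc f + X (Fin.last d) ^ p ^ s) =
      rename some f + X none ^ p ^ s := by
    simp [rename_rename, Function.comp_def]
  calc HKfun k (d + 1) p (s + t) (rename Fin.castSucc f + X (Fin.last d) ^ p ^ s)
    _ = Module.finrank k (MvPolynomial (Option (Fin d)) k ⧸
          hkIdeal (p ^ s * p ^ t) (rename some f + X none ^ p ^ s)) := by
      rw [← option_form, finrank_quotient_hkIdeal_rename, ← pow_add]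
      rfl
    _ = p ^ s * Module.finrank k
          (MvPolynomial (Fin d) k ⧸ hkIdeal (p ^ s * p ^ t) (f ^ p ^ t)) :=
      finrank_quotient_hkIdeal_rename_some_add_X_pow
        (pow_ne_zero s (expChar_ne_zero k p)) (p ^ t) f
    _ = p ^ s * ((p ^ t) ^ d * HKfun k d p s f) := by
      rw [finrank_quotient_hkIdeal_pow, Fintype.card_fin]
      rfl
    _ = p ^ (d * (s + t - s) + s) * HKfun k d p s f := by
      rw [Nat.add_sub_cancel_left]
      ring

/-- The Hilbert–Kunz function of the `A₂` singularity in characteristic 3 satisfies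
`HK_e(S_{3,d}) = 3^{d(e−1)+1} · HK_1(R_{3,d−1})`. -/
theorem HK_function_A2_char_three (k : Type*) [Field k] [CharP k 3]
    (d : ℕ) (hd : 1 ≤ d) (e : ℕ) (he : 1 ≤ e) :
    HKfun k (d + 1) 3 e
        ((∑ i : Fin d, (X (i.castSucc) : MvPolynomial (Fin (d + 1)) k) ^ 2) +
          X (Fin.last d) ^ 3) =
      3 ^ (d * (e - 1) + 1) * HKfun k d 3 1 (∑ i : Fin d, X i ^ 2) := by
  have general := HK_function_A2_char_three_general k 3 d he (∑ i, X i ^ 2)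
  simpa only [map_sum, map_pow, rename_X, pow_one] using general
end
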